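/- arXiv:1707.02960 — 5 statements merged into one kernel-verified Lean document; each statement's English description precedes it below -/
import Mathlib

section
/- Let Γ be a finitely generated group acting freely by Lipschitz homeomorphisms on a compact metric space (Y,d), and assume that both Γ (with its word metric) and the open cone OY = (tY, t·d)_{t>0} have finite asymptotic dimension. If the warped cone O_Γ Y has finite asymptotic dimension, then in fact asdim O_Γ Y ≤ asdim Γ + asdim OY. -/
/-!
Fix a scale `r`. Finite asymptotic dimension of the warped cone covers each level by `m + 1` sets,
for some uncontrolled `m`, whose components at an arbitrarily large scale are bounded by some `S₀`.

A piece of diameter `S₀` of a high level `tY` looks like a piece of `Γ × tY`. All its points are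
close to translates `γ • a` of one point `a` by boundedly many `γ`, and by freeness and compactness
these translates are far apart in `tY` once `t` is large (`eventually_separated`). So a map to `Γ`
is well defined on the piece, Lipschitz, and its restrictions to preimages of balls are, up to a
bounded displacement, maps into `tY` with bounded expansion (`eventually_exists_label`). The
Hurewicz inequality (`exists_hasDim_hurewicz`) then covers the piece by `k + l + 1` sets with
bounded `r`-components. The bound depends on `r` and on the control functions of `Γ` and `OY`, but
not on `S₀`; only the level from which it holds does (`exists_hasDim_bounded`).

This independence lets the scales be chosen in the right order: the finite union theorem
(`exists_hasDim_iUnion`) fixes the finitely many scales needed to merge `m + 1` sets without extra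
colours, then `S₀` is obtained for a scale exceeding all of them, and finally `t` is taken large.
The remaining low levels have bounded diameter.

The Hurewicz inequality is proved by adding to the covered set the preimages of the colour classes
of `Γ` one at a time, each costing one new colour (`HasDim.add_color`). The merging steps rest on
`Good.union`: a set with small components and a set whose components are much further apart have a
union with bounded components.

The infimum of costs of chains of jumps and generator moves is bounded above by the warped metric
(`IsWarpedMetric.exists_chain`); conversely a group element of length `n` moves points by at most
`n`. These are the only facts used about warped metrics beyond their definition.
-/

/-!
STATEMENT 14: For a free Lipschitz action Γ ↷ Y on a compact metric space with both
asdim Γ and asdim OY finite: if the warped cone O_Γ Y has finite asymptotic dimension,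
then asdim O_Γ Y ≤ asdim Γ + asdim OY.
-/

open Metric Set

noncomputable def wordLength {G : Type*} [Group G] (S : Set G) (g : G) : ℕ :=
  sInf {n : ℕ | ∃ w : List G, (∀ x ∈ w, x ∈ S) ∧ w.length = n ∧ w.prod = g}

noncomputable def wordDist {G : Type*} [Group G] (S : Set G) (g h : G) : ℝ :=
  (wordLength S (g⁻¹ * h) : ℝ)

def IsFinSymmGen {G : Type*} [Group G] (S : Set G) : Prop :=
  S.Finite ∧ (∀ s ∈ S, s⁻¹ ∈ S) ∧ Subgroup.closure S = ⊤

def IsMetricOn {Y : Type*} (ρ : Y → Y → ℝ) : Prop :=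
  (∀ y, ρ y y = 0) ∧ (∀ y y' : Y, y ≠ y' → 0 < ρ y y') ∧
  (∀ y y' : Y, ρ y y' = ρ y' y) ∧ ∀ x y z : Y, ρ x z ≤ ρ x y + ρ y z

def IsWarpedMetric {G Y : Type*} (act : G → Y → Y) (S : Set G)
    (d : Y → Y → ℝ) (t : ℝ) (ρ : Y → Y → ℝ) : Prop :=
  IsMetricOn ρ ∧ (∀ y y', ρ y y' ≤ t * d y y') ∧
  (∀ s ∈ S, ∀ y, ρ y (act s y) ≤ 1) ∧
  ∀ ρ' : Y → Y → ℝ, IsMetricOn ρ' → (∀ y y', ρ' y y' ≤ t * d y y') →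
    (∀ s ∈ S, ∀ y, ρ' y (act s y) ≤ 1) → ∀ y y', ρ' y y' ≤ ρ y y'

def RConn {Z : Type*} (ρ : Z → Z → ℝ) (R : ℝ) (U : Set Z) : Z → Z → Prop :=
  Relation.ReflTransGen (fun a b => a ∈ U ∧ b ∈ U ∧ ρ a b < R)

def FamAsdimLE {ι : Type*} (Z : ι → Type*) (ρ : ∀ i, Z i → Z i → ℝ) (k : ℕ) : Prop :=
  ∀ R : ℕ, 0 < R → ∃ D : ℝ, ∀ i : ι, ∃ U : Fin (k + 1) → Set (Z i),
    (∀ z : Z i, ∃ j, z ∈ U j) ∧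
    ∀ j, ∀ a ∈ U j, ∀ b ∈ U j, RConn (ρ i) (R : ℝ) (U j) a b → ρ i a b ≤ D

/-! ### Coloured covers and chains -/

/-- A pseudometric given as a bare function: zero on the diagonal, symmetric, triangle inequality. -/
def IsPseudo {Z : Type*} (ρ : Z → Z → ℝ) : Prop :=
  (∀ x, ρ x x = 0) ∧ (∀ x y, ρ x y = ρ y x) ∧ ∀ x y z, ρ x z ≤ ρ x y + ρ y z

lemma IsPseudo.nonneg {Z : Type*} {ρ : Z → Z → ℝ} (h : IsPseudo ρ) (x y : Z) : 0 ≤ ρ x y := by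
  have h1 := h.2.2 x y x
  rw [h.1 x, h.2.1 y x] at h1
  linarith

lemma IsMetricOn.isPseudo {Z : Type*} {ρ : Z → Z → ℝ} (h : IsMetricOn ρ) : IsPseudo ρ :=
  ⟨h.1, h.2.2.1, h.2.2.2⟩

/-- The `r`-components of `A` have diameter at most `D`. -/
def Good {Z : Type*} (ρ : Z → Z → ℝ) (r D : ℝ) (A : Set Z) : Prop :=
  ∀ a ∈ A, ∀ b, RConn ρ r A a b → ρ a b ≤ D

/-- `A` is covered by `n` sets whose `r`-components have diameter at most `D`. The cover is
recorded as a colouring `c` of the points, with values below `n` on `A`. -/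
def HasDim {Z : Type*} (ρ : Z → Z → ℝ) (A : Set Z) (n : ℕ) (r D : ℝ) : Prop :=
  ∃ c : Z → ℕ, (∀ x ∈ A, c x < n) ∧ ∀ i, Good ρ r D {x | x ∈ A ∧ c x = i}

section Chains

variable {Z : Type*} {ρ : Z → Z → ℝ}

lemma RConn.mem {r : ℝ} {A : Set Z} {a b : Z} (h : RConn ρ r A a b) (ha : a ∈ A) : b ∈ A := by
  unfold RConn at h
  induction h with
  | refl => exact ha
  | tail _ h _ => exact h.2.1

lemma RConn.tail' {r : ℝ} {A : Set Z} {a b c : Z} (h : RConn ρ r A a b) (hb : b ∈ A) (hc : c ∈ A)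
    (hbc : ρ b c < r) : RConn ρ r A a c :=
  Relation.ReflTransGen.tail h ⟨hb, hc, hbc⟩

lemma RConn.symm (hρ : IsPseudo ρ) {r : ℝ} {A : Set Z} {a b : Z} (h : RConn ρ r A a b) :
    RConn ρ r A b a := by
  unfold RConn at *
  induction h with
  | refl => exact Relation.ReflTransGen.refl
  | tail _ h ih => exact Relation.ReflTransGen.head ⟨h.2.1, h.1, by rw [hρ.2.1]; exact h.2.2⟩ ih

lemma RConn.mono {r r' : ℝ} {A A' : Set Z} {a b : Z} (h : RConn ρ r A a b) (hr : r ≤ r')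
    (hA : A ⊆ A') : RConn ρ r' A' a b := by
  unfold RConn at *
  induction h with
  | refl => exact Relation.ReflTransGen.refl
  | tail _ h ih => exact ih.tail ⟨hA h.1, hA h.2.1, h.2.2.trans_le hr⟩

lemma Good.mono {r r' D D' : ℝ} {A A' : Set Z} (h : Good ρ r D A) (hr : r' ≤ r) (hD : D ≤ D')
    (hA : A' ⊆ A) : Good ρ r' D' A' := by
  intro a ha b hab
  exact (h a (hA ha) b (hab.mono hr hA)).trans hD

lemma HasDim.mono {r r' D D' : ℝ} {n : ℕ} {A A' : Set Z} (h : HasDim ρ A n r D) (hr : r' ≤ r)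
    (hD : D ≤ D') (hA : A' ⊆ A) : HasDim ρ A' n r' D' := by
  obtain ⟨c, h1, h2⟩ := h
  exact ⟨c, fun x hx => h1 x (hA hx), fun i => (h2 i).mono hr hD fun x hx => ⟨hA hx.1, hx.2⟩⟩

/-- If the components of `B` are far apart compared with the size of the components of `A`,
then a chain in `A ∪ B` visits a single component of `B`, with excursions into `A` of bounded
length. -/
lemma Good.union (hρ : IsPseudo ρ) {r D R D' : ℝ} {A B : Set Z} (hr : 0 ≤ r) (hD : 0 ≤ D)
    (hD' : 0 ≤ D') (hA : Good ρ r D A) (hB : Good ρ R D' B) (hR : D + 2 * r ≤ R) :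
    Good ρ r (D' + 2 * D + 2 * r) (A ∪ B) := by
  intro a ha b hab
  -- Either the chain never meets `B`, or `b₁` and `b₂` are its first and last points in `B`.
  have key : (a ∈ A ∧ RConn ρ r A a b) ∨ ∃ b₁ b₂, b₁ ∈ B ∧ b₂ ∈ B ∧ RConn ρ R B b₁ b₂ ∧
      ρ a b₁ ≤ D + r ∧ (b = b₂ ∨ ∃ a₁, a₁ ∈ A ∧ b ∈ A ∧ ρ b₂ a₁ < r ∧ RConn ρ r A a₁ b) := by
    unfold RConn at hab
    induction hab with
    | refl =>
      rcases ha with ha | ha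
      · exact Or.inl ⟨ha, Relation.ReflTransGen.refl⟩
      · refine Or.inr ⟨a, a, ha, ha, Relation.ReflTransGen.refl, ?_, Or.inl rfl⟩
        rw [hρ.1]; positivity
    | @tail b b' _ hbb ih =>
      obtain ⟨-, hb', hlt⟩ := hbb
      rcases ih with ⟨haA, hc⟩ | ⟨b₁, b₂, h1, h2, h12, hab1, hlast⟩
      · rcases hb' with hb' | hb'
        · exact Or.inl ⟨haA, hc.tail' (hc.mem haA) hb' hlt⟩
        · refine Or.inr ⟨b', b', hb', hb', Relation.ReflTransGen.refl, ?_, Or.inl rfl⟩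
          have := hA a haA b hc
          have := hρ.2.2 a b b'
          linarith
      · refine Or.inr ?_
        rcases hb' with hb' | hb'
        · refine ⟨b₁, b₂, h1, h2, h12, hab1, Or.inr ?_⟩
          rcases hlast with rfl | ⟨a₁, ha1, hbA, hlt1, hc⟩
          · exact ⟨b', hb', hb', hlt, Relation.ReflTransGen.refl⟩
          · exact ⟨a₁, ha1, hb', hlt1, hc.tail' hbA hb' hlt⟩
        · refine ⟨b₁, b', h1, hb', h12.tail' h2 hb' ?_, hab1, Or.inl rfl⟩
          rcases hlast with rfl | ⟨a₁, ha1, hbA, hlt1, hc⟩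
          · linarith
          · have := hA a₁ ha1 b hc
            have := hρ.2.2 b₂ a₁ b'
            have := hρ.2.2 a₁ b b'
            linarith
  rcases key with ⟨haA, hc⟩ | ⟨b₁, b₂, h1, h2, h12, hab1, hlast⟩
  · have := hA a haA b hc
    linarith
  · have e1 := hB b₁ h1 b₂ h12
    have e2 := hρ.2.2 a b₁ b
    have e3 := hρ.2.2 b₁ b₂ b
    rcases hlast with rfl | ⟨a₁, ha1, hbA, hlt1, hc⟩
    · rw [hρ.1 b] at e3
      linarith
    · have := hA a₁ ha1 b hc
      have := hρ.2.2 b₂ a₁ b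
      linarith

/-- Two sets covered by `n` sets each, at well separated scales: merge the covers colour by
colour. -/
lemma HasDim.union (hρ : IsPseudo ρ) {r D R D' : ℝ} {n : ℕ} {A B : Set Z} (hr : 0 ≤ r) (hD : 0 ≤ D)
    (hD' : 0 ≤ D') (hA : HasDim ρ A n r D) (hB : HasDim ρ B n R D') (hR : D + 2 * r ≤ R) :
    HasDim ρ (A ∪ B) n r (D' + 2 * D + 2 * r) := by
  classical
  obtain ⟨a, ha1, ha2⟩ := hA
  obtain ⟨b, hb1, hb2⟩ := hB
  refine ⟨fun x => if x ∈ A then a x else b x, ?_, fun i => ?_⟩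
  · intro x hx
    by_cases h : x ∈ A
    · simpa [h] using ha1 x h
    · simpa [h] using hb1 x (hx.resolve_left h)
  · refine (Good.union hρ hr hD hD' (ha2 i) (hb2 i) hR).mono le_rfl le_rfl ?_
    rintro x ⟨hx, hxi⟩
    by_cases h : x ∈ A
    · left; exact ⟨h, by simpa [h] using hxi⟩
    · right; exact ⟨hx.resolve_left h, by simpa [h] using hxi⟩

/-- The colour-adding step behind the Hurewicz inequality. `A` has `n` colours `a` at scale `r`;
`p` is a phase which is at least `l + 1` on `B`, changes by at most one along an `r`-step, and is
positive only on a neighbourhood of `B` that splits into pieces labelled by `w`, each with `l + 1`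
colours `c` at a scale much larger than the components in `A`.

In phase `p` colour `n - p` is left unused, the colours `κ < n - p` are inherited from `a`, and
the colours `κ > n - p` consist of points with `c = n - κ` or `a = κ - 1`. As `p` changes by at
most one, a chain of colour `κ` stays on one side of `κ + p = n`. -/
lemma HasDim.add_color (hρ : IsPseudo ρ) {ι : Type*} {r D R D' : ℝ} {n l : ℕ} {A B : Set Z}
    (hr : 0 ≤ r) (hD : 0 ≤ D) (hD' : 0 ≤ D') (hln : l ≤ n) (hA : HasDim ρ A n r D)
    (p : Z → ℕ) (w : Z → ι) (c : Z → ℕ)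
    (hp : ∀ x ∈ A ∪ B, ∀ y ∈ A ∪ B, ρ x y < r → p x ≤ p y + 1)
    (hpB : ∀ x ∈ B, l + 1 ≤ p x)
    (hw : ∀ x ∈ A ∪ B, ∀ y ∈ A ∪ B, ρ x y < r → 1 ≤ p x → 1 ≤ p y → w x = w y)
    (hc : ∀ x ∈ A ∪ B, 1 ≤ p x → c x ≤ l)
    (hgood : ∀ v i, Good ρ R D' {x | (x ∈ A ∪ B ∧ 1 ≤ p x ∧ w x = v) ∧ c x = i})
    (hR : D + 2 * r ≤ R) :
    HasDim ρ (A ∪ B) (n + 1) r (D' + 2 * D + 2 * r) := by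
  obtain ⟨a, ha1, ha2⟩ := hA
  have hAmem : ∀ x ∈ A ∪ B, ¬ c x < p x → x ∈ A := by
    intro x hx hcp
    rcases hx with h | h
    · exact h
    · have h1 := hpB x h
      have := hc x (Or.inr h) (by omega)
      omega
  set col : Z → ℕ := fun x =>
    if c x < p x then n - c x else if n ≤ a x + p x then a x + 1 else a x with hcol
  have hcolle : ∀ x ∈ A ∪ B, col x < n + 1 := by
    intro x hx
    by_cases h1 : c x < p x
    · simp only [hcol, h1, if_true]; omega
    · have := ha1 x (hAmem x hx h1)
      simp only [hcol, h1, if_false]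
      split_ifs <;> omega
  have hlow : ∀ x ∈ A ∪ B, col x + p x < n → x ∈ A ∧ a x = col x := by
    intro x hx h
    by_cases h1 : c x < p x
    · have := hc x hx (by omega)
      simp only [hcol, h1, if_true] at h; omega
    · refine ⟨hAmem x hx h1, ?_⟩
      simp only [hcol, h1, if_false] at h ⊢
      split_ifs at h ⊢ <;> omega
  have hhigh : ∀ x ∈ A ∪ B, n < col x + p x →
      1 ≤ p x ∧ ((x ∈ A ∧ a x + 1 = col x) ∨ c x = n - col x) := by
    intro x hx h
    have h0 := hcolle x hx
    refine ⟨by omega, ?_⟩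
    by_cases h1 : c x < p x
    · right
      have := hc x hx (by omega)
      simp only [hcol, h1, if_true]; omega
    · left
      refine ⟨hAmem x hx h1, ?_⟩
      simp only [hcol, h1, if_false] at h ⊢
      split_ifs at h ⊢ <;> omega
  have hne : ∀ x ∈ A ∪ B, col x + p x ≠ n := by
    intro x hx h
    by_cases h1 : c x < p x
    · have := hc x hx (by omega)
      simp only [hcol, h1, if_true] at h; omega
    · simp only [hcol, h1, if_false] at h
      split_ifs at h <;> omega
  clear_value col
  refine ⟨col, hcolle, fun κ => ?_⟩
  rintro x ⟨hx, hxκ⟩ y hxy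
  rcases lt_or_gt_of_ne (hne x hx) with hlt | hgt
  · have key : RConn ρ r {z | z ∈ A ∧ a z = κ} x y ∧ y ∈ A ∪ B ∧ col y = κ ∧ κ + p y < n := by
      unfold RConn at hxy
      induction hxy with
      | refl => exact ⟨Relation.ReflTransGen.refl, hx, hxκ, by omega⟩
      | @tail y z _ hyz ih =>
        obtain ⟨ih1, ihy, ihc, ihp⟩ := ih
        obtain ⟨-, ⟨hz, hzκ⟩, hlt'⟩ := hyz
        have h1 := hp z hz y ihy (by rwa [hρ.2.1])
        have h2 := hne z hz
        have h3 : κ + p z < n := by omega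
        have hy' := hlow y ihy (by omega)
        have hz' := hlow z hz (by omega)
        exact ⟨ih1.tail' ⟨hy'.1, by omega⟩ ⟨hz'.1, by omega⟩ hlt', hz, hzκ, h3⟩
    have hx' := hlow x hx hlt
    have := ha2 κ x ⟨hx'.1, by omega⟩ y key.1
    linarith
  · set T : Set Z := {z | z ∈ A ∧ a z + 1 = κ} ∪
      {z | (z ∈ A ∪ B ∧ 1 ≤ p z ∧ w z = w x) ∧ c z = n - κ} with hT
    have hTmem : ∀ z ∈ A ∪ B, col z = κ → n < κ + p z → w z = w x → z ∈ T := by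
      intro z hz hzκ hzp hzw
      obtain ⟨h1, h2 | h2⟩ := hhigh z hz (by omega)
      · left; exact ⟨h2.1, by omega⟩
      · right; exact ⟨⟨hz, h1, hzw⟩, by omega⟩
    have key : RConn ρ r T x y ∧ y ∈ A ∪ B ∧ col y = κ ∧ n < κ + p y ∧ w y = w x := by
      unfold RConn at hxy
      induction hxy with
      | refl => exact ⟨Relation.ReflTransGen.refl, hx, hxκ, by omega, rfl⟩
      | @tail y z _ hyz ih =>
        obtain ⟨ih1, ihy, ihc, ihp, ihw⟩ := ih
        obtain ⟨-, ⟨hz, hzκ⟩, hlt'⟩ := hyz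
        have h1 := hp y ihy z hz hlt'
        have h2 := hne z hz
        have h3 : n < κ + p z := by omega
        have h4 := (hhigh y ihy (by omega)).1
        have h5 := (hhigh z hz (by omega)).1
        have h6 : w z = w x := (hw y ihy z hz hlt' h4 h5).symm.trans ihw
        exact ⟨ih1.tail' (hTmem y ihy ihc ihp ihw) (hTmem z hz hzκ h3 h6) hlt', hz, hzκ, h3, h6⟩
    have hgA : Good ρ r D {z | z ∈ A ∧ a z + 1 = κ} :=
      (ha2 (κ - 1)).mono le_rfl le_rfl fun z hz => ⟨hz.1, by have := hz.2; omega⟩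
    exact Good.union hρ hr hD hD' hgA (hgood (w x) (n - κ)) hR x
      (hTmem x hx hxκ (by omega) rfl) y key.1

/-- Finite union theorem, with all scales chosen in advance from the control function `E`. -/
lemma exists_hasDim_iUnion (n r : ℕ) (E : ℕ → ℝ) (hE : ∀ i, 0 ≤ E i) (m : ℕ) :
    ∃ (N : ℕ) (D : ℝ), 0 ≤ D ∧ ∀ (Z : Type) (ρ : Z → Z → ℝ) (U : ℕ → Set Z), IsPseudo ρ →
      (∀ i < m, ∀ r' : ℕ, r' ≤ N → HasDim ρ (U i) n r' (E r')) →
      HasDim ρ {x | ∃ i < m, x ∈ U i} n r D := by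
  induction m with
  | zero =>
    refine ⟨0, 0, le_rfl, fun Z ρ U _ _ => ⟨fun _ => 0, ?_, ?_⟩⟩
    · rintro x ⟨i, hi, -⟩; omega
    · rintro i x ⟨⟨i, hi, -⟩, -⟩; omega
  | succ m ih =>
    obtain ⟨N, D, hD, h⟩ := ih
    set R : ℕ := ⌈D + 2 * r⌉₊
    refine ⟨max N R, E R + 2 * D + 2 * r, by have := hE R; positivity, fun Z ρ U hρ hU => ?_⟩
    have h1 := h Z ρ U hρ fun i hi r' hr' => hU i (by omega) r' (hr'.trans (le_max_left _ _))
    have h2 := hU m (by omega) R (le_max_right _ _)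
    refine (h1.union hρ (by positivity) hD (hE R) h2 (Nat.le_ceil _)).mono le_rfl le_rfl ?_
    rintro x ⟨i, hi, hx⟩
    rcases Nat.lt_succ_iff_lt_or_eq.1 hi with hi | rfl
    · exact Or.inl ⟨i, hi, hx⟩
    · exact Or.inr hx

end Chains

/-! ### The Hurewicz inequality -/

section Hurewicz

variable {Z G : Type*} [Nonempty G] {ρ : Z → Z → ℝ} {β : G → G → ℝ}

/-- One step of the Hurewicz inequality: adding the preimage `B` of a set `U` in the base whose
`(2l + 2)r`-components are bounded costs one more colour. -/
lemma HasDim.add_preimage (hρ : IsPseudo ρ) (hβ : IsPseudo β) {l r n R ρ₀ : ℕ} {D D' SG : ℝ}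
    (hr : 0 < r) (hD : 0 ≤ D) (hD' : 0 ≤ D') (hln : l ≤ n) {A B : Set Z} {U : Set G} (f : Z → G)
    (hf : ∀ x ∈ A ∪ B, ∀ y ∈ A ∪ B, ρ x y < r → β (f x) (f y) ≤ r)
    (hU : Good β ((2 * l + 2 : ℕ) * r) SG U) (hBU : ∀ x ∈ B, f x ∈ U) (hρ₀ : SG + l * r ≤ ρ₀)
    (hfib : ∀ η, HasDim ρ {x | x ∈ A ∪ B ∧ β η (f x) ≤ ρ₀} (l + 1) R D')
    (hA : HasDim ρ A n r D) (hR : D + 2 * r ≤ R) :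
    HasDim ρ (A ∪ B) (n + 1) r (D' + 2 * D + 2 * r) := by
  classical
  have hr' : (0 : ℝ) < r := by exact_mod_cast hr
  -- The phase `p x` is `l + 1` less the distance from `f x` to `U` in units of `r`, rounded up,
  -- truncated at zero.
  let P : Z → ℕ → Prop := fun x q => ∃ u ∈ U, β (f x) u ≤ ((l + 1 - q : ℕ) : ℝ) * r
  let p : Z → ℕ := fun x => Nat.findGreatest (P x) (l + 1)
  have hpP : ∀ x, 1 ≤ p x → P x (p x) := fun x h =>
    Nat.findGreatest_of_ne_zero rfl (by omega)
  have hple : ∀ x, p x ≤ l + 1 := fun x => Nat.findGreatest_le _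
  have hnear : ∀ x, ∃ u, 1 ≤ p x → u ∈ U ∧ β (f x) u ≤ l * r := by
    intro x
    by_cases h : 1 ≤ p x
    · obtain ⟨u, hu, hle⟩ := hpP x h
      refine ⟨u, fun _ => ⟨hu, hle.trans ?_⟩⟩
      gcongr
      exact_mod_cast (by omega : l + 1 - p x ≤ l)
    · exact ⟨f x, fun h' => absurd h' h⟩
  choose u hu using hnear
  let w : Z → Set G := fun x => {g | RConn β ((2 * l + 2 : ℕ) * r) U (u x) g}
  -- All points with the same label lie over one ball of radius `ρ₀` in the base.
  have hlabel : ∀ v : Set G, ∃ η, ∀ x, 1 ≤ p x → w x = v → β η (f x) ≤ ρ₀ := by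
    intro v
    by_cases h : ∃ x₀, 1 ≤ p x₀ ∧ w x₀ = v
    · obtain ⟨x₀, h0, rfl⟩ := h
      refine ⟨u x₀, fun x hx hxw => ?_⟩
      have hmem : u x ∈ w x₀ := by
        rw [← hxw]; exact Relation.ReflTransGen.refl
      have h1 := hU (u x₀) (hu x₀ h0).1 (u x) hmem
      have h2 := (hu x hx).2
      have h3 := hβ.2.2 (u x₀) (u x) (f x)
      rw [hβ.2.1 (u x) (f x)] at h3
      linarith
    · exact ⟨Classical.arbitrary G, fun x hx hxw => absurd ⟨x, hx, hxw⟩ h⟩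
  choose η hη using hlabel
  choose c hc1 hc2 using fun v => hfib (η v)
  refine HasDim.add_color hρ (l := l) hr'.le hD hD' hln hA p w (fun x => c (w x) x) ?_ ?_ ?_ ?_ ?_ hR
  · intro x hx y hy hxy
    by_contra hcon
    push Not at hcon
    obtain ⟨v, hv, hle⟩ := hpP x (by omega)
    have : p x - 1 ≤ p y := by
      refine Nat.le_findGreatest (by have := hple x; omega) ⟨v, hv, ?_⟩
      have h1 := hβ.2.2 (f y) (f x) v
      rw [hβ.2.1 (f y) (f x)] at h1
      have h2 := hf x hx y hy hxy
      have h3 : l + 1 - (p x - 1) = (l + 1 - p x) + 1 := by have := hple x; omega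
      rw [h3]; push_cast
      linarith
    omega
  · intro x hx
    refine Nat.le_findGreatest le_rfl ⟨f x, hBU x hx, ?_⟩
    rw [hβ.1]; positivity
  · intro x hx y hy hxy hpx hpy
    obtain ⟨hux, hux'⟩ := hu x hpx
    obtain ⟨huy, huy'⟩ := hu y hpy
    have hlt : β (u x) (u y) < (2 * l + 2 : ℕ) * r := by
      have h1 := hβ.2.2 (u x) (f x) (u y)
      have h2 := hβ.2.2 (f x) (f y) (u y)
      rw [hβ.2.1 (u x) (f x)] at h1
      have h3 := hf x hx y hy hxy
      push_cast
      nlinarith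
    have hxy' : RConn β ((2 * l + 2 : ℕ) * r) U (u x) (u y) :=
      Relation.ReflTransGen.single ⟨hux, huy, hlt⟩
    ext g
    exact ⟨fun h => Relation.ReflTransGen.trans (hxy'.symm hβ) h,
      fun h => Relation.ReflTransGen.trans hxy' h⟩
  · intro x hx hpx
    have := hc1 (w x) x ⟨hx, hη _ x hpx rfl⟩
    omega
  · intro v i
    refine (hc2 v i).mono le_rfl le_rfl ?_
    rintro x ⟨⟨hx, hpx, rfl⟩, hcx⟩
    exact ⟨⟨hx, hη _ x hpx rfl⟩, hcx⟩

/-- Hurewicz inequality for asymptotic dimension, at a single target scale `r`. The base has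
dimension at most `k`, and `E R ρ₀` bounds the components at scale `R` in preimages of balls of
radius `ρ₀`; only finitely many scales `R ≤ N` and one radius `ρ₀` are needed, and these depend
only on the control functions. -/
lemma exists_hasDim_hurewicz (hβ : IsPseudo β) (k l r : ℕ) (hr : 0 < r)
    (hbase : ∀ s : ℕ, 0 < s → ∃ D, HasDim β univ (k + 1) s D)
    (E : ℕ → ℕ → ℝ) (hE : ∀ R s, 0 ≤ E R s) :
    ∃ (N ρ₀ : ℕ) (D : ℝ), 0 ≤ D ∧ ∀ (Z : Type) (ρ : Z → Z → ℝ) (A : Set Z) (f : Z → G),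
      IsPseudo ρ → (∀ x ∈ A, ∀ y ∈ A, ρ x y < r → β (f x) (f y) ≤ r) →
      (∀ R ≤ N, ∀ η, HasDim ρ {x | x ∈ A ∧ β η (f x) ≤ ρ₀} (l + 1) R (E R ρ₀)) →
      HasDim ρ A (k + l + 1) r D := by
  obtain ⟨SG, cG, hcG, hgood⟩ := hbase ((2 * l + 2) * r) (by positivity)
  obtain ⟨ρ₀, hρ₀⟩ := exists_nat_ge (SG + l * r)
  -- Add the colour classes of the base one at a time; the empty set has `l` colours.
  have key : ∀ j : ℕ, ∃ (N : ℕ) (D : ℝ), 0 ≤ D ∧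
      ∀ (Z : Type) (ρ : Z → Z → ℝ) (A : Set Z) (f : Z → G),
      IsPseudo ρ → (∀ x ∈ A, ∀ y ∈ A, ρ x y < r → β (f x) (f y) ≤ r) →
      (∀ R ≤ N, ∀ η, HasDim ρ {x | x ∈ A ∧ β η (f x) ≤ ρ₀} (l + 1) R (E R ρ₀)) →
      HasDim ρ {x | x ∈ A ∧ cG (f x) < j} (l + j) r D := by
    intro j
    induction j with
    | zero =>
      refine ⟨0, 0, le_rfl, fun Z ρ A f _ _ _ => ⟨fun _ => 0, ?_, ?_⟩⟩
      · rintro x ⟨-, hx⟩; omega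
      · rintro i x ⟨⟨-, hx⟩, -⟩; omega
    | succ j ih =>
      obtain ⟨N, D, hD, h⟩ := ih
      set R : ℕ := ⌈D + 2 * r⌉₊
      refine ⟨max N R, E R ρ₀ + 2 * D + 2 * r, by have := hE R ρ₀; positivity,
        fun Z ρ A f hρ hf hfib => ?_⟩
      have h1 := h Z ρ A f hρ hf fun R' hR' => hfib R' (hR'.trans (le_max_left _ _))
      have hsub : {x | x ∈ A ∧ cG (f x) < j} ∪ {x | x ∈ A ∧ cG (f x) = j} ⊆ A := by
        rintro x (hx | hx) <;> exact hx.1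
      refine (HasDim.add_preimage (B := {x | x ∈ A ∧ cG (f x) = j}) hρ hβ (U := {g | cG g = j})
        (SG := SG) hr hD (hE R ρ₀) (by omega) f
        (fun x hx y hy => hf x (hsub hx) y (hsub hy)) ?_ (fun x hx => hx.2) hρ₀
        (fun η => (hfib R (le_max_right _ _) η).mono le_rfl le_rfl
          fun x hx => ⟨hsub hx.1, hx.2⟩) h1 (Nat.le_ceil _)).mono le_rfl le_rfl ?_
      · refine (hgood j).mono (by push_cast; exact le_rfl) le_rfl fun g hg => ⟨mem_univ _, hg⟩
      · rintro x ⟨hx, hxj⟩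
        rcases Nat.lt_succ_iff_lt_or_eq.1 hxj with h | h
        · exact Or.inl ⟨hx, h⟩
        · exact Or.inr ⟨hx, h⟩
  obtain ⟨N, D, hD, h⟩ := key (k + 1)
  refine ⟨N, ρ₀, D, hD, fun Z ρ A f hρ hf hfib => ?_⟩
  have := h Z ρ A f hρ hf hfib
  rw [show k + l + 1 = l + (k + 1) by ring]
  exact this.mono le_rfl le_rfl fun x hx => ⟨hx, hcG _ (mem_univ _)⟩

end Hurewicz

/-! ### Word length -/

section Words

variable {Γ : Type*} [Group Γ] {S : Set Γ}

lemma wordLength_prod_le (w : List Γ) (hw : ∀ x ∈ w, x ∈ S) : wordLength S w.prod ≤ w.length :=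
  Nat.sInf_le ⟨w, hw, rfl, rfl⟩

lemma exists_word (hS : IsFinSymmGen S) (g : Γ) :
    ∃ w : List Γ, (∀ x ∈ w, x ∈ S) ∧ w.length = wordLength S g ∧ w.prod = g := by
  have hne : {n : ℕ | ∃ w : List Γ, (∀ x ∈ w, x ∈ S) ∧ w.length = n ∧ w.prod = g}.Nonempty := by
    have hg : g ∈ (Subgroup.closure S).toSubmonoid := by rw [hS.2.2]; exact Subgroup.mem_top g
    rw [Subgroup.closure_toSubmonoid] at hg
    obtain ⟨w, hw, hwg⟩ := Submonoid.exists_list_of_mem_closure hg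
    refine ⟨w.length, w, fun x hx => ?_, rfl, hwg⟩
    rcases hw x hx with h | h
    · exact h
    · simpa using hS.2.1 _ (Set.mem_inv.1 h)
  exact Nat.sInf_mem hne

lemma wordLength_one : wordLength S (1 : Γ) = 0 := by
  have := wordLength_prod_le (S := S) ([] : List Γ) (by simp)
  simpa using this

lemma wordLength_le_one {s : Γ} (hs : s ∈ S) : wordLength S s ≤ 1 := by
  have := wordLength_prod_le (S := S) [s] (by simpa using hs)
  simpa using this

lemma wordLength_mul_le (hS : IsFinSymmGen S) (g h : Γ) :
    wordLength S (g * h) ≤ wordLength S g + wordLength S h := by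
  obtain ⟨w, hw, hl, rfl⟩ := exists_word hS g
  obtain ⟨v, hv, hl', rfl⟩ := exists_word hS h
  rw [← hl, ← hl', ← List.length_append, ← List.prod_append]
  refine wordLength_prod_le _ fun x hx => ?_
  rcases List.mem_append.1 hx with h | h
  · exact hw x h
  · exact hv x h

lemma wordLength_inv_le (hS : IsFinSymmGen S) (g : Γ) : wordLength S g⁻¹ ≤ wordLength S g := by
  obtain ⟨w, hw, hl, hg⟩ := exists_word hS g
  have := wordLength_prod_le (S := S) (w.map (·⁻¹)).reverse (by
    intro x hx
    simp only [List.mem_reverse, List.mem_map] at hx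
    obtain ⟨y, hy, rfl⟩ := hx
    exact hS.2.1 y (hw y hy))
  rw [← List.prod_inv_reverse, hg] at this
  simpa [hl] using this

lemma wordLength_inv (hS : IsFinSymmGen S) (g : Γ) : wordLength S g⁻¹ = wordLength S g :=
  le_antisymm (wordLength_inv_le hS g) (by simpa using wordLength_inv_le hS g⁻¹)

lemma isPseudo_wordDist (hS : IsFinSymmGen S) : IsPseudo (wordDist S) := by
  refine ⟨fun x => by simp [wordDist, wordLength_one], fun x y => ?_, fun x y z => ?_⟩
  · unfold wordDist
    rw [← wordLength_inv hS, mul_inv_rev, inv_inv]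
  · unfold wordDist
    have := wordLength_mul_le hS (x⁻¹ * y) (y⁻¹ * z)
    rw [show x⁻¹ * y * (y⁻¹ * z) = x⁻¹ * z by group] at this
    exact_mod_cast this

lemma finite_wordLength_le (hS : IsFinSymmGen S) (n : ℕ) : {g : Γ | wordLength S g ≤ n}.Finite := by
  have : Finite S := hS.1
  refine ((List.finite_length_le S n).image fun l => (l.map Subtype.val).prod).subset ?_
  intro g hg
  obtain ⟨w, hw, hl, hwg⟩ := exists_word hS g
  refine ⟨w.attach.map fun x => ⟨x.1, hw x.1 x.2⟩, ?_, ?_⟩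
  · have hg' : wordLength S g ≤ n := hg
    simp only [mem_ofPred_eq, List.length_map, List.length_attach]
    omega
  · simp only [List.map_map]
    rw [← hwg]
    congr 1
    conv_rhs => rw [← List.attach_map_subtype_val w]
    rfl

end Words

/-! ### The warped metric -/

section Warped

variable {Γ Y : Type*} [Group Γ] [MetricSpace Y] [MulAction Γ Y] {S : Set Γ}

lemma dist_smul_le_pow (hS : IsFinSymmGen S) {L : ℝ} (hL : 1 ≤ L)
    (hLip : ∀ s ∈ S, ∀ x y : Y, dist (s • x) (s • y) ≤ L * dist x y) {g : Γ} {n : ℕ}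
    (hg : wordLength S g ≤ n) (x y : Y) : dist (g • x) (g • y) ≤ L ^ n * dist x y := by
  obtain ⟨w, hw, hl, rfl⟩ := exists_word hS g
  have h1 : dist (w.prod • x) (w.prod • y) ≤ L ^ w.length * dist x y := by
    clear hl hg
    induction w with
    | nil => simp
    | cons s w ih =>
      have h2 := ih fun x hx => hw x (List.mem_cons_of_mem _ hx)
      have h3 := hLip s (hw s List.mem_cons_self) (w.prod • x) (w.prod • y)
      rw [List.prod_cons, mul_smul, mul_smul, List.length_cons, pow_succ']
      calc _ ≤ L * dist (w.prod • x) (w.prod • y) := h3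
        _ ≤ L * (L ^ w.length * dist x y) := by gcongr
        _ = _ := by ring
  refine h1.trans ?_
  gcongr
  · omega

/-- `x` can be joined to `y` by a finite chain of moves of total cost `c`, where a move is either
an arbitrary jump, at its price in `tY`, or the action of a generator, at price one. -/
inductive WChain (S : Set Γ) (t : ℝ) : ℝ → Y → Y → Prop
  | nil (x : Y) : WChain S t 0 x x
  | jump {c : ℝ} {x y : Y} (h : WChain S t c x y) (z : Y) : WChain S t (c + t * dist y z) x z
  | act {c : ℝ} {x y : Y} (h : WChain S t c x y) {s : Γ} (hs : s ∈ S) : WChain S t (c + 1) x (s • y)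

lemma WChain.nonneg {t c : ℝ} (ht : 0 < t) {x y : Y} (h : WChain S t c x y) : 0 ≤ c := by
  induction h with
  | nil => exact le_rfl
  | jump _ z ih => positivity
  | act _ _ ih => positivity

lemma WChain.trans {t c c' : ℝ} {x y z : Y} (h : WChain S t c x y) (h' : WChain S t c' y z) :
    WChain S t (c + c') x z := by
  induction h' with
  | nil => simpa using h
  | jump _ z ih => rw [← add_assoc]; exact WChain.jump (ih h) z
  | act _ hs ih => rw [← add_assoc]; exact WChain.act (ih h) hs

lemma WChain.single (t : ℝ) (x y : Y) : WChain S t (t * dist x y) x y := by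
  have := WChain.jump (WChain.nil (S := S) (t := t) x) y
  simpa using this

lemma WChain.symm (hS : IsFinSymmGen S) {t c : ℝ} {x y : Y} (h : WChain S t c x y) :
    WChain S t c y x := by
  induction h with
  | nil => exact WChain.nil _
  | @jump c x y _ z ih =>
    have := (WChain.single (S := S) t z y).trans ih
    rwa [dist_comm, add_comm] at this
  | @act c x y _ s hs ih =>
    have h1 := WChain.act (WChain.nil (S := S) (t := t) (s • y)) (hS.2.1 s hs)
    rw [inv_smul_smul] at h1
    have := h1.trans ih
    rwa [zero_add, add_comm] at this

/-- Postponing all jumps to the end of a chain with `n` generator moves multiplies their length by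
at most `L ^ n`. -/
lemma WChain.exists_smul (hS : IsFinSymmGen S) {L : ℝ} (hL : 1 ≤ L)
    (hLip : ∀ s ∈ S, ∀ x y : Y, dist (s • x) (s • y) ≤ L * dist x y) {t c : ℝ} (ht : 0 < t)
    {x y : Y} (h : WChain S t c x y) :
    ∃ (γ : Γ) (n : ℕ) (e : ℝ), wordLength S γ ≤ n ∧ 0 ≤ e ∧ n + e = c ∧
      t * dist (γ • x) y ≤ L ^ n * e := by
  induction h with
  | nil x => exact ⟨1, 0, 0, by rw [wordLength_one], le_rfl, by simp, by simp⟩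
  | @jump c x y _ z ih =>
    obtain ⟨γ, n, e, h1, h2, h3, h4⟩ := ih
    refine ⟨γ, n, e + t * dist y z, h1, by positivity, by linarith, ?_⟩
    have h5 : 1 ≤ L ^ n := one_le_pow₀ hL
    have h6 := mul_le_mul_of_nonneg_left (dist_triangle (γ • x) y z) ht.le
    have h7 : 0 ≤ t * dist y z := by positivity
    nlinarith
  | @act c x y _ s hs ih =>
    obtain ⟨γ, n, e, h1, h2, h3, h4⟩ := ih
    refine ⟨s * γ, n + 1, e, ?_, h2, by push_cast; linarith, ?_⟩
    · have := wordLength_mul_le hS s γ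
      have := wordLength_le_one hs
      omega
    · rw [mul_smul, pow_succ']
      have h5 := hLip s hs (γ • x) y
      calc t * dist (s • γ • x) (s • y) ≤ t * (L * dist (γ • x) y) := by gcongr
        _ = L * (t * dist (γ • x) y) := by ring
        _ ≤ L * (L ^ n * e) := by gcongr
        _ = _ := by ring

/-- The infimum of the costs of chains is bounded by the warped metric. As the maximum of a metric
and a pseudometric is a metric, this follows from maximality without showing that the infimum is
positive off the diagonal. -/
lemma IsWarpedMetric.exists_chain (hS : IsFinSymmGen S) {t : ℝ} (ht : 0 < t) {ρ : Y → Y → ℝ}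
    (hρ : IsWarpedMetric (fun (γ : Γ) (y : Y) => γ • y) S dist t ρ) {x y : Y} {R : ℝ}
    (hR : ρ x y < R) : ∃ c < R, WChain S t c x y := by
  obtain ⟨⟨hρ0, hρpos, hρs, hρt⟩, hρd, hρa, hmax⟩ := hρ
  let δ : Y → Y → ℝ := fun x y => sInf {c | WChain S t c x y}
  have hbdd : ∀ x y : Y, BddBelow {c | WChain S t c x y} := fun x y => ⟨0, fun c hc => hc.nonneg ht⟩
  have hne : ∀ x y : Y, {c | WChain S t c x y}.Nonempty := fun x y => ⟨_, WChain.single t x y⟩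
  have hle : ∀ {x y : Y} {c : ℝ}, WChain S t c x y → δ x y ≤ c := fun h => csInf_le (hbdd _ _) h
  have hδ0 : ∀ x, δ x x = 0 := fun x =>
    le_antisymm (hle (WChain.nil x)) (le_csInf (hne _ _) fun c hc => hc.nonneg ht)
  have hδs : ∀ x y, δ x y = δ y x := by
    intro x y
    have : {c | WChain S t c x y} = {c | WChain S t c y x} := by
      ext c; exact ⟨fun h => h.symm hS, fun h => h.symm hS⟩
    simp only [δ, this]
  have hδt : ∀ x y z, δ x z ≤ δ x y + δ y z := by
    intro x y z
    refine le_of_forall_pos_le_add fun ε hε => ?_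
    obtain ⟨c, hc, hcε⟩ := exists_lt_of_csInf_lt (hne x y)
      (show δ x y < δ x y + ε / 2 by linarith)
    obtain ⟨c', hc', hcε'⟩ := exists_lt_of_csInf_lt (hne y z)
      (show δ y z < δ y z + ε / 2 by linarith)
    have := hle (WChain.trans hc hc')
    linarith
  have hmetric : IsMetricOn fun x y => max (ρ x y) (δ x y) := by
    refine ⟨fun y => ?_, fun y y' h => lt_max_of_lt_left (hρpos y y' h), fun y y' => ?_,
      fun x y z => ?_⟩
    · simp [hρ0, hδ0]
    · simp only [hρs y y', hδs y y']
    · refine max_le ((hρt x y z).trans ?_) ((hδt x y z).trans ?_)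
      · exact add_le_add (le_max_left _ _) (le_max_left _ _)
      · exact add_le_add (le_max_right _ _) (le_max_right _ _)
  have h := hmax _ hmetric (fun y y' => max_le (hρd y y') (hle (WChain.single t y y')))
    (fun s hs y => max_le (hρa s hs y) (by
      have := hle (WChain.act (WChain.nil (S := S) (t := t) y) hs)
      simpa using this)) x y
  obtain ⟨c, hc, hcR⟩ := exists_lt_of_csInf_lt (hne x y)
    (((le_max_right _ _).trans h).trans_lt hR : δ x y < R)
  exact ⟨c, hcR, hc⟩

/-- Points at warped distance less than `R` differ by a group element of length at most `R`, up to a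
bounded error in `tY`. -/
lemma IsWarpedMetric.exists_smul (hS : IsFinSymmGen S) {L : ℝ} (hL : 1 ≤ L)
    (hLip : ∀ s ∈ S, ∀ x y : Y, dist (s • x) (s • y) ≤ L * dist x y) {t : ℝ} (ht : 0 < t)
    {ρ : Y → Y → ℝ} (hρ : IsWarpedMetric (fun (γ : Γ) (y : Y) => γ • y) S dist t ρ) {x y : Y}
    {R : ℕ} (hR : ρ x y < R) :
    ∃ γ : Γ, wordLength S γ ≤ R ∧ t * dist (γ • x) y ≤ L ^ R * R := by
  obtain ⟨c, hc, h⟩ := hρ.exists_chain hS ht hR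
  obtain ⟨γ, n, e, h1, h2, h3, h4⟩ := h.exists_smul hS hL hLip ht
  have hn : n ≤ R := by
    have : (n : ℝ) ≤ R := by linarith
    exact_mod_cast this
  have he : e ≤ R := by
    have : (0 : ℝ) ≤ n := by positivity
    linarith
  refine ⟨γ, h1.trans hn, h4.trans ?_⟩
  gcongr

lemma IsWarpedMetric.le_wordLength (hS : IsFinSymmGen S) {t : ℝ} {ρ : Y → Y → ℝ}
    (hρ : IsWarpedMetric (fun (γ : Γ) (y : Y) => γ • y) S dist t ρ) (g : Γ) (x : Y) :
    ρ x (g • x) ≤ wordLength S g := by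
  obtain ⟨w, hw, hl, rfl⟩ := exists_word hS g
  rw [← hl]
  clear hl
  induction w with
  | nil => simp [hρ.1.1]
  | cons s w ih =>
    have h1 := ih fun x hx => hw x (List.mem_cons_of_mem _ hx)
    have h2 := hρ.2.2.1 s (hw s List.mem_cons_self) (w.prod • x)
    have h3 := hρ.1.2.2.2 x (w.prod • x) (s • w.prod • x)
    rw [List.prod_cons, mul_smul, List.length_cons]
    push_cast
    linarith

/-- By freeness and compactness, distinct elements of a finite subset of the group move every point
to places that are far apart in `tY` once `t` is large. -/
lemma eventually_separated [CompactSpace Y] (hcont : ∀ γ : Γ, Continuous fun y : Y => γ • y)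
    (hfree : ∀ (γ : Γ) (y : Y), γ • y = y → γ = 1) {F : Set Γ} (hF : F.Finite) (K : ℝ) :
    ∀ᶠ t : ℝ in Filter.atTop, ∀ γ₁ ∈ F, ∀ γ₂ ∈ F, ∀ a : Y,
      t * dist (γ₁ • a) (γ₂ • a) ≤ K → γ₁ = γ₂ := by
  refine (Filter.eventually_all_finite hF).2 fun γ₁ _ => (Filter.eventually_all_finite hF).2
    fun γ₂ _ => ?_
  by_cases h : γ₁ = γ₂
  · exact Filter.Eventually.of_forall fun _ _ _ => h
  rcases isEmpty_or_nonempty Y with hY | hY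
  · exact Filter.Eventually.of_forall fun _ a => (hY.false a).elim
  obtain ⟨y₀, -, hy₀⟩ := (isCompact_univ (X := Y)).exists_isMinOn univ_nonempty
    ((hcont γ₁).dist (hcont γ₂)).continuousOn
  have hpos : 0 < dist (γ₁ • y₀) (γ₂ • y₀) := by
    refine dist_pos.2 fun heq => h ?_
    have h1 : (γ₂⁻¹ * γ₁) • y₀ = y₀ := by rw [mul_smul, heq, inv_smul_smul]
    have h2 := hfree _ _ h1
    exact (inv_mul_eq_one.1 h2).symm
  have htend : Filter.Tendsto (fun t : ℝ => t * dist (γ₁ • y₀) (γ₂ • y₀)) Filter.atTop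
      Filter.atTop := Filter.tendsto_id.atTop_mul_const hpos
  filter_upwards [htend.eventually_gt_atTop K, Filter.eventually_ge_atTop 0] with t ht ht0 a ha
  have h1 : dist (γ₁ • y₀) (γ₂ • y₀) ≤ dist (γ₁ • a) (γ₂ • a) := hy₀ (mem_univ a)
  have := mul_le_mul_of_nonneg_left h1 ht0
  linarith

end Warped

/-! ### Bounded pieces of the warped cone -/

section Main

lemma FamAsdimLE.exists_hasDim {ι : Type*} {Z : ι → Type*} {ρ : ∀ i, Z i → Z i → ℝ} {k : ℕ}
    (h : FamAsdimLE Z ρ k) (R : ℕ) (hR : 0 < R) :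
    ∃ D : ℝ, 0 ≤ D ∧ ∀ i, HasDim (ρ i) univ (k + 1) R D := by
  obtain ⟨D, hD⟩ := h R hR
  refine ⟨max D 0, le_max_right _ _, fun i => ?_⟩
  obtain ⟨U, hU, hUD⟩ := hD i
  choose c hc using hU
  refine ⟨fun z => (c z : ℕ), fun x _ => (c x).2, fun j => ?_⟩
  rintro a ⟨-, ha⟩ b hab
  have hsub : {x | x ∈ univ ∧ (c x : ℕ) = j} ⊆ U (c a) := by
    rintro x ⟨-, hx⟩
    have : c x = c a := Fin.ext (hx.trans ha.symm)
    rw [← this]; exact hc x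
  have hab' := hab.mono le_rfl hsub
  exact (hUD (c a) a (hc a) b (hab'.mem (hc a)) hab').trans (le_max_left _ _)

lemma famAsdimLE_of_hasDim {ι : Type*} {Z : ι → Type*} {ρ : ∀ i, Z i → Z i → ℝ} {k : ℕ}
    (h : ∀ R : ℕ, 0 < R → ∃ D : ℝ, ∀ i, HasDim (ρ i) univ (k + 1) R D) : FamAsdimLE Z ρ k := by
  intro R hR
  obtain ⟨D, hD⟩ := h R hR
  refine ⟨D, fun i => ?_⟩
  obtain ⟨c, hc, hcD⟩ := hD i
  refine ⟨fun j => {z | z ∈ univ ∧ c z = j}, fun z => ⟨⟨c z, hc z (mem_univ z)⟩, mem_univ z, rfl⟩,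
    fun j a ha b _ hab => hcD j a ha b hab⟩

/-- Colourings of the bounded `R`-components of `U` combine to a colouring of `U` at any scale
`r ≤ R`. -/
lemma HasDim.of_components {Z : Type*} {ρ : Z → Z → ℝ} (hρ : IsPseudo ρ) {n : ℕ} {r R S₀ D : ℝ}
    (hrR : r ≤ R) {U : Set Z} (hU : Good ρ R S₀ U)
    (h : ∀ (A : Set Z) (a : Z), (∀ x ∈ A, ρ a x ≤ S₀) → HasDim ρ A n r D) :
    HasDim ρ U n r D := by
  let w : Z → Set Z := fun x => {z | RConn ρ R U x z}
  have hv : ∀ v : Set Z, ∃ c : Z → ℕ, ∀ x ∈ U, w x = v →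
      (∀ z ∈ v, c z < n) ∧ ∀ i, Good ρ r D {z | z ∈ v ∧ c z = i} := by
    intro v
    by_cases hx : ∃ x ∈ U, w x = v
    · obtain ⟨x, hx, rfl⟩ := hx
      obtain ⟨c, h1, h2⟩ := h (w x) x fun z hz => hU x hx z hz
      exact ⟨c, fun _ _ _ => ⟨h1, h2⟩⟩
    · exact ⟨fun _ => 0, fun x hxU hxv => absurd ⟨x, hxU, hxv⟩ hx⟩
  choose c hc using hv
  refine ⟨fun x => c (w x) x, fun x hx => (hc (w x) x hx rfl).1 x Relation.ReflTransGen.refl, ?_⟩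
  rintro i x ⟨hx, hxi⟩ y hxy
  have key : RConn ρ r {z | z ∈ w x ∧ c (w x) z = i} x y ∧ y ∈ U ∧ w y = w x ∧ c (w y) y = i := by
    unfold RConn at hxy
    induction hxy with
    | refl => exact ⟨Relation.ReflTransGen.refl, hx, rfl, hxi⟩
    | @tail y z _ hyz ih =>
      obtain ⟨ih1, ihy, ihw, ihc⟩ := ih
      obtain ⟨-, ⟨hz, hzi⟩, hlt⟩ := hyz
      have hyz' : RConn ρ R U y z := Relation.ReflTransGen.single ⟨ihy, hz, hlt.trans_le hrR⟩
      have hwz : w z = w y := by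
        ext g
        exact ⟨fun h => Relation.ReflTransGen.trans hyz' h,
          fun h => Relation.ReflTransGen.trans (hyz'.symm hρ) h⟩
      have hyw : y ∈ w y := Relation.ReflTransGen.refl
      have hzw : z ∈ w z := Relation.ReflTransGen.refl
      have hwz' := hwz.trans ihw
      refine ⟨ih1.tail' ⟨ihw ▸ hyw, by rw [← ihw]; exact ihc⟩
        ⟨hwz' ▸ hzw, by rw [← hwz']; exact hzi⟩ hlt, hz, hwz', hzi⟩
  exact (hc (w x) x hx rfl).2 i x ⟨Relation.ReflTransGen.refl, hxi⟩ y key.1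

variable {Γ Y : Type} [Group Γ] [MetricSpace Y] [CompactSpace Y] [MulAction Γ Y] {S : Set Γ}

/-- On a bounded piece `A` of a high level of the warped cone, the points are coherently labelled
by group elements: whenever `x` and `y` are at warped distance less than `R`, the element
`(f y)⁻¹ * f x` moves `x` to a point close to `y` in `tY`. -/
lemma eventually_exists_label (hS : IsFinSymmGen S) {L : ℝ} (hL : 1 ≤ L)
    (hLip : ∀ s ∈ S, ∀ x y : Y, dist (s • x) (s • y) ≤ L * dist x y)
    (hcont : ∀ γ : Γ, Continuous fun y : Y => γ • y)
    (hfree : ∀ (γ : Γ) (y : Y), γ • y = y → γ = 1) (S₀ : ℝ) (N : ℕ) :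
    ∀ᶠ t : ℝ in Filter.atTop, ∀ ρ : Y → Y → ℝ,
      IsWarpedMetric (fun (γ : Γ) (y : Y) => γ • y) S dist t ρ →
      ∀ (A : Set Y) (a : Y), (∀ x ∈ A, ρ a x ≤ S₀) → ∃ f : Y → Γ,
        ∀ R ≤ N, ∀ x ∈ A, ∀ y ∈ A, ρ x y < (R : ℕ) →
          wordLength S ((f y)⁻¹ * f x) ≤ R ∧
          t * dist (((f y)⁻¹ * f x) • x) y ≤ L ^ R * R := by
  obtain ⟨M, hM⟩ := exists_nat_gt S₀
  filter_upwards [Filter.eventually_gt_atTop 0, eventually_separated hcont hfree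
    (finite_wordLength_le hS (N + M)) (L ^ N * (L ^ M * M) + L ^ N * N + L ^ M * M)]
    with t ht hsep ρ hρ A a hA
  have hex : ∀ x, ∃ γ : Γ, x ∈ A → wordLength S γ ≤ M ∧ t * dist (γ • a) x ≤ L ^ M * M := by
    intro x
    by_cases hx : x ∈ A
    · obtain ⟨γ, h⟩ := hρ.exists_smul hS hL hLip ht (x := a) (y := x) (R := M)
        ((hA x hx).trans_lt hM)
      exact ⟨γ, fun _ => h⟩
    · exact ⟨1, fun h => absurd h hx⟩
  choose g hg using hex
  -- The label `f x` moves `x` close to `a`.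
  refine ⟨fun x => (g x)⁻¹, fun R hR x hx y hy hxy => ?_⟩
  obtain ⟨δ, hδ, hδd⟩ := hρ.exists_smul hS hL hLip ht hxy
  obtain ⟨hgx, hgxd⟩ := hg x hx
  obtain ⟨hgy, hgyd⟩ := hg y hy
  -- Both elements move `a` close to `y`, so they agree at a high level.
  have heq : δ * g x = g y := by
    refine hsep _ ?_ _ ?_ a ?_
    · have := wordLength_mul_le hS δ (g x)
      exact this.trans (by omega)
    · exact hgy.trans (by omega)
    · have h1 := dist_smul_le_pow hS hL hLip (hδ.trans hR) (g x • a) x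
      have h2 := dist_triangle4 (δ • g x • a) (δ • x) y (g y • a)
      rw [dist_comm y] at h2
      have h3 : L ^ R * R ≤ L ^ N * N := by gcongr
      rw [mul_smul]
      calc t * dist (δ • g x • a) (g y • a)
          ≤ t * (L ^ N * dist (g x • a) x + dist (δ • x) y + dist (g y • a) y) := by
            exact mul_le_mul_of_nonneg_left (by linarith) ht.le
        _ = L ^ N * (t * dist (g x • a) x) + t * dist (δ • x) y + t * dist (g y • a) y := by ring
        _ ≤ L ^ N * (L ^ M * M) + L ^ N * N + L ^ M * M := by
            have h4 : L ^ N * (t * dist (g x • a) x) ≤ L ^ N * (L ^ M * M) := by gcongr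
            linarith
  have : (g y)⁻¹⁻¹ * (g x)⁻¹ = δ := by rw [inv_inv, ← heq]; group
  simp only [this]
  exact ⟨hδ, hδd⟩

/-- Bounded pieces of high levels of the warped cone have dimension at most `k + l` at scale `r`,
with component bounds not depending on the size `S₀` of the pieces. -/
lemma exists_hasDim_bounded (hS : IsFinSymmGen S) {L : ℝ} (hL : 1 ≤ L)
    (hLip : ∀ s ∈ S, ∀ x y : Y, dist (s • x) (s • y) ≤ L * dist x y)
    (hcont : ∀ γ : Γ, Continuous fun y : Y => γ • y)
    (hfree : ∀ (γ : Γ) (y : Y), γ • y = y → γ = 1) (k l : ℕ)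
    (hΓ : FamAsdimLE (fun _ : Unit => Γ) (fun _ => wordDist S) k)
    (hOY : FamAsdimLE (fun _ : {t : ℝ // 0 < t} => Y) (fun t y y' => t.1 * dist y y') l)
    (r : ℕ) (hr : 0 < r) :
    ∃ D : ℝ, 0 ≤ D ∧ ∀ S₀ : ℝ, ∀ᶠ t : ℝ in Filter.atTop, ∀ ρ : Y → Y → ℝ,
      IsWarpedMetric (fun (γ : Γ) (y : Y) => γ • y) S dist t ρ →
      ∀ (A : Set Y) (a : Y), (∀ x ∈ A, ρ a x ≤ S₀) → HasDim ρ A (k + l + 1) r D := by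
  choose DY hDY0 hDY using fun R : ℕ => hOY.exists_hasDim (R + 1) (Nat.succ_pos R)
  -- An `R`-step over a ball of radius `s` becomes a step shorter than `scale R s + 1` in `tY`.
  let scale : ℕ → ℕ → ℕ := fun R s => ⌈L ^ s * (L ^ R * R)⌉₊
  obtain ⟨N, ρ₀, D, hD, hHur⟩ := exists_hasDim_hurewicz (isPseudo_wordDist hS) k l r hr
    (fun s hs => by
      obtain ⟨D, -, hD⟩ := hΓ.exists_hasDim s hs
      exact ⟨D, hD ()⟩)
    (fun R s => 2 * s + DY (scale R s)) (fun R s => by have := hDY0 (scale R s); positivity)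
  refine ⟨D, hD, fun S₀ => ?_⟩
  filter_upwards [Filter.eventually_gt_atTop 0,
    eventually_exists_label hS hL hLip hcont hfree S₀ (max N r)] with t ht hlab ρ hρ A a hA
  obtain ⟨f, hf⟩ := hlab ρ hρ A a hA
  refine hHur Y ρ A f hρ.1.isPseudo ?_ ?_
  · intro x hx y hy hxy
    have h1 := (hf r (le_max_right _ _) x hx y hy hxy)
    have h2 : ρ y x < r := by rwa [hρ.1.2.2.1]
    have h3 := (hf r (le_max_right _ _) y hy x hx h2).1
    unfold wordDist
    exact_mod_cast h3
  · intro R hR η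
    obtain ⟨c, hc1, hc2⟩ := hDY (scale R ρ₀) ⟨t, ht⟩
    -- `φ` moves points over the ball by at most `ρ₀` in the warped metric, and takes `R`-steps
    -- there to short steps in `tY`.
    let φ : Y → Y := fun x => (η⁻¹ * f x) • x
    have hφ : ∀ x ∈ A, ∀ y ∈ A, wordDist S η (f x) ≤ ρ₀ → ρ x y < R →
        t * dist (φ x) (φ y) < ((scale R ρ₀ + 1 : ℕ) : ℝ) := by
      intro x hx y hy hηx hxy
      have hyx : ρ y x < R := by rwa [hρ.1.2.2.1]
      obtain ⟨-, h1⟩ := hf R (hR.trans (le_max_left _ _)) y hy x hx hyx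
      have hw : wordLength S (η⁻¹ * f x) ≤ ρ₀ := by
        unfold wordDist at hηx; exact_mod_cast hηx
      have h2 := dist_smul_le_pow hS hL hLip hw (((f x)⁻¹ * f y) • y) x
      have h3 : (η⁻¹ * f x) • ((f x)⁻¹ * f y) • y = φ y := by
        rw [smul_smul, show η⁻¹ * f x * ((f x)⁻¹ * f y) = η⁻¹ * f y by group]
      rw [h3] at h2
      have h4 : t * dist (φ y) (φ x) ≤ L ^ ρ₀ * (L ^ R * R) := by
        calc t * dist (φ y) (φ x) ≤ t * (L ^ ρ₀ * dist (((f x)⁻¹ * f y) • y) x) := by gcongr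
          _ = L ^ ρ₀ * (t * dist (((f x)⁻¹ * f y) • y) x) := by ring
          _ ≤ _ := by gcongr
      rw [dist_comm]
      push_cast
      have h5 : L ^ ρ₀ * (L ^ R * R) ≤ (scale R ρ₀ : ℕ) := Nat.le_ceil _
      linarith
    refine ⟨fun x => c (φ x), fun x _ => hc1 _ (mem_univ _), fun i => ?_⟩
    rintro x ⟨⟨hx, hηx⟩, hxi⟩ y hxy
    have hy := hxy.mem ⟨⟨hx, hηx⟩, hxi⟩
    have hchain : RConn (fun y y' => t * dist y y') ((scale R ρ₀ + 1 : ℕ) : ℝ)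
        {z | z ∈ univ ∧ c z = i} (φ x) (φ y) := by
      unfold RConn at hxy
      clear hy
      induction hxy with
      | refl => exact Relation.ReflTransGen.refl
      | @tail y z _ hyz ih =>
        obtain ⟨⟨⟨hy, hηy⟩, hyi⟩, ⟨⟨hz, hηz⟩, hzi⟩, hlt⟩ := hyz
        exact Relation.ReflTransGen.tail ih
          ⟨⟨mem_univ _, hyi⟩, ⟨mem_univ _, hzi⟩, hφ y hy z hz hηy hlt⟩
    have h1 := hc2 i (φ x) ⟨mem_univ _, hxi⟩ (φ y) hchain
    have h2 := hρ.le_wordLength hS (η⁻¹ * f x) x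
    have h3 := hρ.le_wordLength hS (η⁻¹ * f y) y
    have h4 := hρ.2.1 (φ x) (φ y)
    have h5 := hρ.1.2.2.2 x (φ x) y
    have h6 := hρ.1.2.2.2 (φ x) (φ y) y
    rw [hρ.1.2.2.1 (φ y) y] at h6
    have h7 : (wordLength S (η⁻¹ * f x) : ℝ) ≤ ρ₀ := hηx
    have h8 : (wordLength S (η⁻¹ * f y) : ℝ) ≤ ρ₀ := hy.1.2
    simp only at h1
    linarith

end Main

theorem asdim_of_warped_cone_le_asdim_group_plus_asdim_open_cone
    {Γ Y : Type} [Group Γ] [MetricSpace Y] [CompactSpace Y] [MulAction Γ Y]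
    (S : Set Γ) (hS : IsFinSymmGen S)
    -- the action is Lipschitz (uniformly on generators), by homeomorphisms, and free
    (L : NNReal) (hLip : ∀ s ∈ S, LipschitzWith L fun y : Y => s • y)
    (hcont : ∀ γ : Γ, Continuous fun y : Y => γ • y)
    (hfree : ∀ (γ : Γ) (y : Y), γ • y = y → γ = 1)
    -- the warped metrics of the warped cone
    (dw : {t : ℝ // 0 < t} → Y → Y → ℝ)
    (hdw : ∀ t, IsWarpedMetric (fun (γ : Γ) (y : Y) => γ • y) S dist t.1 (dw t))
    -- asdim Γ ≤ k and asdim OY ≤ l (both finite)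
    (k l : ℕ)
    (hΓ : FamAsdimLE (fun _ : Unit => Γ) (fun _ => wordDist S) k)
    (hOY : FamAsdimLE (fun _ : {t : ℝ // 0 < t} => Y)
      (fun t y y' => t.1 * dist y y') l)
    -- the warped cone has finite asymptotic dimension
    (hfinite : ∃ k' : ℕ, FamAsdimLE (fun _ : {t : ℝ // 0 < t} => Y) dw k') :
    -- then asdim O_Γ Y ≤ asdim Γ + asdim OY
    FamAsdimLE (fun _ : {t : ℝ // 0 < t} => Y) dw (k + l) := by
  obtain ⟨m, hm⟩ := hfinite
  have hL : (1 : ℝ) ≤ max (L : ℝ) 1 := le_max_right _ _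
  have hLip' : ∀ s ∈ S, ∀ x y : Y, dist (s • x) (s • y) ≤ max (L : ℝ) 1 * dist x y := by
    intro s hs x y
    refine ((hLip s hs).dist_le_mul x y).trans ?_
    gcongr
    exact le_max_left _ _
  choose E hE0 hE using fun r : ℕ =>
    exists_hasDim_bounded hS hL hLip' hcont hfree k l hΓ hOY (r + 1) (Nat.succ_pos r)
  refine famAsdimLE_of_hasDim fun R hR => ?_
  obtain ⟨N, D, hD, hunion⟩ := exists_hasDim_iUnion (k + l + 1) R E hE0 (m + 1)
  obtain ⟨S₀, -, hS₀⟩ := hm.exists_hasDim (N + 1) (Nat.succ_pos N)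
  have hev := (Filter.eventually_all_finite (Set.finite_Iic N)).2 fun r _ => hE r S₀
  obtain ⟨T, hT⟩ := Filter.eventually_atTop.1 hev
  refine ⟨max D (|T| * Metric.diam (univ : Set Y)), fun t => ?_⟩
  by_cases ht : T ≤ t.1
  · obtain ⟨c, hc, hcgood⟩ := hS₀ t
    have hρ := (hdw t).1.isPseudo
    refine (hunion Y (dw t) (fun i => {x | x ∈ univ ∧ c x = i}) hρ fun i _ r hr => ?_).mono le_rfl
      (le_max_left _ _) fun x hx => ⟨c x, hc x hx, hx, rfl⟩
    refine HasDim.of_components hρ (R := ((N + 1 : ℕ) : ℝ)) (by exact_mod_cast (by omega))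
      (hcgood i) fun A a hA => ?_
    exact (hT t.1 ht r hr (dw t) (hdw t) A a hA).mono (by push_cast; linarith) le_rfl subset_rfl
  -- The levels below `T` have uniformly bounded diameter.
  · refine ⟨fun _ => 0, fun _ _ => Nat.succ_pos _, fun i x _ y _ => ?_⟩
    refine ((hdw t).2.1 x y).trans (le_trans ?_ (le_max_right _ _))
    have h1 : dist x y ≤ Metric.diam (univ : Set Y) :=
      Metric.dist_le_diam_of_mem (isCompact_univ.isBounded) (mem_univ x) (mem_univ y)
    have h2 : t.1 ≤ |T| := (not_le.1 ht).le.trans (le_abs_self T)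
    have h3 := t.2
    gcongr
end

section
/- Let Γ be a finitely generated group acting by homeomorphisms on a compact metrisable topological space Y. Then there exists a metric d inducing the topology of Y such that Γ acts on (Y,d) by Lipschitz homeomorphisms. Moreover, d can be chosen so that the Assouad–Nagata dimension of (Y,d) equals the Lebesgue covering dimension of Y. -/
/-!
The metric is obtained from Frink's metrization lemma applied to a well-chosen decreasing sequence
of entourages `U i` of the compact space `Y`. It makes `U i` comparable to the relation
`d x y ≲ 2 ^ (-i)`, so properties of the metric can be arranged by choosing `U (i + 1)` small
relative to `U i`:

* the action is Lipschitz as soon as each `s ∈ S` maps `U (i + 1)` into `U i`, which is possible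
  because `S` is finite and its elements act uniformly continuously;
* the Assouad–Nagata dimension is at most `n` as soon as `Y` is covered by `n + 1` sets in each of
  which `U (i + 1)`-chains have `U i`-close endpoints (`ChainSeparated`). If `Y` has covering
  dimension at most `n`, such a `U (i + 1)` exists by Ostrand's colouring argument
  (`exists_chainSeparated`): a finite small open cover of multiplicity at most `n + 1` is refined by
  open sets in `n + 1` colours, with sets of equal colour disjoint.

Conversely, for every compatible metric on a compact space the Assouad–Nagata dimension bounds the
covering dimension (`covDimLE_of_ANdimLE`): neighbourhoods of the `r`-components with `r` small give
the required refinements. Taking `n` to be the covering dimension, if finite, gives equality.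
-/

/-!
STATEMENT 16: If a finitely generated group Γ acts by homeomorphisms on a compact
metrisable space Y, then there is a compatible metric d on Y for which the action is by
Lipschitz homeomorphisms; moreover d can be chosen so that the Assouad–Nagata dimension
of (Y,d) equals the Lebesgue covering dimension of Y.
-/

open Metric Set

/-- `(Y, d)` has Assouad–Nagata dimension at most `k`: there is `c` such that for all
`r > 0` there is a cover by `k+1` sets whose `r`-components have diameter at most
`c·r`. -/
def ANdimLE {Y : Type*} (d : Y → Y → ℝ) (k : ℕ) : Prop :=
  ∃ c : ℝ, 0 < c ∧ ∀ r : ℝ, 0 < r → ∃ U : Fin (k + 1) → Set Y,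
    (∀ y : Y, ∃ j, y ∈ U j) ∧
    ∀ j, ∀ a ∈ U j, ∀ b ∈ U j, RConn d r (U j) a b → d a b ≤ c * r

/-- The Lebesgue covering dimension of `Y` is at most `k`: every open cover admits an
open refinement in which every point lies in at most `k+1` sets. -/
def CovDimLE (Y : Type*) [TopologicalSpace Y] (k : ℕ) : Prop :=
  ∀ 𝒰 : Set (Set Y), (∀ u ∈ 𝒰, IsOpen u) → (⋃₀ 𝒰 = Set.univ) →
    ∃ 𝒱 : Set (Set Y), (∀ v ∈ 𝒱, IsOpen v) ∧ (⋃₀ 𝒱 = Set.univ) ∧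
      (∀ v ∈ 𝒱, ∃ u ∈ 𝒰, v ⊆ u) ∧
      ∀ y : Y, ∃ T : Finset (Set Y), (↑T : Set (Set Y)) ⊆ 𝒱 ∧ T.card ≤ k + 1 ∧
        ∀ v ∈ 𝒱, y ∈ v → v ∈ T

open scoped Uniformity Topology

/-- A set of pairs `W` is fine enough relative to `V` when `Y` is covered by `n + 1` sets in each of
which the endpoints of any `W`-chain are `V`-close. -/
def ChainSeparated {Y : Type*} (n : ℕ) (V W : Set (Y × Y)) : Prop :=
  ∃ U : Fin (n + 1) → Set Y, (∀ y, ∃ j, y ∈ U j) ∧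
    ∀ j a b, Relation.ReflTransGen (fun a b => a ∈ U j ∧ b ∈ U j ∧ (a, b) ∈ W) a b →
      a ∈ U j → (a, b) ∈ V

lemma ChainSeparated.mono {Y : Type*} {n : ℕ} {V W W' : Set (Y × Y)}
    (h : ChainSeparated n V W) (hW : W' ⊆ W) : ChainSeparated n V W' := by
  obtain ⟨U, hc, hU⟩ := h
  refine ⟨U, hc, fun j a b hab ha => hU j a b ?_ ha⟩
  exact Relation.ReflTransGen.mono (fun x y h => ⟨h.1, h.2.1, hW h.2.2⟩) _ _ hab

lemma RConn.symm' {Y : Type*} {d : Y → Y → ℝ} (hd : ∀ y y', d y y' = d y' y) {r : ℝ} {U : Set Y}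
    {a b : Y} (h : RConn d r U a b) : RConn d r U b a := by
  have : Std.Symm fun a b => a ∈ U ∧ b ∈ U ∧ d a b < r :=
    ⟨fun x y hxy => ⟨hxy.2.1, hxy.1, by rw [hd]; exact hxy.2.2⟩⟩
  exact Std.Symm.symm (r := Relation.ReflTransGen _) _ _ h

lemma ANdimLE.mono {Y : Type*} {d : Y → Y → ℝ} {n k : ℕ} (hnk : n ≤ k) (h : ANdimLE d n) :
    ANdimLE d k := by
  obtain ⟨c, hc, h⟩ := h
  refine ⟨c, hc, fun r hr => ?_⟩
  obtain ⟨U, hU, hU'⟩ := h r hr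
  refine ⟨fun j => if hj : (j : ℕ) < n + 1 then U ⟨j, hj⟩ else ∅, fun y => ?_, fun j => ?_⟩
  · obtain ⟨j, hj⟩ := hU y
    exact ⟨⟨j, by omega⟩, by simpa [j.2] using hj⟩
  · by_cases hj : (j : ℕ) < n + 1
    · simp only [hj, dif_pos]
      exact hU' _
    · simp [hj]

/-- The `r / 2`-neighbourhoods of the `r`-components of one colour are pairwise disjoint, so for
small `r` they form, over all colours, a refinement of multiplicity at most `k + 1`. -/
lemma covDimLE_of_ANdimLE {Y : Type*} [TopologicalSpace Y] [CompactSpace Y] {d : Y → Y → ℝ}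
    (hd : IsMetricOn d)
    (htop : ∀ u : Set Y, IsOpen u ↔ ∀ y ∈ u, ∃ ε : ℝ, 0 < ε ∧ ∀ y', d y y' < ε → y' ∈ u)
    {k : ℕ} (h : ANdimLE d k) : CovDimLE Y k := by
  classical
  obtain ⟨h0, -, hsymm, htri⟩ := hd
  let : PseudoMetricSpace Y := PseudoMetricSpace.ofDistTopology d h0 hsymm htri htop
  have hdist : ∀ x y : Y, dist x y = d x y := fun _ _ => rfl
  intro 𝒰 hopen hcov
  obtain ⟨δ, hδ, hL⟩ := lebesgue_number_lemma_of_metric_sUnion (isCompact_univ (X := Y)) hopen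
    hcov.ge
  obtain ⟨c, hc, hAN⟩ := h
  have hr : 0 < δ / (c + 1) := by positivity
  set r := δ / (c + 1) with hrdef
  have hrδ : c * r + r = δ := by rw [hrdef]; field_simp
  obtain ⟨U, hU, hUr⟩ := hAN r hr
  let G : Fin (k + 1) → Y → Set Y := fun j a => ⋃ b ∈ {b | RConn d r (U j) a b}, ball b (r / 2)
  have hmemG : ∀ {j a y}, y ∈ G j a ↔ ∃ b, RConn d r (U j) a b ∧ d y b < r / 2 := by
    intro j a y
    simp [G, hdist]
  have hmemU : ∀ {j a b}, a ∈ U j → RConn d r (U j) a b → b ∈ U j := by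
    intro j a b ha hab
    induction hab with
    | refl => exact ha
    | tail _ h _ => exact h.2.1
  have hGsub : ∀ {j a a'}, RConn d r (U j) a a' → G j a' ⊆ G j a := by
    intro j a a' haa' y hy
    obtain ⟨b, hb, hyb⟩ := hmemG.1 hy
    exact hmemG.2 ⟨b, haa'.trans hb, hyb⟩
  have hGeq : ∀ {j a a' y}, a ∈ U j → a' ∈ U j → y ∈ G j a → y ∈ G j a' → G j a = G j a' := by
    intro j a a' y ha ha' hy hy'
    obtain ⟨b, hb, hyb⟩ := hmemG.1 hy
    obtain ⟨b', hb', hyb'⟩ := hmemG.1 hy'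
    have hbb' : d b b' < r := by
      have := htri b y b'
      rw [hsymm b y] at this
      linarith
    have hconn : RConn d r (U j) a a' :=
      (hb.tail ⟨hmemU ha hb, hmemU ha' hb', hbb'⟩).trans (hb'.symm' hsymm)
    exact (hGsub (hconn.symm' hsymm)).antisymm (hGsub hconn)
  refine ⟨{v | ∃ j, ∃ a ∈ U j, v = G j a}, ?_, ?_, ?_, ?_⟩
  · rintro v ⟨j, a, -, rfl⟩
    exact isOpen_biUnion fun _ _ => isOpen_ball
  · refine Set.eq_univ_of_forall fun y => ?_
    obtain ⟨j, hj⟩ := hU y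
    exact ⟨G j y, ⟨j, y, hj, rfl⟩, hmemG.2 ⟨y, Relation.ReflTransGen.refl, by rw [h0]; positivity⟩⟩
  · rintro v ⟨j, a, ha, rfl⟩
    obtain ⟨u, hu, hau⟩ := hL a (mem_univ a)
    refine ⟨u, hu, fun y hy => hau ?_⟩
    obtain ⟨b, hb, hyb⟩ := hmemG.1 hy
    have h1 := hUr j a ha b (hmemU ha hb) hb
    have h2 := htri y b a
    rw [hsymm b a] at h2
    rw [mem_ball, hdist]
    linarith
  · intro y
    let f : Fin (k + 1) → Set Y := fun j =>
      if h : ∃ a ∈ U j, y ∈ G j a then G j h.choose else ∅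
    refine ⟨(Finset.univ.filter fun j => ∃ a ∈ U j, y ∈ G j a).image f, ?_, ?_, ?_⟩
    · intro v hv
      simp only [Finset.coe_image, Finset.coe_filter, Finset.mem_univ, true_and, Set.mem_image,
        Set.mem_ofPred_eq] at hv
      obtain ⟨j, hj, rfl⟩ := hv
      exact ⟨j, hj.choose, hj.choose_spec.1, by simp only [f, dif_pos hj]⟩
    · refine Finset.card_image_le.trans ((Finset.card_filter_le _ _).trans ?_)
      simp
    · rintro v ⟨j, a, ha, rfl⟩ hy
      have hj : ∃ a ∈ U j, y ∈ G j a := ⟨a, ha, hy⟩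
      refine Finset.mem_image.2 ⟨j, by simpa using hj, ?_⟩
      simp only [f, dif_pos hj]
      exact hGeq hj.choose_spec.1 ha hj.choose_spec.2 hy

/-- Take a finite cover by small open sets `A` of multiplicity at most `n + 1`, with weights
`φ a` positive exactly on `a`. The points at which every weight from `σ` beats every weight outside
`σ` form an open set `F σ`. For distinct `σ`, `τ` of equal cardinality `F σ` and `F τ` are disjoint,
and the `F σ` with `1 ≤ |σ| ≤ n + 1` cover: at each point use the `σ` of maximal weights. Shrinking
by a Lebesgue entourage makes the sets of one colour `|σ|` uniformly separated. -/
lemma exists_chainSeparated {Y : Type*} [MetricSpace Y] [CompactSpace Y] {n : ℕ}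
    (hn : CovDimLE Y n) {V : Set (Y × Y)} (hV : V ∈ 𝓤 Y) :
    ∃ W ∈ 𝓤 Y, ChainSeparated n V W := by
  classical
  obtain ⟨ε, hε, hεV⟩ := Metric.mem_uniformity_dist.1 hV
  obtain ⟨𝒱, hopen, hcov, href, hmult⟩ := hn (Set.range fun y : Y => ball y (ε / 2))
    (by rintro _ ⟨y, rfl⟩; exact isOpen_ball)
    (Set.eq_univ_of_forall fun y => ⟨_, ⟨y, rfl⟩, mem_ball_self (by positivity)⟩)
  obtain ⟨A, hA𝒱, hAcov⟩ : ∃ A : Finset (Set Y), (A : Set (Set Y)) ⊆ 𝒱 ∧ ∀ y, ∃ a ∈ A, y ∈ a := by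
    obtain ⟨T, hT, hTf, hTc⟩ := (isCompact_univ (X := Y)).elim_finite_subcover_image
      (c := id) hopen (by rw [← hcov, sUnion_eq_biUnion]; rfl)
    exact ⟨hTf.toFinset, by simpa using hT, fun y => by simpa using hTc (mem_univ y)⟩
  let φ : Set Y → Y → ENNReal := fun a y => infEDist y aᶜ
  have hφc : ∀ a, Continuous (φ a) := fun a => continuous_infEDist
  have hφ0 : ∀ a ∈ A, ∀ y, 0 < φ a y ↔ y ∈ a := by
    intro a ha y
    rw [infEDist_pos_iff_notMem_closure, (hopen a (hA𝒱 ha)).isClosed_compl.closure_eq]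
    simp
  let F : Finset (Set Y) → Set Y := fun σ =>
    ⋂ a ∈ σ, ({y | 0 < φ a y} ∩ ⋂ b ∈ A \ σ, {y | φ b y < φ a y})
  have hFmem : ∀ {σ y}, y ∈ F σ ↔
      ∀ a ∈ σ, 0 < φ a y ∧ ∀ b ∈ A, b ∉ σ → φ b y < φ a y := by
    intro σ y
    simp [F]
  have hFopen : ∀ σ, IsOpen (F σ) := fun σ =>
    isOpen_biInter_finset fun a _ => (isOpen_lt continuous_const (hφc a)).inter
      (isOpen_biInter_finset fun b _ => isOpen_lt (hφc b) (hφc a))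
  have hFdisj : ∀ {σ τ y}, σ ⊆ A → τ ⊆ A → σ.card = τ.card → y ∈ F σ → y ∈ F τ → σ = τ := by
    intro σ τ y hσ hτ hcard hyσ hyτ
    by_contra hne
    obtain ⟨a, haσ, haτ⟩ := Finset.not_subset.1
      (fun h : σ ⊆ τ => hne (Finset.eq_of_subset_of_card_le h hcard.ge))
    obtain ⟨b, hbτ, hbσ⟩ := Finset.not_subset.1
      (fun h : τ ⊆ σ => hne (Finset.eq_of_subset_of_card_le h hcard.le).symm)
    exact lt_asymm ((hFmem.1 hyσ a haσ).2 b (hτ hbτ) hbσ) ((hFmem.1 hyτ b hbτ).2 a (hσ haσ) haτ)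
  let I := {σ : Finset (Set Y) // σ ⊆ A ∧ σ.Nonempty ∧ σ.card ≤ n + 1}
  have hFcov : (univ : Set Y) ⊆ ⋃ σ : I, F σ.1 := by
    intro y _
    obtain ⟨a₀, ha₀, hya₀⟩ := hAcov y
    obtain ⟨m, hm, hmax⟩ := A.exists_max_image (fun a => φ a y) ⟨a₀, ha₀⟩
    have hpos : 0 < φ m y := ((hφ0 a₀ ha₀ y).2 hya₀).trans_le (hmax a₀ ha₀)
    obtain ⟨T, -, hTcard, hT⟩ := hmult y
    refine Set.mem_iUnion.2 ⟨⟨A.filter fun a => φ a y = φ m y, Finset.filter_subset _ _,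
      ⟨m, by simp [hm]⟩, (Finset.card_le_card fun a ha => ?_).trans hTcard⟩, ?_⟩
    · obtain ⟨haA, ha⟩ := Finset.mem_filter.1 ha
      exact hT a (hA𝒱 haA) ((hφ0 a haA y).1 (ha ▸ hpos))
    · refine hFmem.2 fun a ha => ?_
      obtain ⟨haA, ha⟩ := Finset.mem_filter.1 ha
      refine ⟨ha ▸ hpos, fun b hb hbσ => ?_⟩
      rw [ha]
      exact (hmax b hb).lt_of_ne fun h => hbσ (Finset.mem_filter.2 ⟨hb, h⟩)
  obtain ⟨W, hW, hWF⟩ := lebesgue_number_lemma (isCompact_univ (X := Y))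
    (fun σ : I => hFopen σ.1) hFcov
  let K : I → Set Y := fun σ => {y | UniformSpace.ball y W ⊆ F σ.1}
  have hself : ∀ y : Y, y ∈ UniformSpace.ball y W := fun y => UniformSpace.mem_ball_self y hW
  refine ⟨W, hW, fun j => {y | ∃ σ : I, σ.1.card = j + 1 ∧ y ∈ K σ}, fun y => ?_, ?_⟩
  · obtain ⟨σ, hσ⟩ := hWF y (mem_univ y)
    have h1 := σ.2.2.1.card_pos
    have h2 := σ.2.2.2
    exact ⟨⟨σ.1.card - 1, by omega⟩, σ, by simp; omega, hσ⟩
  · rintro j a b hab ⟨σ, hσj, haσ⟩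
    have hbσ : b ∈ K σ := by
      induction hab with
      | refl => exact haσ
      | @tail b c _ h ih =>
        obtain ⟨-, ⟨τ, hτj, hcτ⟩, hbc⟩ := h
        -- `c` lies in both `F σ` (being `W`-close to `b`) and `F τ`.
        have : σ.1 = τ.1 := hFdisj σ.2.1 τ.2.1 (hσj.trans hτj.symm) (ih hbc) (hcτ (hself c))
        rwa [Subtype.ext this]
    obtain ⟨v, hv⟩ := σ.2.2.1
    have hvA := σ.2.1 hv
    have hmem : ∀ {y}, y ∈ K σ → y ∈ v := fun {y} hy =>
      (hφ0 v hvA y).1 (hFmem.1 (hy (hself y)) v hv).1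
    obtain ⟨_, ⟨x, rfl⟩, hx⟩ := href v (hA𝒱 hvA)
    have h1 := mem_ball.1 (hx (hmem haσ))
    have h2 := mem_ball'.1 (hx (hmem hbσ))
    exact hεV ((dist_triangle a x b).trans_lt (by linarith))

/-- Frink's metrization lemma in a form that keeps track of scales: the relation `U n` lies between
the relations `d < 2 ^ (-(n + 1))` and `d < 2 ^ (-n)`. -/
lemma exists_metric_of_entourages {Y : Type*} {U : ℕ → Set (Y × Y)}
    (hrefl : ∀ n x, (x, x) ∈ U n) (hsep : ∀ x y, (∀ n, (x, y) ∈ U n) → x = y)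
    (hsymm : ∀ n x y, (x, y) ∈ U n → (y, x) ∈ U n)
    (hcomp : ∀ n a b c e, (a, b) ∈ U (n + 1) → (b, c) ∈ U (n + 1) → (c, e) ∈ U (n + 1) →
      (a, e) ∈ U n) :
    ∃ d : Y → Y → ℝ, IsMetricOn d ∧ (∀ x y, d x y ≤ 1) ∧
      (∀ n x y, d x y < (1 / 2) ^ (n + 1) → (x, y) ∈ U n) ∧
      (∀ n x y, (x, y) ∈ U n → d x y < (1 / 2) ^ n) := by
  classical
  have hanti : Antitone U := antitone_nat_of_succ_le fun n p hp =>
    hcomp n p.1 p.1 p.1 p.2 (hrefl _ _) (hrefl _ _) hp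
  -- `2 ^ (-m)` with `m` the first index whose entourage separates the points; the metric is the
  -- largest pseudometric below `ρ`.
  let ρ : Y → Y → NNReal := fun x y => if h : ∃ n, (x, y) ∉ U n then (1 / 2) ^ Nat.find h else 0
  have hr : (1 / 2 : NNReal) ∈ Ioo (0 : NNReal) 1 :=
    ⟨half_pos one_pos, NNReal.half_lt_self one_ne_zero⟩
  have hself : ∀ x, ρ x x = 0 := fun x => by simp [ρ, hrefl]
  have hρ_symm : ∀ x y, ρ x y = ρ y x := by
    intro x y
    have : ∀ n, (x, y) ∈ U n ↔ (y, x) ∈ U n := fun n => ⟨hsymm n x y, hsymm n y x⟩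
    simp only [ρ, this]
  have hle : ∀ {x y : Y} {n : ℕ}, (1 / 2) ^ n ≤ ρ x y ↔ (x, y) ∉ U n := by
    intro x y n
    dsimp only [ρ]
    split_ifs with h
    · rw [(pow_right_strictAnti₀ hr.1 hr.2).le_iff_ge, Nat.find_le_iff]
      exact ⟨fun ⟨m, hmn, hm⟩ hn => hm (hanti hmn hn), fun h => ⟨n, le_rfl, h⟩⟩
    · push Not at h
      simp only [h, not_true, (pow_pos hr.1 _).not_ge]
  have hlt : ∀ {x y : Y} {n : ℕ}, (ρ x y : ℝ) < (1 / 2) ^ n ↔ (x, y) ∈ U n := by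
    intro x y n
    rw [← not_iff_not, ← hle (x := x), not_lt, ← NNReal.coe_le_coe]
    simp
  let _ : PseudoMetricSpace Y := PseudoMetricSpace.ofPreNNDist ρ hself hρ_symm
  have hd1 : ∀ x y : Y, dist x y ≤ ρ x y := PseudoMetricSpace.dist_ofPreNNDist_le _ _ _
  have hd2 : ∀ x y : Y, (ρ x y : ℝ) ≤ 2 * dist x y := by
    refine PseudoMetricSpace.le_two_mul_dist_ofPreNNDist _ _ _ fun x₁ x₂ x₃ x₄ => ?_
    by_cases H : ∃ n, (x₁, x₄) ∉ U n
    · refine (dif_pos H).trans_le ?_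
      rw [← div_le_iff₀' zero_lt_two, ← mul_one_div (_ ^ _), ← pow_succ]
      simp only [le_max_iff, hle, ← not_and_or]
      rintro ⟨h₁₂, h₂₃, h₃₄⟩
      exact Nat.find_spec H (hcomp _ _ _ _ _ h₁₂ h₂₃ h₃₄)
    · exact (dif_neg H).trans_le zero_le
  have hscale : ∀ n x y, dist x y < (1 / 2) ^ (n + 1) → (x, y) ∈ U n := by
    intro n x y h
    rw [← hlt]
    have := hd2 x y
    rw [pow_succ] at h
    linarith
  refine ⟨fun x y => dist x y, ⟨dist_self, fun x y hxy => ?_, dist_comm, dist_triangle⟩,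
    fun x y => (hd1 x y).trans ?_, hscale, fun n x y h => (hd1 x y).trans_lt (hlt.2 h)⟩
  · by_contra hpos
    refine hxy (hsep x y fun n => hscale n x y (lt_of_le_of_lt (not_lt.1 hpos) (by positivity)))
  · dsimp only [ρ]
    split_ifs with h
    · exact_mod_cast pow_le_one₀ hr.1.le hr.2.le
    · simp

/-- The sequence of entourages is built recursively; all requirements on `U (i + 1)` hold for every
sufficiently small symmetric entourage. -/
lemma exists_entourages {Γ Y : Type*} [Group Γ] [MetricSpace Y] [CompactSpace Y] [MulAction Γ Y]
    {S : Set Γ} (hS : S.Finite) (hcont : ∀ γ : Γ, Continuous fun y : Y => γ • y) (n : ℕ) :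
    ∃ U : ℕ → Set (Y × Y), (∀ i, U i ∈ 𝓤 Y) ∧ (∀ V ∈ 𝓤 Y, ∃ i, U i ⊆ V) ∧
      (∀ i x y, (x, y) ∈ U i → (y, x) ∈ U i) ∧
      (∀ i a b c e, (a, b) ∈ U (i + 1) → (b, c) ∈ U (i + 1) → (c, e) ∈ U (i + 1) →
        (a, e) ∈ U i) ∧
      (∀ s ∈ S, ∀ i x y, (x, y) ∈ U (i + 1) → (s • x, s • y) ∈ U i) ∧
      (CovDimLE Y n → ∀ i, ChainSeparated n (U i) (U (i + 1))) := by
  obtain ⟨B, hB⟩ := (𝓤 Y).exists_antitone_basis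
  have step : ∀ (i : ℕ) (V : {V : Set (Y × Y) // V ∈ 𝓤 Y ∧ ∀ x y, (x, y) ∈ V → (y, x) ∈ V}),
      ∃ W : {V : Set (Y × Y) // V ∈ 𝓤 Y ∧ ∀ x y, (x, y) ∈ V → (y, x) ∈ V},
        W.1 ⊆ B i ∧
        (∀ a b c e, (a, b) ∈ W.1 → (b, c) ∈ W.1 → (c, e) ∈ W.1 → (a, e) ∈ V.1) ∧
        (∀ s ∈ S, ∀ x y, (x, y) ∈ W.1 → (s • x, s • y) ∈ V.1) ∧
        (CovDimLE Y n → ChainSeparated n V.1 W.1) := by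
    rintro i ⟨V, hV, -⟩
    obtain ⟨W₁, hW₁, -, hcomp⟩ := comp_comp_symm_mem_uniformity_sets hV
    obtain ⟨W₂, hW₂, hsep⟩ : ∃ W ∈ 𝓤 Y, CovDimLE Y n → ChainSeparated n V W := by
      by_cases h : CovDimLE Y n
      · obtain ⟨W, hW, hs⟩ := exists_chainSeparated h hV
        exact ⟨W, hW, fun _ => hs⟩
      · exact ⟨univ, Filter.univ_mem, fun h' => absurd h' h⟩
    have hW₃ : (⋂ s ∈ S, {p : Y × Y | (s • p.1, s • p.2) ∈ V}) ∈ 𝓤 Y :=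
      (Filter.biInter_mem hS).2 fun s _ =>
        CompactSpace.uniformContinuous_of_continuous (hcont s) hV
    have hN := Filter.inter_mem (Filter.inter_mem (hB.mem i) hW₁) (Filter.inter_mem hW₂ hW₃)
    obtain ⟨W, hW, hWsymm, hWN⟩ := symm_of_uniformity hN
    refine ⟨⟨W, hW, fun x y h => hWsymm.symm x y h⟩, fun p hp => (hWN hp).1.1, ?_, ?_, ?_⟩
    · intro a b c e hab hbc hce
      exact hcomp ⟨c, ⟨b, (hWN hab).1.2, (hWN hbc).1.2⟩, (hWN hce).1.2⟩
    · intro s hs x y hxy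
      exact Set.mem_iInter₂.1 (hWN hxy).2.2 s hs
    · intro h
      exact (hsep h).mono fun p hp => (hWN hp).2.1
  choose next h1 h2 h3 h4 using step
  let U : ℕ → {V : Set (Y × Y) // V ∈ 𝓤 Y ∧ ∀ x y, (x, y) ∈ V → (y, x) ∈ V} := fun i =>
    Nat.rec ⟨univ, Filter.univ_mem, fun _ _ _ => mem_univ _⟩ next i
  refine ⟨fun i => (U i).1, fun i => (U i).2.1, fun V hV => ?_, fun i => (U i).2.2,
    fun i => h2 i (U i), fun s hs i => h3 i (U i) s hs, fun h i => h4 i (U i) h⟩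
  obtain ⟨i, hi⟩ := hB.mem_iff.1 hV
  exact ⟨i + 1, (h1 i (U i)).trans hi⟩

theorem exists_compatible_metric_with_Lipschitz_action_and_AN_dimension
    {Γ Y : Type} [Group Γ] [TopologicalSpace Y] [CompactSpace Y]
    [TopologicalSpace.MetrizableSpace Y] [MulAction Γ Y]
    (S : Set Γ) (hS : IsFinSymmGen S)
    (hcont : ∀ γ : Γ, Continuous fun y : Y => γ • y) :
    ∃ d : Y → Y → ℝ, IsMetricOn d ∧
      -- d induces the topology of Y
      (∀ u : Set Y, IsOpen u ↔
        ∀ y ∈ u, ∃ ε : ℝ, 0 < ε ∧ ∀ y', d y y' < ε → y' ∈ u) ∧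
      -- Γ acts on (Y,d) by Lipschitz homeomorphisms
      (∀ γ : Γ, ∃ L : ℝ, 0 ≤ L ∧ ∀ y y', d (γ • y) (γ • y') ≤ L * d y y') ∧
      -- and the Assouad–Nagata dimension of (Y,d) equals the covering dimension of Y
      (∀ k : ℕ, ANdimLE d k ↔ CovDimLE Y k) := by
  classical
  let : MetricSpace Y := TopologicalSpace.metrizableSpaceMetric Y
  -- `n` is the covering dimension of `Y` when that is finite; otherwise its value is irrelevant.
  obtain ⟨n, hn⟩ : ∃ n : ℕ, ∀ k, CovDimLE Y k → n ≤ k ∧ CovDimLE Y n := by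
    by_cases h : ∃ k, CovDimLE Y k
    · exact ⟨Nat.find h, fun k hk => ⟨Nat.find_le hk, Nat.find_spec h⟩⟩
    · exact ⟨0, fun k hk => absurd ⟨k, hk⟩ h⟩
  obtain ⟨U, hmem, hbasis, hsymm, hcomp, hact, hsep⟩ := exists_entourages hS.1 hcont n
  obtain ⟨d, hd, hd1, hdU, hUd⟩ := exists_metric_of_entourages
    (fun i x => refl_mem_uniformity (hmem i))
    (fun x y h => eq_of_uniformity fun {V} hV => by
      obtain ⟨i, hi⟩ := hbasis V hV
      exact hi (h i)) hsymm hcomp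
  have htop : ∀ u : Set Y, IsOpen u ↔ ∀ y ∈ u, ∃ ε : ℝ, 0 < ε ∧ ∀ y', d y y' < ε → y' ∈ u := by
    intro u
    rw [isOpen_iff_ball_subset]
    refine forall₂_congr fun y _ => ⟨?_, ?_⟩
    · rintro ⟨V, hV, hVu⟩
      obtain ⟨i, hi⟩ := hbasis V hV
      exact ⟨(1 / 2) ^ (i + 1), by positivity, fun y' hy' => hVu (hi (hdU i y y' hy'))⟩
    · rintro ⟨ε, hε, hu⟩
      obtain ⟨i, hi⟩ := exists_pow_lt_of_lt_one hε (by norm_num : (1 / 2 : ℝ) < 1)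
      exact ⟨U i, hmem i, fun y' hy' => hu y' ((hUd i y y' hy').trans hi)⟩
  have hLipS : ∀ s ∈ S, ∀ y y', d (s • y) (s • y') ≤ 16 * d y y' := by
    intro s hs y y'
    rcases eq_or_ne y y' with rfl | hne
    · simp [hd.1]
    have hpos := hd.2.1 y y' hne
    rcases le_or_gt (8 * d y y') 1 with h | h
    · obtain ⟨i, hi1, hi2⟩ := exists_nat_pow_near_of_lt_one (by positivity) h
        (by norm_num : (0 : ℝ) < 1 / 2) (by norm_num)
      have hi3 := hUd i _ _ (hact s hs i y y' (hdU (i + 1) y y' (by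
        have : (0 : ℝ) < (1 / 2) ^ i := by positivity
        rw [pow_succ, pow_succ]
        linarith)))
      rw [pow_succ] at hi1
      linarith
    · linarith [hd1 (s • y) (s • y')]
  have hLip : ∀ γ : Γ, ∃ L : ℝ, 0 ≤ L ∧ ∀ y y', d (γ • y) (γ • y') ≤ L * d y y' := by
    intro γ
    have hγ : γ ∈ Subgroup.closure S := by rw [hS.2.2]; trivial
    induction hγ using Subgroup.closure_induction'' with
    | mem s hs => exact ⟨16, by norm_num, hLipS s hs⟩
    | inv_mem s hs => exact ⟨16, by norm_num, hLipS _ (hS.2.1 s hs)⟩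
    | one => exact ⟨1, by norm_num, fun y y' => by simp⟩
    | mul a b _ _ iha ihb =>
      obtain ⟨L, hL, ha⟩ := iha
      obtain ⟨M, hM, hb⟩ := ihb
      refine ⟨L * M, by positivity, fun y y' => ?_⟩
      rw [mul_smul, mul_smul, mul_assoc]
      exact (ha _ _).trans (mul_le_mul_of_nonneg_left (hb y y') hL)
  have hAN : CovDimLE Y n → ANdimLE d n := by
    intro h
    refine ⟨8, by norm_num, fun r hr => ?_⟩
    rcases le_or_gt (4 * r) 1 with hr1 | hr1
    · obtain ⟨i, hi1, hi2⟩ := exists_nat_pow_near_of_lt_one (by positivity) hr1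
        (by norm_num : (0 : ℝ) < 1 / 2) (by norm_num)
      obtain ⟨C, hC, hC'⟩ := hsep h i
      -- As `r ≤ 2 ^ (-(i + 2))`, every `r`-chain is a `U (i + 1)`-chain.
      refine ⟨C, hC, fun j a ha b _ hab => ?_⟩
      have hab' := hUd i a b (hC' j a b (Relation.ReflTransGen.mono (fun x y hxy =>
        ⟨hxy.1, hxy.2.1, hdU (i + 1) x y (by
          have := hxy.2.2
          rw [pow_succ, pow_succ] at *
          linarith)⟩) _ _ hab) ha)
      rw [pow_succ] at hi1
      linarith
    · exact ⟨fun _ => univ, fun y => ⟨0, mem_univ y⟩, fun _ a _ b _ _ => by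
        linarith [hd1 a b]⟩
  exact ⟨d, hd, htop, hLip, fun k => ⟨covDimLE_of_ANdimLE hd htop,
    fun hk => (hAN (hn k hk).2).mono (hn k hk).1⟩⟩
end

section
/- Let α ∈ (0,1) and let ℤ act on the circle T¹ = ℝ/ℤ by rotations by α (n·z = z + nα mod 1), an isometric action for the standard quotient metric d on ℝ/ℤ. Then the warped cone (tT¹, d_ℤ)_{t>0} is quasi-isometric, as a family of metric spaces, to the family of scaled flat 2-tori (T², τ·d)_{τ>0} (where T² = ℝ²/ℤ² with a fixed flat metric d) if and only if α is a restricted irrational number. -/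
/-!
The level `t` of the warped cone is coarsely the flat torus `ℝ² / Λ_t`, where `Λ_t` is the lattice
of all `(n, t (m - n α))` with `m n : ℤ`; it has covolume `t`.

If `α` is badly approximable, then for `t ≥ 1` the lattice `Λ_t` has a basis
`(nᵢ, t (mᵢ - nᵢ α))`, `i = 1, 2`, of vectors of length `O(√t)`: the first one comes from
Dirichlet's theorem, the second is its Bézout complement (`exists_reduced_basis`). In the
coordinates of this basis the inclusion of the circle `{0} × ℝ / tℤ` becomes, up to a sign, the
homomorphism `x ↦ (n₂ x, n₁ x)` from `T¹` to `T²`, and this is a quasi-isometry onto the torus of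
scale `√t` with constants independent of `t` (`isQIWith_of_basis`). For `t ≤ 1` both spaces are
uniformly bounded.

Conversely, suppose the families are quasi-isometric and level `t` corresponds to the torus of
scale `τ`. That torus contains about `τ²` points that are pairwise far apart, whereas a circle of
length `t` contains only `O(t)` points at mutual distance at least `1`; hence `τ = O(√t)`
(`scale_le`). On the other hand, if `|q α - p| ≤ q / t`, then the ball of radius `R` in the warped
metric is covered by `q` short arcs, and comparing lengths shows that the diameter of the level is
at least of order `t / q` (`exists_far_point`). The diameter of the torus is of order `τ`,
so `√t = O(q)`. Choosing `t` as a large multiple of `q²` gives the lower bound on `|q α - p|`.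
-/

/-!
STATEMENT 17: For α ∈ (0,1) and the rotation action of ℤ on T¹ = ℝ/ℤ by α, the warped
cone (tT¹, d_ℤ) is quasi-isometric, as a family of metric spaces, to the family of
scaled flat 2-tori (T², τ·d) if and only if α is a restricted (= badly approximable)
irrational number.
-/

open Metric Set

/-- The unit circle ℝ/ℤ. -/
noncomputable abbrev T1 : Type := AddCircle (1 : ℝ)

/-- The warped metric at level `t` of the warped cone over the (isometric) rotation
action of ℤ on T¹ by angle α: `d_ℤ(tz,tz') = inf_n (|n| + t·d(z+nα, z'))`. -/
noncomputable def rotWarpDist (α : ℝ) (t : ℝ) (z z' : T1) : ℝ :=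
  ⨅ n : ℤ, ((|n| : ℝ) + t * dist (z + n • ((α : T1))) z')

def IsQIWith {X Z : Type*} (dX : X → X → ℝ) (dZ : Z → Z → ℝ)
    (C A : ℝ) (f : X → Z) : Prop :=
  (∀ x x', C⁻¹ * dX x x' - A ≤ dZ (f x) (f x')) ∧
  (∀ x x', dZ (f x) (f x') ≤ C * dX x x' + A) ∧
  ∀ z, ∃ x, dZ (f x) z ≤ A

/-- Quasi-isometry of two families of metric spaces indexed by positive reals. -/
def FamQI {X Z : Type*} (dX : {t : ℝ // 0 < t} → X → X → ℝ)
    (dZ : {t : ℝ // 0 < t} → Z → Z → ℝ) : Prop :=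
  ∃ (I : Type) (p : I → {t : ℝ // 0 < t}) (q : I → {t : ℝ // 0 < t})
    (f : I → X → Z) (C A : ℝ), 1 ≤ C ∧ 0 ≤ A ∧
    Function.Surjective p ∧ Function.Surjective q ∧
    ∀ i, IsQIWith (dX (p i)) (dZ (q i)) C A (f i)

/-- α is a restricted irrational number, equivalently badly approximable: there is
`c > 0` with `|α − p/q| > c/q²` for all integers `p` and positive integers `q`. -/
def RestrictedIrrational (α : ℝ) : Prop :=
  Irrational α ∧ ∃ c : ℝ, 0 < c ∧ ∀ (p : ℤ) (q : ℕ), 0 < q →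
    c / (q : ℝ) ^ 2 < |α - (p : ℝ) / (q : ℝ)|

lemma norm_coe_le_abs (x : ℝ) : ‖(x : T1)‖ ≤ |x| := by
  rw [UnitAddCircle.norm_eq]
  simpa using round_le x 0

lemma norm_coe_le_abs_sub_int (x : ℝ) (m : ℤ) : ‖(x : T1)‖ ≤ |x - m| := by
  rw [UnitAddCircle.norm_eq]
  exact round_le x m

lemma zsmul_coe (n : ℤ) (x : ℝ) : n • (x : T1) = ((n * x : ℝ) : T1) := by
  rw [← AddCircle.coe_zsmul, zsmul_eq_mul]

lemma norm_T1_le (x : T1) : ‖x‖ ≤ 1 / 2 := by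
  simpa using AddCircle.norm_le_half_period (1 : ℝ) (x := x) one_ne_zero

lemma rotWarpDist_le {α t : ℝ} (ht : 0 ≤ t) (z z' : T1) (n : ℤ) :
    rotWarpDist α t z z' ≤ |(n : ℝ)| + t * dist (z + n • (α : T1)) z' := by
  have h : BddBelow (range fun n : ℤ => |(n : ℝ)| + t * dist (z + n • (α : T1)) z') :=
    ⟨0, by rintro _ ⟨n, rfl⟩; positivity⟩
  simpa [rotWarpDist] using ciInf_le h n

lemma le_rotWarpDist {α t b : ℝ} (z z' : T1)
    (h : ∀ n : ℤ, b ≤ |(n : ℝ)| + t * dist (z + n • (α : T1)) z') :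
    b ≤ rotWarpDist α t z z' := by
  unfold rotWarpDist
  exact le_ciInf (fun n => by simpa using h n)

/-! ### Quasi-isometry with tori for badly approximable angles -/

/-- A basis of the lattice `Λ_t` consisting of vectors of length `O(√t)`. -/
lemma exists_reduced_basis {α c : ℝ} (hc : 0 < c)
    (h : ∀ (p : ℤ) (q : ℕ), 0 < q → c / (q : ℝ) ^ 2 < |α - (p : ℝ) / (q : ℝ)|)
    {t : ℝ} (ht : 1 ≤ t) :
    ∃ n₁ m₁ n₂ m₂ : ℤ, n₁ * m₂ - n₂ * m₁ = 1 ∧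
      |(n₁ : ℝ)| ≤ (1 + 2 / c) * √t ∧ |(n₂ : ℝ)| ≤ (1 + 2 / c) * √t ∧
      √t * |m₁ - n₁ * α| ≤ 1 + 2 / c ∧ √t * |m₂ - n₂ * α| ≤ 1 + 2 / c := by
  have hs : 1 ≤ √t := Real.one_le_sqrt.mpr ht
  have hcpos : 0 < 2 / c := by positivity
  have hn : 0 < ⌊√t⌋₊ := Nat.floor_pos.mpr hs
  obtain ⟨r, hr, hrd⟩ := Real.exists_rat_abs_sub_le_and_den_le α hn
  have hd : (0 : ℝ) < r.den := by exact_mod_cast r.den_pos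
  have hdle : (r.den : ℝ) ≤ √t :=
    le_trans (by exact_mod_cast hrd) (Nat.floor_le (by positivity))
  have hcast : (r : ℝ) = (r.num : ℝ) / (r.den : ℝ) := Rat.cast_def r
  have he : |(r.num : ℝ) - r.den * α| = r.den * |α - r| := by
    rw [hcast, ← abs_of_pos hd, ← abs_mul, abs_of_pos hd, abs_sub_comm]
    congr 1
    field_simp
  have he1 : √t * |(r.num : ℝ) - r.den * α| ≤ 1 := by
    have h1 : √t < ⌊√t⌋₊ + 1 := Nat.lt_floor_add_one _
    have h2 : r.den * |α - r| ≤ 1 / ((⌊√t⌋₊ : ℝ) + 1) := by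
      calc (r.den : ℝ) * |α - r| ≤ r.den * (1 / ((⌊√t⌋₊ + 1) * r.den)) := by gcongr
        _ = _ := by field_simp
    rw [he]
    calc √t * (r.den * |α - r|) ≤ (⌊√t⌋₊ + 1) * (1 / ((⌊√t⌋₊ : ℝ) + 1)) := by gcongr
      _ = 1 := by field_simp
  -- Bad approximability bounds the denominator from below: `c √t ≤ r.den`.
  have hden : c * √t ≤ r.den := by
    have h1 := h r.num r.den r.den_pos
    rw [← hcast] at h1
    have h2 : c / r.den < |(r.num : ℝ) - r.den * α| := by
      rw [he]
      calc c / (r.den : ℝ) = r.den * (c / (r.den : ℝ) ^ 2) := by field_simp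
        _ < _ := by gcongr
    have h3 : √t * (c / r.den) ≤ 1 :=
      le_trans (mul_le_mul_of_nonneg_left h2.le (by positivity)) he1
    rw [← mul_div_assoc, div_le_one hd] at h3
    linarith
  have hcop : IsCoprime (r.den : ℤ) r.num := by
    rw [Int.isCoprime_iff_gcd_eq_one, Int.gcd_comm]
    exact r.reduced
  obtain ⟨x, y, hxy⟩ := hcop
  have hdz : (0 : ℤ) < r.den := by exact_mod_cast r.den_pos
  have hdiv := Int.mul_ediv_add_emod (-y) r.den
  have hn2 := Int.emod_nonneg (-y) hdz.ne'
  have hn2' := Int.emod_lt_of_pos (-y) hdz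
  set k := (-y) / (r.den : ℤ)
  set n₂ := (-y) % (r.den : ℤ)
  have hdet : (r.den : ℤ) * (x - r.num * k) - n₂ * r.num = 1 := by
    linear_combination hxy - r.num * hdiv
  have hn2r : |(n₂ : ℝ)| ≤ √t := by
    have h0 : (0 : ℝ) ≤ n₂ := by exact_mod_cast hn2
    have h1 : (n₂ : ℝ) ≤ r.den := by exact_mod_cast hn2'.le
    rw [abs_of_nonneg h0]
    linarith
  refine ⟨r.den, r.num, n₂, x - r.num * k, hdet, ?_, ?_, ?_, ?_⟩
  · rw [abs_of_pos (by exact_mod_cast hdz)]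
    push_cast
    nlinarith
  · nlinarith
  · push_cast
    linarith
  · have hdetR : (r.den : ℝ) * ((x - r.num * k : ℤ) : ℝ) - n₂ * r.num = 1 := by
      exact_mod_cast hdet
    set m₂ : ℝ := ((x - r.num * k : ℤ) : ℝ)
    have h1 : (r.den : ℝ) * (m₂ - n₂ * α) = 1 + n₂ * (r.num - r.den * α) := by
      linear_combination hdetR
    have h2 : (r.den : ℝ) * |m₂ - n₂ * α| ≤ 2 := by
      nth_rw 1 [← abs_of_pos hd]
      rw [← abs_mul, h1]
      calc |1 + (n₂ : ℝ) * (r.num - r.den * α)|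
          ≤ |1| + |(n₂ : ℝ) * (r.num - r.den * α)| := abs_add_le _ _
        _ ≤ 1 + √t * |r.num - r.den * α| := by
            rw [abs_one, abs_mul]
            gcongr
        _ ≤ 2 := by linarith
    have h3 : c * √t * |m₂ - n₂ * α| ≤ 2 :=
      le_trans (mul_le_mul_of_nonneg_right hden (abs_nonneg _)) h2
    have h4 : √t * |m₂ - n₂ * α| ≤ 2 / c := by
      rw [le_div_iff₀ hc]
      linarith
    linarith

/-- Upper bound for one coordinate of the homomorphism `x ↦ (n₂ x, n₁ x)`. -/
lemma coord_le {α t K : ℝ} (ht : 0 < t) (n₁ m₁ : ℤ)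
    (h1 : |(n₁ : ℝ)| ≤ K * √t) (h2 : √t * |m₁ - n₁ * α| ≤ K) (hK : 0 < K) (x x' : T1) :
    √t * dist (n₁ • x) (n₁ • x') ≤ K * rotWarpDist α t x x' := by
  rw [← div_le_iff₀' hK]
  refine le_rotWarpDist _ _ fun n => ?_
  rw [div_le_iff₀' hK, dist_eq_norm, dist_eq_norm]
  have e : n₁ • x - n₁ • x' = n₁ • (x + n • (α : T1) - x') - n • (n₁ • (α : T1)) := by
    rw [smul_comm n n₁]
    module
  have b1 : ‖n₁ • (α : T1)‖ ≤ |m₁ - n₁ * α| := by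
    rw [zsmul_coe, abs_sub_comm]
    exact norm_coe_le_abs_sub_int _ _
  have b2 : ‖n₁ • (x + n • (α : T1) - x')‖ ≤ |(n₁ : ℝ)| * ‖x + n • (α : T1) - x'‖ := by
    simpa [Int.norm_eq_abs] using norm_zsmul_le n₁ (x + n • (α : T1) - x')
  have b3 : ‖n • (n₁ • (α : T1))‖ ≤ |(n : ℝ)| * ‖n₁ • (α : T1)‖ := by
    simpa [Int.norm_eq_abs] using norm_zsmul_le n (n₁ • (α : T1))
  have hst : √t * √t = t := Real.mul_self_sqrt ht.le
  rw [e]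
  calc √t * ‖n₁ • (x + n • (α : T1) - x') - n • (n₁ • (α : T1))‖
      ≤ √t * (|(n₁ : ℝ)| * ‖x + n • (α : T1) - x'‖ + |(n : ℝ)| * ‖n₁ • (α : T1)‖) := by
        gcongr
        exact (norm_sub_le _ _).trans (add_le_add b2 b3)
    _ ≤ √t * (K * √t * ‖x + n • (α : T1) - x'‖ + |(n : ℝ)| * |m₁ - n₁ * α|) := by gcongr
    _ = K * t * ‖x + n • (α : T1) - x'‖ + |(n : ℝ)| * (√t * |m₁ - n₁ * α|) := by
        linear_combination K * ‖x + n • (α : T1) - x'‖ * hst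
    _ ≤ K * t * ‖x + n • (α : T1) - x'‖ + |(n : ℝ)| * K := by gcongr
    _ = _ := by ring

/-- A basis of `Λ_t` of vectors of length at most `K √t` gives a quasi-isometry from the level `t`
to the torus of scale `√t`, with constants depending on `K` only. -/
lemma isQIWith_of_basis {α t K : ℝ} (ht : 0 < t) (hK : 1 ≤ K) {n₁ m₁ n₂ m₂ : ℤ}
    (hdet : n₁ * m₂ - n₂ * m₁ = 1)
    (hn1 : |(n₁ : ℝ)| ≤ K * √t) (hn2 : |(n₂ : ℝ)| ≤ K * √t)
    (hm1 : √t * |m₁ - n₁ * α| ≤ K) (hm2 : √t * |m₂ - n₂ * α| ≤ K) :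
    IsQIWith (rotWarpDist α t) (fun a b : T1 × T1 => √t * dist a b) (4 * K) K
      (fun x => (n₂ • x, n₁ • x)) := by
  have hst : √t * √t = t := Real.mul_self_sqrt ht.le
  have hs : 0 < √t := Real.sqrt_pos.mpr ht
  have hdetR : (n₁ : ℝ) * m₂ - n₂ * m₁ = 1 := by exact_mod_cast hdet
  have hw : ∀ x x', 0 ≤ rotWarpDist α t x x' := fun x x' =>
    le_rotWarpDist _ _ fun n => by positivity
  refine ⟨fun x x' => ?_, fun x x' => ?_, ?_⟩
  · -- Write the lift of `x' - x` in the basis and round both coordinates.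
    suffices hmain : rotWarpDist α t x x' ≤ 4 * K * (√t * dist (n₂ • x, n₁ • x) (n₂ • x', n₁ • x')) by
      have : (4 * K)⁻¹ * rotWarpDist α t x x' ≤
          √t * dist (n₂ • x, n₁ • x) (n₂ • x', n₁ • x') := by
        rw [inv_mul_le_iff₀ (by positivity)]
        exact hmain
      show (4 * K)⁻¹ * rotWarpDist α t x x' - K ≤
          √t * dist (n₂ • x, n₁ • x) (n₂ • x', n₁ • x')
      linarith
    set ε := dist (n₂ • x, n₁ • x) (n₂ • x', n₁ • x') with hε
    have hε0 : 0 ≤ ε := dist_nonneg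
    obtain ⟨s, hsx⟩ := QuotientAddGroup.mk_surjective (x - x')
    have hsx : ((s : ℝ) : T1) = x - x' := hsx
    have d2 : |(n₂ : ℝ) * s - round ((n₂ : ℝ) * s)| ≤ ε := by
      rw [← UnitAddCircle.norm_eq, ← zsmul_coe, hsx, smul_sub, ← dist_eq_norm, hε, Prod.dist_eq]
      exact le_max_left _ _
    have d1 : |(n₁ : ℝ) * s - round ((n₁ : ℝ) * s)| ≤ ε := by
      rw [← UnitAddCircle.norm_eq, ← zsmul_coe, hsx, smul_sub, ← dist_eq_norm, hε, Prod.dist_eq]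
      exact le_max_right _ _
    set k₁ := round ((n₁ : ℝ) * s)
    set k₂ := round ((n₂ : ℝ) * s)
    have hn : |((-k₂ * n₁ + k₁ * n₂ : ℤ) : ℝ)| ≤ 2 * (ε * (K * √t)) := by
      have e : ((-k₂ * n₁ + k₁ * n₂ : ℤ) : ℝ) =
          ((n₂ : ℝ) * s - k₂) * n₁ - ((n₁ : ℝ) * s - k₁) * n₂ := by
        push_cast
        ring
      rw [e]
      refine (abs_sub _ _).trans ?_
      rw [abs_mul, abs_mul, two_mul]
      gcongr
    have hm : √t * |s - ((-k₂ * m₁ + k₁ * m₂ : ℤ) : ℝ) + ((-k₂ * n₁ + k₁ * n₂ : ℤ) : ℝ) * α|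
        ≤ 2 * (ε * K) := by
      have e : s - ((-k₂ * m₁ + k₁ * m₂ : ℤ) : ℝ) + ((-k₂ * n₁ + k₁ * n₂ : ℤ) : ℝ) * α =
          ((n₁ : ℝ) * s - k₁) * (m₂ - n₂ * α) - ((n₂ : ℝ) * s - k₂) * (m₁ - n₁ * α) := by
        push_cast
        linear_combination (-s) * hdetR
      rw [e]
      calc _ ≤ √t * (|((n₁ : ℝ) * s - k₁) * (m₂ - n₂ * α)| +
              |((n₂ : ℝ) * s - k₂) * (m₁ - n₁ * α)|) := by
            gcongr
            exact abs_sub _ _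
        _ = |(n₁ : ℝ) * s - k₁| * (√t * |m₂ - n₂ * α|) +
              |(n₂ : ℝ) * s - k₂| * (√t * |m₁ - n₁ * α|) := by
            rw [abs_mul, abs_mul]
            ring
        _ ≤ ε * K + ε * K := by gcongr
        _ = _ := by ring
    set n := -k₂ * n₁ + k₁ * n₂
    have hd : dist (x + n • (α : T1)) x' ≤
        |s - ((-k₂ * m₁ + k₁ * m₂ : ℤ) : ℝ) + (n : ℝ) * α| := by
      have e : x + n • (α : T1) - x' = ((s + n * α : ℝ) : T1) := by
        rw [zsmul_coe, AddCircle.coe_add, hsx]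
        abel
      rw [dist_eq_norm, e]
      refine (norm_coe_le_abs_sub_int _ (-k₂ * m₁ + k₁ * m₂)).trans (le_of_eq ?_)
      congr 1
      ring
    have key := rotWarpDist_le (α := α) ht.le x x' n
    have h3 : t * dist (x + n • (α : T1)) x' ≤ √t * (2 * (ε * K)) := by
      calc t * dist (x + n • (α : T1)) x' = √t * (√t * dist (x + n • (α : T1)) x') := by
            rw [← mul_assoc, hst]
        _ ≤ √t * (2 * (ε * K)) := by
            refine mul_le_mul_of_nonneg_left (le_trans ?_ hm) hs.le
            exact mul_le_mul_of_nonneg_left hd hs.le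
    linarith
  · show √t * dist (n₂ • x, n₁ • x) (n₂ • x', n₁ • x') ≤ _
    have h := hw x x'
    have c1 := coord_le (α := α) ht n₁ m₁ hn1 hm1 (by linarith) x x'
    have c2 := coord_le (α := α) ht n₂ m₂ hn2 hm2 (by linarith) x x'
    have hKw : 0 ≤ K * rotWarpDist α t x x' := by positivity
    rw [Prod.dist_eq, mul_max_of_nonneg _ _ hs.le]
    apply max_le <;> simp only <;> linarith
  · rintro ⟨u, v⟩
    obtain ⟨u, rfl⟩ := QuotientAddGroup.mk_surjective u
    obtain ⟨v, rfl⟩ := QuotientAddGroup.mk_surjective v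
    -- Translate by a lattice vector so that the first coordinate `θ` lies in `[0, 1)`, then
    -- project to the circle `{0} × ℝ / tℤ`.
    set X : ℝ := u * n₁ - v * n₂ with hX
    set n := ⌊X⌋
    set θ : ℝ := X - n with hθdef
    have hθ : |θ| ≤ 1 := by
      rw [abs_of_nonneg (sub_nonneg.mpr (Int.floor_le X))]
      linarith [Int.lt_floor_add_one X]
    set x : ℝ := m₂ * (v - n * m₁) - m₁ * (u - n * m₂) + α * θ with hx
    have bound : ∀ e : ℝ, √t * |e| ≤ K → √t * |θ * e| ≤ K := fun e he => by
      rw [abs_mul]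
      nlinarith [mul_nonneg hs.le (abs_nonneg e)]
    have e2 : dist (n₂ • (x : T1)) (u : T1) ≤ |θ * (m₂ - n₂ * α)| := by
      rw [dist_eq_norm, zsmul_coe, ← AddCircle.coe_sub]
      refine (norm_coe_le_abs_sub_int _ (-(n * m₂))).trans (le_of_eq ?_)
      rw [← abs_neg]
      congr 1
      push_cast
      rw [hx, hθdef, hX]
      linear_combination -u * hdetR
    have e1 : dist (n₁ • (x : T1)) (v : T1) ≤ |θ * (m₁ - n₁ * α)| := by
      rw [dist_eq_norm, zsmul_coe, ← AddCircle.coe_sub]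
      refine (norm_coe_le_abs_sub_int _ (-(n * m₁))).trans (le_of_eq ?_)
      rw [← abs_neg]
      congr 1
      push_cast
      rw [hx, hθdef, hX]
      linear_combination -v * hdetR
    refine ⟨(x : T1), ?_⟩
    show √t * dist (n₂ • (x : T1), n₁ • (x : T1)) ((u : T1), (v : T1)) ≤ K
    rw [Prod.dist_eq, mul_max_of_nonneg _ _ hs.le]
    exact max_le ((mul_le_mul_of_nonneg_left e2 hs.le).trans (bound _ hm2))
      ((mul_le_mul_of_nonneg_left e1 hs.le).trans (bound _ hm1))

lemma famQI_of_restricted {α : ℝ} (h : RestrictedIrrational α) :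
    FamQI (fun t => rotWarpDist α t.1) (fun τ (a b : T1 × T1) => τ.1 * dist a b) := by
  obtain ⟨-, c, hc, h⟩ := h
  have hcpos : 0 < 2 / c := by positivity
  have key : ∀ t : {t : ℝ // 0 < t}, ∃ f : T1 → T1 × T1,
      IsQIWith (rotWarpDist α t.1) (fun a b : T1 × T1 => √t.1 * dist a b)
        (4 * (1 + 2 / c)) (1 + 2 / c) f := by
    rintro ⟨t, ht⟩
    rcases le_total 1 t with h1 | h1
    · obtain ⟨n₁, m₁, n₂, m₂, hdet, a1, a2, a3, a4⟩ := exists_reduced_basis hc h h1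
      exact ⟨_, isQIWith_of_basis ht (by linarith) hdet a1 a2 a3 a4⟩
    · -- Both spaces have diameter at most `1 / 2`, so any map will do.
      refine ⟨fun _ => 0, fun x x' => ?_, fun x x' => ?_, fun z => ⟨0, ?_⟩⟩
      · have b1 : rotWarpDist α t x x' ≤ 1 := by
          have b := rotWarpDist_le (α := α) ht.le x x' 0
          have b' : dist x x' ≤ 1 / 2 := by
            rw [dist_eq_norm]
            exact norm_T1_le _
          simp only [Int.cast_zero, abs_zero, zero_smul, add_zero, zero_add] at b
          nlinarith [dist_nonneg (x := x) (y := x')]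
        have b2 : (4 * (1 + 2 / c))⁻¹ * rotWarpDist α t x x' ≤ 1 + 2 / c := by
          rw [inv_mul_le_iff₀ (by positivity)]
          nlinarith
        simp only [dist_self, mul_zero]
        linarith
      · have : 0 ≤ rotWarpDist α t x x' := le_rotWarpDist _ _ fun n => by positivity
        simp only [dist_self, mul_zero]
        positivity
      · have b : dist (0 : T1 × T1) z ≤ 1 / 2 := by
          rw [Prod.dist_eq, dist_eq_norm, dist_eq_norm]
          exact max_le (norm_T1_le _) (norm_T1_le _)
        have b' : √t ≤ 1 := Real.sqrt_le_one.mpr h1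
        show √t * dist (0 : T1 × T1) z ≤ 1 + 2 / c
        nlinarith [dist_nonneg (x := (0 : T1 × T1)) (y := z), Real.sqrt_nonneg t]
  choose f hf using key
  refine ⟨{t : ℝ // 0 < t}, id, fun t => ⟨√t.1, Real.sqrt_pos.mpr t.2⟩, f,
    4 * (1 + 2 / c), 1 + 2 / c, by linarith, by linarith, Function.surjective_id, ?_, hf⟩
  rintro ⟨τ, hτ⟩
  exact ⟨⟨τ ^ 2, by positivity⟩, Subtype.ext (Real.sqrt_sq hτ.le)⟩

/-! ### Angles whose warped cone is quasi-isometric to tori -/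

/-- Among more than `M` points of the circle two are at distance less than `1 / M`. -/
lemma card_le_of_separated {ι : Type*} [Fintype ι] (g : ι → T1) {M : ℕ} (hM : 0 < M)
    (hg : ∀ i j, i ≠ j → 1 / (M : ℝ) ≤ dist (g i) (g j)) : Fintype.card ι ≤ M := by
  have hMR : (0 : ℝ) < M := by exact_mod_cast hM
  have lift : ∀ i, ∃ y : ℝ, 0 ≤ y ∧ y < 1 ∧ (y : T1) = g i := fun i => by
    have hmem := (AddCircle.equivIco (1 : ℝ) 0 (g i)).2
    refine ⟨_, hmem.1, by simpa using hmem.2, (AddCircle.equivIco (1 : ℝ) 0).symm_apply_apply (g i)⟩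
  choose y hy0 hy1 hyg using lift
  by_contra hlt
  push Not at hlt
  obtain ⟨i, j, hij, hb⟩ := Fintype.exists_ne_map_eq_of_card_lt
    (fun i => (⟨⌊M * y i⌋₊, by
      rw [Nat.floor_lt (mul_nonneg hMR.le (hy0 i))]
      nlinarith [hy1 i]⟩ : Fin M)) (by simpa using hlt)
  have hb : ⌊M * y i⌋₊ = ⌊M * y j⌋₊ := by simpa using hb
  have hclose : |(M : ℝ) * y i - M * y j| < 1 := by
    have i1 := Nat.floor_le (mul_nonneg hMR.le (hy0 i))
    have i2 := Nat.lt_floor_add_one ((M : ℝ) * y i)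
    have j1 := Nat.floor_le (mul_nonneg hMR.le (hy0 j))
    have j2 := Nat.lt_floor_add_one ((M : ℝ) * y j)
    rw [hb] at i1 i2
    rw [abs_lt]
    constructor <;> linarith
  have hd : dist (g i) (g j) ≤ |y i - y j| := by
    rw [dist_eq_norm, ← hyg, ← hyg, ← AddCircle.coe_sub]
    exact norm_coe_le_abs _
  have h1 := (hg i j hij).trans hd
  rw [div_le_iff₀' hMR, ← Nat.abs_cast M, ← abs_mul, mul_sub] at h1
  linarith

lemma grid_separated {N : ℕ} {a b : Fin N} (hab : a ≠ b) :
    1 / (N : ℝ) ≤ dist ((((a : ℕ) : ℝ) / N : ℝ) : T1) ((((b : ℕ) : ℝ) / N : ℝ) : T1) := by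
  have hN : 0 < N := a.pos
  have hNR : (0 : ℝ) < N := by exact_mod_cast hN
  rw [dist_eq_norm, ← AddCircle.coe_sub, UnitAddCircle.norm_eq]
  set k := round (((a : ℕ) : ℝ) / N - ((b : ℕ) : ℝ) / N)
  have e : ((a : ℕ) : ℝ) / N - ((b : ℕ) : ℝ) / N - k =
      (((a : ℕ) : ℤ) - ((b : ℕ) : ℤ) - N * k : ℤ) / N := by
    push_cast
    field_simp
  rw [e, abs_div, abs_of_pos hNR]
  gcongr
  have hne : (((a : ℕ) : ℤ) - ((b : ℕ) : ℤ) - N * k : ℤ) ≠ 0 := by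
    intro h0
    have ha := a.2
    have hb := b.2
    have hdvd : (N : ℤ) ∣ ((a : ℕ) : ℤ) - ((b : ℕ) : ℤ) := ⟨k, by linarith⟩
    have := Int.eq_zero_of_abs_lt_dvd hdvd (by rw [abs_lt]; constructor <;> omega)
    exact hab (Fin.ext (by omega))
  exact_mod_cast Int.one_le_abs hne

/-- Counting separated points: a torus quasi-isometric to the level `t` has scale `O(√t)`. -/
lemma scale_le {α t τ C A : ℝ} {f : T1 → T1 × T1} (ht : 1 ≤ t) (hτ : 0 < τ) (hC : 1 ≤ C)
    (hA : 0 ≤ A)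
    (hf : IsQIWith (rotWarpDist α t) (fun a b : T1 × T1 => τ * dist a b) C A f) :
    τ ≤ 3 * (C + 3 * A) * √t := by
  have hs : 1 ≤ √t := Real.one_le_sqrt.mpr ht
  have hst : √t ^ 2 = t := Real.sq_sqrt (by linarith)
  obtain ⟨-, hup, hsurj⟩ := hf
  -- Points of the torus at distance at least `r` have preimages at distance at least `1`.
  set r := C + 3 * A with hr
  have hrpos : 0 < r := by linarith
  set N := ⌊τ / r⌋₊ with hN
  have hτN : τ < r * (N + 1) := by
    rw [← div_lt_iff₀' hrpos]
    exact Nat.lt_floor_add_one _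
  have hNτ : r * N ≤ τ := by
    rw [← le_div_iff₀' hrpos]
    exact Nat.floor_le (by positivity)
  let P : Fin N × Fin N → T1 × T1 := fun a =>
    (((((a.1 : ℕ) : ℝ) / N : ℝ) : T1), ((((a.2 : ℕ) : ℝ) / N : ℝ) : T1))
  have hP : ∀ a b, a ≠ b → r ≤ τ * dist (P a) (P b) := by
    intro a b hab
    have hNpos : (0 : ℝ) < N := by exact_mod_cast a.1.pos
    have h1 : 1 / (N : ℝ) ≤ dist (P a) (P b) := by
      rw [Prod.dist_eq]
      by_cases h : a.1 = b.1
      · exact (grid_separated fun h' => hab (Prod.ext h h')).trans (le_max_right _ _)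
      · exact (grid_separated h).trans (le_max_left _ _)
    calc r ≤ τ * (1 / N) := by rw [mul_one_div, le_div_iff₀ hNpos]; exact hNτ
      _ ≤ _ := by gcongr
  choose g hg using fun a => hsurj (P a)
  have hM : 0 < ⌈2 * t⌉₊ := Nat.ceil_pos.mpr (by linarith)
  have hMR : (0 : ℝ) < ⌈2 * t⌉₊ := by exact_mod_cast hM
  have hcard := card_le_of_separated g hM (by
    intro a b hab
    have h1 := hP a b hab
    have h2 := hg a
    have h3 := hg b
    have h4 := hup (g a) (g b)
    simp only at h2 h3 h4
    have tri : τ * dist (P a) (P b) ≤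
        τ * dist (f (g a)) (P a) + τ * dist (f (g a)) (f (g b)) + τ * dist (f (g b)) (P b) := by
      rw [← mul_add, ← mul_add, dist_comm (f (g a)) (P a)]
      gcongr
      exact dist_triangle4 _ _ _ _
    have h5 : 1 ≤ rotWarpDist α t (g a) (g b) := by nlinarith
    have h6 := rotWarpDist_le (α := α) (by linarith : 0 ≤ t) (g a) (g b) 0
    simp only [Int.cast_zero, abs_zero, zero_smul, add_zero, zero_add] at h6
    have h7 : t ≤ ⌈2 * t⌉₊ := by linarith [Nat.le_ceil (2 * t)]
    rw [div_le_iff₀ hMR]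
    nlinarith [dist_nonneg (x := g a) (y := g b)])
  have hcardR : (N : ℝ) * N ≤ ⌈2 * t⌉₊ := by
    have : N * N ≤ ⌈2 * t⌉₊ := by simpa using hcard
    exact_mod_cast this
  have hceil := Nat.ceil_lt_add_one (by linarith : 0 ≤ 2 * t)
  have hN2 : (N : ℝ) ≤ 2 * √t := by
    apply le_of_sq_le_sq _ (by positivity)
    nlinarith
  nlinarith

/-- Comparison of lengths: if `q α` is within `q / t` of an integer, then the ball of radius `R`
in the warped metric lies in the union of the `q` arcs centred at `i α`, `0 ≤ i < q`, which for
`R = t / (16 q)` have total length less than `1`. -/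
lemma exists_far_point {α t : ℝ} {p : ℤ} {q : ℕ} (hq : 0 < q) (ht : 5 * (q : ℝ) ^ 2 ≤ t)
    (h : t * |(q : ℝ) * α - p| ≤ q) : ∃ x : T1, t / (16 * q) ≤ rotWarpDist α t 0 x := by
  have hqR : (1 : ℝ) ≤ q := by exact_mod_cast hq
  have htpos : 0 < t := by nlinarith
  by_contra! hcon
  set δ := |(q : ℝ) * α - p| with hδ
  have hδ0 : 0 ≤ δ := abs_nonneg _
  set R := t / (16 * q) with hR
  have hRpos : 0 < R := by positivity
  set ρ := (R / q + 1) * δ + R / t with hρ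
  have hρ0 : 0 ≤ ρ := by positivity
  have hqα : ‖(q : ℤ) • (α : T1)‖ ≤ δ := by
    rw [zsmul_coe]
    simpa using norm_coe_le_abs_sub_int ((q : ℝ) * α) p
  have hcover : (univ : Set T1) ⊆ ⋃ i ∈ Finset.range q, closedBall ((i : ℤ) • (α : T1)) ρ := by
    intro x _
    obtain ⟨n, hn⟩ := exists_lt_of_ciInf_lt (hcon x)
    have hn : |(n : ℝ)| + t * dist (n • (α : T1)) x < R := by simpa using hn
    have hqz : (0 : ℤ) < q := by exact_mod_cast hq
    have hm0 := Int.emod_nonneg n hqz.ne'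
    have hm1 := Int.emod_lt_of_pos n hqz
    have hdiv := Int.emod_add_mul_ediv n q
    set j := n / (q : ℤ)
    obtain ⟨i, hi⟩ := Int.eq_ofNat_of_zero_le hm0
    rw [hi] at hdiv hm1
    have hiq : i < q := by exact_mod_cast hm1
    have hj : |(j : ℝ)| ≤ R / q + 1 := by
      have e : (q : ℝ) * j = n - i := by
        have : (i : ℝ) + q * j = n := by exact_mod_cast hdiv
        linarith
      have h1 : (q : ℝ) * |(j : ℝ)| ≤ R + q := by
        rw [← Nat.abs_cast q, ← abs_mul, Nat.abs_cast, e]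
        refine (abs_sub _ _).trans ?_
        have h2 : |(n : ℝ)| ≤ R := by
          have := mul_nonneg htpos.le (dist_nonneg (x := n • (α : T1)) (y := x))
          linarith
        have h3 : (i : ℝ) ≤ q := by exact_mod_cast hiq.le
        rw [Nat.abs_cast]
        linarith
      have e2 : R / q + 1 = (R + q) / q := by field_simp
      rw [e2, le_div_iff₀' (by linarith)]
      exact h1
    simp only [mem_iUnion, Finset.mem_range, mem_closedBall]
    refine ⟨i, hiq, ?_⟩
    have e : n • (α : T1) - (i : ℤ) • (α : T1) = j • ((q : ℤ) • (α : T1)) := by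
      rw [← hdiv, smul_smul, ← sub_smul]
      congr 1
      simp [mul_comm]
    calc dist x ((i : ℤ) • (α : T1))
        ≤ dist x (n • (α : T1)) + dist (n • (α : T1)) ((i : ℤ) • (α : T1)) := dist_triangle _ _ _
      _ ≤ R / t + |(j : ℝ)| * δ := by
          gcongr
          · rw [dist_comm, le_div_iff₀' htpos]
            linarith [abs_nonneg (n : ℝ)]
          · rw [dist_eq_norm, e]
            refine (norm_zsmul_le j _).trans ?_
            rw [Int.norm_eq_abs]
            gcongr
      _ ≤ R / t + (R / q + 1) * δ := by gcongr
      _ = ρ := by rw [hρ]; ring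
  have hvol : (1 : ENNReal) ≤ ENNReal.ofReal (q * (2 * ρ)) := by
    calc (1 : ENNReal) = MeasureTheory.volume (univ : Set T1) := by
          rw [AddCircle.measure_univ, ENNReal.ofReal_one]
      _ ≤ MeasureTheory.volume (⋃ i ∈ Finset.range q, closedBall ((i : ℤ) • (α : T1)) ρ) :=
          MeasureTheory.measure_mono hcover
      _ ≤ ∑ i ∈ Finset.range q, MeasureTheory.volume (closedBall ((i : ℤ) • (α : T1)) ρ) :=
          MeasureTheory.measure_biUnion_finset_le _ _
      _ ≤ ∑ _i ∈ Finset.range q, ENNReal.ofReal (2 * ρ) := by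
          refine Finset.sum_le_sum fun i _ => ?_
          rw [AddCircle.volume_closedBall]
          exact ENNReal.ofReal_le_ofReal (min_le_right _ _)
      _ = _ := by
          rw [Finset.sum_const, Finset.card_range, nsmul_eq_mul,
            ENNReal.ofReal_mul (Nat.cast_nonneg q), ENNReal.ofReal_natCast]
  rw [ENNReal.one_le_ofReal] at hvol
  have e1 : (q : ℝ) * (2 * ρ) = (t * δ) / (8 * q) + 2 * (q * δ) + 1 / 8 := by
    rw [hρ, hR]
    field_simp
    ring
  have e2 : (t * δ) / (8 * q) ≤ 1 / 8 := by
    rw [div_le_iff₀ (by positivity)]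
    linarith
  have e3 : q * δ ≤ 1 / 5 := by
    have : 5 * (q : ℝ) ^ 2 * δ ≤ q := (mul_le_mul_of_nonneg_right ht hδ0).trans h
    nlinarith
  linarith

lemma restricted_of_famQI {α : ℝ}
    (h : FamQI (fun t => rotWarpDist α t.1) (fun τ (a b : T1 × T1) => τ.1 * dist a b)) :
    RestrictedIrrational α := by
  obtain ⟨I, P, Q, f, C, A, hC, hA, hP, -, hf⟩ := h
  set r := C + 3 * A with hr
  have hr1 : 1 ≤ r := by linarith
  set K := 64 * C * r with hK
  have hKpos : 0 < K := by positivity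
  -- Comparing diameters at level `t = (K ^ 2 + 5) * q ^ 2` forces `√t ≤ K * q`.
  have main : ∀ (p : ℤ) (q : ℕ), 0 < q → 1 / (K ^ 2 + 5) / (q : ℝ) ^ 2 < |α - (p : ℝ) / q| := by
    intro p q hq
    have hqR : (1 : ℝ) ≤ q := by exact_mod_cast hq
    by_contra! hle
    set t := (K ^ 2 + 5) * (q : ℝ) ^ 2 with ht
    have ht5 : 5 * (q : ℝ) ^ 2 ≤ t := by nlinarith [mul_nonneg (sq_nonneg K) (sq_nonneg (q : ℝ))]
    have htpos : 0 < t := by positivity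
    have ht1 : 1 ≤ t := by nlinarith
    have happrox : t * |(q : ℝ) * α - p| ≤ q := by
      have e : |(q : ℝ) * α - p| = q * |α - p / q| := by
        rw [← Nat.abs_cast q, ← abs_mul, Nat.abs_cast]
        congr 1
        field_simp
      rw [div_div, ← ht, le_div_iff₀' htpos] at hle
      rw [e]
      nlinarith
    obtain ⟨x, hx⟩ := exists_far_point hq ht5 happrox
    obtain ⟨i, hi⟩ := hP ⟨t, htpos⟩
    have hfi := hf i
    rw [hi] at hfi
    have hτ := scale_le ht1 (Q i).2 hC hA hfi
    have hlow := hfi.1 0 x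
    simp only at hlow
    have hdiam : dist (f i 0) (f i x) ≤ 1 / 2 := by
      rw [Prod.dist_eq, dist_eq_norm, dist_eq_norm]
      exact max_le (norm_T1_le _) (norm_T1_le _)
    have hs : 1 ≤ √t := Real.one_le_sqrt.mpr ht1
    have hst : √t * √t = t := Real.mul_self_sqrt htpos.le
    have h1 : (Q i).1 * dist (f i 0) (f i x) ≤ 3 * r * √t := by
      have := (Q i).2
      nlinarith [dist_nonneg (x := f i 0) (y := f i x)]
    have h2 : C⁻¹ * (t / (16 * q)) ≤ 4 * r * √t := by
      have h3 : C⁻¹ * (t / (16 * q)) ≤ C⁻¹ * rotWarpDist α t 0 x := by gcongr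
      have h4 : A ≤ r * √t := by nlinarith
      linarith
    rw [inv_mul_le_iff₀ (by linarith), div_le_iff₀ (by positivity)] at h2
    have h5 : √t ≤ K * q := by
      have : √t * √t ≤ K * q * √t := by
        rw [hst, hK]
        linarith
      exact le_of_mul_le_mul_right this (by linarith)
    have h6 : t ≤ (K * q) * (K * q) := by
      rw [← hst]
      gcongr
    nlinarith
  refine ⟨?_, 1 / (K ^ 2 + 5), by positivity, main⟩
  rintro ⟨s, rfl⟩
  have h1 := main s.num s.den s.den_pos
  have h2 : (s : ℝ) = (s.num : ℝ) / (s.den : ℝ) := Rat.cast_def s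
  rw [← h2, sub_self, abs_zero] at h1
  exact absurd h1 (not_lt.mpr (by positivity))

theorem warped_cone_over_rotation_QI_to_tori_iff_restricted
    (α : ℝ) (hα : 0 < α ∧ α < 1) :
    FamQI (fun t => rotWarpDist α t.1)
      (fun τ (a b : T1 × T1) => τ.1 * dist a b) ↔
    RestrictedIrrational α := by
  exact ⟨restricted_of_famQI, famQI_of_restricted⟩
end

section
/- Let m ∈ ℕ₊, let α = (α₁,…,α_m) ∈ (0,1)^m, and let 0 < K < ∞. Consider the action ℤ^m ↷ T¹ = ℝ/ℤ given by (n₁,…,n_m)·z = z + Σᵢ nᵢαᵢ mod 1. Let q ∈ ℕ₊ and l ∈ [1,∞) with q ≤ l, and suppose there exist p₁,…,p_m ∈ {1,…,q−1} such that: (i) |qαᵢ − pᵢ| < K/l for all i ∈ {1,…,m}; and (ii) there is a group isomorphism ℤ/qℤ ≅ ⊕ᵢ ℤ/lᵢℤ under which the image of pᵢ generates the factor ℤ/lᵢℤ. Then the level (qlT¹, d_{ℤ^m}) of the warped cone is quasi-isometric to the torus (T¹, l·d) × ∏ᵢ (T¹, lᵢ·d) equipped with the ℓ¹ product metric, with quasi-isometry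 constants depending only on m and K (and not on q, l, α). -/
/-!
Write `αᵢ = pᵢ/q + εᵢ` with `|εᵢ| < K/(ql)`.  The numbers `pᵢ` generate `ℤ/qℤ = ⊕ ℤ/lᵢℤ` as a
direct sum of cyclic groups, so there are residues `cᵢ` mod `lᵢ` giving the coordinates with respect
to these generators: `k ≡ Σ nᵢ pᵢ` mod `q` if and only if `nᵢ ≡ cᵢ k` mod `lᵢ` for all `i`
(`exists_coordinates`).

The quasi-isometry is the continuous group homomorphism `z ↦ (q z, ((q/lᵢ) cᵢ z)ᵢ)`.  It sends
`pᵢ/q` to the vector with entry `1/lᵢ` in the `i`-th circle and zeros elsewhere, a vector of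
length at most `1` in the target; and it stretches a small arc of `T¹` of length `r` to length at
most `(m+1) q l r`, because `cᵢ ≤ lᵢ ≤ q ≤ l`.  As `q l |εᵢ| < K`, each generator `αᵢ` therefore
moves points of the image by a bounded amount, which gives the upper bound (`upper_bound`).

For the lower bound (`lower_bound`), if the images of `z` and `z'` are close, then `z' - z` is
within `|δ|/q` of some `k/q`, where `l|δ|` is the distance in the first circle, and the remaining
circles show that `cᵢ k` has a representative `nᵢ` mod `lᵢ` of controlled size; then `Σ nᵢ pᵢ ≡ k`,
so the word `n` moves `z` close to `z'`.  Coarse surjectivity (`coarse_surjective`) holds since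
over each point of the first circle the preimage is a coset of `(1/q)ℤ/ℤ`, whose image is a coset
of `∏ (1/lᵢ)ℤ/ℤ`.
-/

/-!
STATEMENT 18 (technical lemma): For the rotation action of ℤ^m on T¹ by angles α and
data (q, l, pᵢ, lᵢ) with q ≤ l, |qαᵢ − pᵢ| < K/l, and ℤ/qℤ ≅ ⊕ᵢ ℤ/lᵢℤ sending pᵢ to a
generator of the i-th factor, the level (qlT¹, d_{ℤ^m}) of the warped cone is
quasi-isometric to (T¹, l·d) × ∏ᵢ (T¹, lᵢ·d) with the ℓ¹ product metric, with
quasi-isometry constants depending only on m and K.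
-/

open Metric Set

/-- The warped metric at level `t` of the warped cone over the (isometric) action of
ℤ^m on T¹ by `(n₁,…,n_m)·z = z + Σᵢ nᵢαᵢ`. -/
noncomputable def rotWarpDistM (m : ℕ) (α : Fin m → ℝ) (t : ℝ) (z z' : T1) : ℝ :=
  ⨅ n : Fin m → ℤ, ((∑ i, (|n i| : ℝ)) +
    t * dist (z + (((∑ i, (n i : ℝ) * α i : ℝ)) : T1)) z')

/-! ### The norm on the circle -/

lemma T1_norm_le {x y : ℝ} (k : ℤ) (h : x = y + k) : ‖(x : T1)‖ ≤ |y| := by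
  have := UnitAddCircle.norm_eq (x := x)
  rw [show ‖(x : T1)‖ = _ from this]
  refine (round_le x k).trans (le_of_eq ?_)
  rw [h]; ring_nf

lemma T1_exists_norm (x : ℝ) : ∃ k : ℤ, ‖(x : T1)‖ = |x - k| :=
  ⟨round x, UnitAddCircle.norm_eq⟩

lemma T1_dist_nsmul (n : ℕ) (x y : ℝ) :
    dist (n • (x : T1)) (n • (y : T1)) = ‖((n * (x - y) : ℝ) : T1)‖ := by
  rw [dist_eq_norm, ← smul_sub, ← AddCircle.coe_sub, ← AddCircle.coe_nsmul, nsmul_eq_mul]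

/-! ### Coordinates on the cyclic group -/

/-- The integers `c i` are the coordinates of `1 ∈ ℤ/qℤ` with respect to the generators `p i` of the
cyclic factors of order `li i`: an integer `k` is `∑ n i * p i` mod `q` exactly when `n i ≡ c i * k`
mod `li i`. -/
lemma exists_coordinates {m q : ℕ} (hq : 0 < q) {li p : Fin m → ℕ} (hli : ∀ i, 0 < li i)
    (he : ∃ e : ZMod q ≃+ (∀ i : Fin m, ZMod (li i)),
          ∀ i : Fin m, (∀ j : Fin m, j ≠ i → e ((p i : ZMod q)) j = 0) ∧
            AddSubgroup.zmultiples (e ((p i : ZMod q)) i) = ⊤) :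
    ∃ c d : Fin m → ℕ, (∀ i, q = li i * d i) ∧ (∀ i, c i ≤ q) ∧
      (∀ (n : Fin m → ℤ) i, (li i : ℤ) ∣ c i * (∑ j, n j * p j) - n i) ∧
      (∀ (n : Fin m → ℤ) (k : ℤ), (∀ i, (li i : ℤ) ∣ c i * k - n i) →
        (q : ℤ) ∣ k - ∑ j, n j * p j) := by
  obtain ⟨e, he⟩ := he
  have hne : ∀ i, NeZero (li i) := fun i => ⟨(hli i).ne'⟩
  have hinv : ∀ i, ∃ v : ZMod (li i), v * e (p i : ZMod q) i = 1 := by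
    intro i
    have h1 : (1 : ZMod (li i)) ∈ AddSubgroup.zmultiples (e ((p i : ZMod q)) i) := by
      rw [(he i).2]; trivial
    obtain ⟨n, hn⟩ := AddSubgroup.mem_zmultiples_iff.1 h1
    exact ⟨n, by rw [← hn, zsmul_eq_mul]⟩
  choose v hv using hinv
  have hdvd : ∀ i, li i ∣ q := by
    intro i
    have h : q • e (e.symm (Pi.single i 1)) = 0 := by
      rw [← map_nsmul, nsmul_eq_mul, ZMod.natCast_self, zero_mul, map_zero]
    rw [e.apply_symm_apply] at h
    have h2 := congrFun h i
    simp only [Pi.smul_apply, Pi.single_eq_same, nsmul_eq_mul, mul_one, Pi.zero_apply] at h2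
    exact (ZMod.natCast_eq_zero_iff _ _).1 h2
  choose d hd using hdvd
  have hint : ∀ (k : ℤ) i, e (k : ZMod q) i = k * e 1 i := by
    intro k i
    have : (k : ZMod q) = k • (1 : ZMod q) := by simp
    rw [this, map_zsmul, Pi.smul_apply, zsmul_eq_mul]
  have hsum : ∀ (n : Fin m → ℤ) i,
      e ((∑ j, n j * p j : ℤ) : ZMod q) i = n i * e (p i : ZMod q) i := by
    intro n i
    have h : ((∑ j, n j * p j : ℤ) : ZMod q) = ∑ j, n j • (p j : ZMod q) := by
      push_cast; simp
    rw [h, map_sum, Finset.sum_apply, Finset.sum_eq_single i]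
    · rw [map_zsmul, Pi.smul_apply, zsmul_eq_mul]
    · intro j _ hj
      rw [map_zsmul, Pi.smul_apply, (he j).1 i hj.symm, smul_zero]
    · simp
  refine ⟨fun i => (v i * e 1 i).val, d, hd, ?_, ?_, ?_⟩
  · intro i
    exact (ZMod.val_lt _).le.trans (Nat.le_of_dvd hq ⟨_, hd i⟩)
  · intro n i
    rw [← ZMod.intCast_zmod_eq_zero_iff_dvd]
    have h1 := hsum n i
    rw [hint] at h1
    rw [Int.cast_sub, Int.cast_mul, Int.cast_natCast, ZMod.natCast_zmod_val]
    linear_combination v i * h1 + n i * hv i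
  · intro n k h
    rw [← ZMod.intCast_zmod_eq_zero_iff_dvd, Int.cast_sub, sub_eq_zero]
    apply e.injective
    funext i
    have h1 := (ZMod.intCast_zmod_eq_zero_iff_dvd _ _).2 (h i)
    rw [Int.cast_sub, Int.cast_mul, Int.cast_natCast, ZMod.natCast_zmod_val] at h1
    rw [hsum, hint]
    linear_combination e (p i : ZMod q) i * h1 - k * e 1 i * hv i

/-! ### The map to the torus and its bounds -/

/-- The homomorphism `z ↦ (q z, (dᵢ cᵢ z)ᵢ)` from the circle to the torus; it is used with
`dᵢ = q / lᵢ`. -/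
noncomputable def toProductTorus {m : ℕ} (q : ℕ) (c d : Fin m → ℕ) (z : T1) : T1 × (Fin m → T1) :=
  (q • z, fun i => (d i * c i) • z)

/-- Replacing the rotation angles `αᵢ` by `pᵢ/q` moves a word `n` by at most `K |n|₁` at level `q l`. -/
lemma error_bound {m q : ℕ} {l K : ℝ} {p : Fin m → ℕ} {α : Fin m → ℝ} (hq : 0 < q) (hl : 0 < l)
    (hα : ∀ i, |(q : ℝ) * α i - (p i : ℝ)| < K / l) (n : Fin m → ℤ) :
    q * l * |∑ i, (n i : ℝ) * (α i - p i / q)| ≤ K * ∑ i, |(n i : ℝ)| := by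
  have hq' : (0 : ℝ) < q := by exact_mod_cast hq
  rw [Finset.mul_sum]
  calc q * l * |∑ i, (n i : ℝ) * (α i - p i / q)|
      ≤ q * l * ∑ i, |(n i : ℝ) * (α i - p i / q)| := by
        gcongr; exact Finset.abs_sum_le_sum_abs _ _
    _ = ∑ i, l * |(q : ℝ) * α i - p i| * |(n i : ℝ)| := by
        rw [Finset.mul_sum]
        refine Finset.sum_congr rfl fun i _ => ?_
        have : (q : ℝ) * α i - p i = q * (α i - p i / q) := by field_simp
        rw [this, abs_mul, abs_mul, abs_of_pos hq']; ring
    _ ≤ _ := by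
        refine Finset.sum_le_sum fun i _ => ?_
        gcongr
        have := (lt_div_iff₀ hl).1 (hα i)
        linarith

section bounds

variable {m q : ℕ} {l K : ℝ} {li p c d : Fin m → ℕ} {α : Fin m → ℝ}

/-- Each word `n` that competes in the infimum defining the warped distance bounds the distance of
the images; this uses that `∑ nⱼ pⱼ` has coordinates `nᵢ` mod `lᵢ`. -/
lemma upper_bound (hq : 0 < q) (hK : 0 < K) (hql : (q : ℝ) ≤ l)
    (hα : ∀ i, |(q : ℝ) * α i - (p i : ℝ)| < K / l)
    (hd : ∀ i, q = li i * d i) (hc : ∀ i, c i ≤ q)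
    (hP : ∀ (n : Fin m → ℤ) i, (li i : ℤ) ∣ c i * (∑ j, n j * p j) - n i)
    (n : Fin m → ℤ) (z z' : T1) :
    l * dist (toProductTorus q c d z).1 (toProductTorus q c d z').1 +
      ∑ i, (li i : ℝ) * dist ((toProductTorus q c d z).2 i) ((toProductTorus q c d z').2 i) ≤
    (m + 1) * (1 + K) * ((∑ i, (|n i| : ℝ)) +
      q * l * dist (z + (((∑ i, (n i : ℝ) * α i : ℝ)) : T1)) z') := by
  obtain ⟨x, rfl⟩ := QuotientAddGroup.mk_surjective z
  obtain ⟨y, rfl⟩ := QuotientAddGroup.mk_surjective z'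
  have hq' : (0 : ℝ) < q := by exact_mod_cast hq
  have hl : 0 < l := hq'.trans_le hql
  change l * dist (q • (x : T1)) (q • (y : T1)) +
    ∑ i, (li i : ℝ) * dist ((d i * c i) • (x : T1)) ((d i * c i) • (y : T1)) ≤
    (m + 1) * (1 + K) * ((∑ i, (|n i| : ℝ)) +
      q * l * dist ((x : T1) + (((∑ i, (n i : ℝ) * α i : ℝ)) : T1)) (y : T1))
  rw [← AddCircle.coe_add, dist_eq_norm ((x + _ : ℝ) : T1), ← AddCircle.coe_sub]
  obtain ⟨k, hk⟩ := T1_exists_norm (x + ∑ i, (n i : ℝ) * α i - y)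
  rw [hk]
  set r := x + ∑ i, (n i : ℝ) * α i - y - k with hr
  have herr := error_bound hq hl hα n
  set E := ∑ i, (n i : ℝ) * (α i - p i / q) with hE
  have hsplit : ∑ i, (n i : ℝ) * α i = E + (∑ j, n j * p j : ℤ) / q := by
    push_cast
    rw [hE, Finset.sum_div, ← Finset.sum_add_distrib]
    exact Finset.sum_congr rfl fun i _ => by ring
  -- modulo `1`, the difference `x - y` is `-∑ nᵢ pᵢ/q` up to the small error `r - E`
  have hxy : x - y = (r - E) + k - (∑ j, n j * p j : ℤ) / q := by
    rw [hr, hsplit]; ring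
  have hw : q * l * |r - E| ≤ q * l * |r| + K * ∑ i, |(n i : ℝ)| := by
    have : q * l * |r - E| ≤ q * l * (|r| + |E|) := by gcongr; exact abs_sub r E
    linarith
  have h1 : l * dist (q • (x : T1)) (q • (y : T1)) ≤ q * l * |r - E| := by
    rw [T1_dist_nsmul]
    have : ‖((q * (x - y) : ℝ) : T1)‖ ≤ |q * (r - E)| :=
      T1_norm_le (q * k - ∑ j, n j * p j) (by rw [hxy]; push_cast; field_simp; ring)
    rw [abs_mul, abs_of_pos hq'] at this
    calc _ ≤ l * (q * |r - E|) := by gcongr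
      _ = _ := by ring
  have h2 : ∀ i, (li i : ℝ) * dist ((d i * c i) • (x : T1)) ((d i * c i) • (y : T1)) ≤
      q * l * |r - E| + |(n i : ℝ)| := by
    intro i
    obtain ⟨t, ht⟩ := hP n i
    have ht' : (c i : ℝ) * (∑ j, n j * p j : ℤ) - n i = li i * t := by exact_mod_cast ht
    have hdi : (q : ℝ) = li i * d i := by exact_mod_cast hd i
    have hli : (0 : ℝ) < li i := by
      have : 0 < li i := Nat.pos_of_ne_zero fun h => by
        have := hd i; rw [h] at this; omega
      exact_mod_cast this
    have hdi' : (0 : ℝ) < d i := by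
      rw [hdi] at hq'; exact (pos_iff_pos_of_mul_pos hq').1 hli
    have hci : (c i : ℝ) ≤ l := le_trans (by exact_mod_cast hc i) hql
    rw [T1_dist_nsmul]
    have h3 : ‖(((d i * c i : ℕ) * (x - y) : ℝ) : T1)‖ ≤ |d i * c i * (r - E) - n i / li i| := by
      refine T1_norm_le (d i * c i * k - t) ?_
      rw [hxy, hdi]; push_cast at ht' ⊢; field_simp
      linear_combination -ht'
    calc _ ≤ (li i : ℝ) * |d i * c i * (r - E) - n i / li i| := by gcongr
      _ = |q * c i * (r - E) - n i| := by
        rw [← abs_of_pos hli, ← abs_mul, abs_of_pos hli, hdi]; congr 1; field_simp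
      _ ≤ |q * c i * (r - E)| + |(n i : ℝ)| := abs_sub _ _
      _ = q * c i * |r - E| + |(n i : ℝ)| := by
        rw [abs_mul, abs_of_nonneg (by positivity)]
      _ ≤ _ := by gcongr
  have h4 := Finset.sum_le_sum fun i (_ : i ∈ Finset.univ) => h2 i
  rw [Finset.sum_add_distrib, Finset.sum_const, Finset.card_univ, Fintype.card_fin,
    nsmul_eq_mul] at h4
  have hS : 0 ≤ ∑ i, |(n i : ℝ)| := Finset.sum_nonneg fun i _ => abs_nonneg _
  have h5 : (m + 1) * (q * l * |r - E|) ≤ (m + 1) * (q * l * |r| + K * ∑ i, |(n i : ℝ)|) := by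
    gcongr
  have h6 : 0 ≤ (m : ℝ) * ∑ i, |(n i : ℝ)| := by positivity
  have h7 : 0 ≤ (m + 1) * K * (q * l * |r|) := by positivity
  linarith

/-- The distance of the images bounds the warped distance, by an explicit choice of the word `n`;
this uses that an integer with coordinates `nᵢ` mod `lᵢ` is `∑ nⱼ pⱼ` mod `q`. -/
lemma lower_bound (hq : 0 < q) (hK : 0 < K) (hql : (q : ℝ) ≤ l)
    (hα : ∀ i, |(q : ℝ) * α i - (p i : ℝ)| < K / l)
    (hd : ∀ i, q = li i * d i) (hc : ∀ i, c i ≤ q)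
    (hP : ∀ (n : Fin m → ℤ) (k : ℤ), (∀ i, (li i : ℤ) ∣ c i * k - n i) →
        (q : ℤ) ∣ k - ∑ j, n j * p j) (z z' : T1) :
    ∃ n : Fin m → ℤ, (∑ i, (|n i| : ℝ)) +
      q * l * dist (z + (((∑ i, (n i : ℝ) * α i : ℝ)) : T1)) z' ≤
    (m + 1) * (1 + K) * (l * dist (toProductTorus q c d z).1 (toProductTorus q c d z').1 +
      ∑ i, (li i : ℝ) * dist ((toProductTorus q c d z).2 i) ((toProductTorus q c d z').2 i)) := by
  obtain ⟨x, rfl⟩ := QuotientAddGroup.mk_surjective z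
  obtain ⟨y, rfl⟩ := QuotientAddGroup.mk_surjective z'
  have hq' : (0 : ℝ) < q := by exact_mod_cast hq
  have hl : 0 < l := hq'.trans_le hql
  change ∃ n : Fin m → ℤ, (∑ i, (|n i| : ℝ)) +
      q * l * dist ((x : T1) + (((∑ i, (n i : ℝ) * α i : ℝ)) : T1)) (y : T1) ≤
    (m + 1) * (1 + K) * (l * dist (q • (x : T1)) (q • (y : T1)) +
    ∑ i, (li i : ℝ) * dist ((d i * c i) • (x : T1)) ((d i * c i) • (y : T1)))
  simp only [T1_dist_nsmul]
  obtain ⟨k, hk⟩ := T1_exists_norm (q * (x - y))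
  choose t ht using fun i => T1_exists_norm ((d i * c i : ℕ) * (x - y))
  simp only [hk, ht]
  set δ := q * (x - y) - k with hδ
  -- `nᵢ` is the representative of `-cᵢ k` mod `lᵢ` singled out by the distance in the `i`-th circle
  let n : Fin m → ℤ := fun i => li i * t i - c i * k
  obtain ⟨s, hs⟩ := hP n (-k) fun i => ⟨-t i, by simp only [n]; ring⟩
  have hs' : -(k : ℝ) - (∑ j, n j * p j : ℤ) = q * s := by exact_mod_cast hs
  refine ⟨n, ?_⟩
  have hn : ∀ i, |(n i : ℝ)| ≤ li i * |(d i * c i : ℕ) * (x - y) - t i| + l * |δ| := by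
    intro i
    have hdi : (q : ℝ) = li i * d i := by exact_mod_cast hd i
    have hci : (c i : ℝ) ≤ l := le_trans (by exact_mod_cast hc i) hql
    have h : (n i : ℝ) = c i * δ - li i * ((d i * c i : ℕ) * (x - y) - t i) := by
      simp only [n, hδ, hdi]; push_cast; ring
    rw [h]
    refine (abs_sub _ _).trans ?_
    rw [abs_mul, abs_mul, Nat.abs_cast, Nat.abs_cast, add_comm]
    gcongr
  have hnsum := Finset.sum_le_sum fun i (_ : i ∈ Finset.univ) => hn i
  rw [Finset.sum_add_distrib, Finset.sum_const, Finset.card_univ, Fintype.card_fin,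
    nsmul_eq_mul] at hnsum
  have herr := error_bound hq hl hα n
  set E := ∑ i, (n i : ℝ) * (α i - p i / q) with hE
  have hsplit : ∑ i, (n i : ℝ) * α i = E + (∑ j, n j * p j : ℤ) / q := by
    push_cast
    rw [hE, Finset.sum_div, ← Finset.sum_add_distrib]
    exact Finset.sum_congr rfl fun i _ => by ring
  rw [← AddCircle.coe_add, dist_eq_norm ((x + _ : ℝ) : T1), ← AddCircle.coe_sub]
  have h1 : ‖((x + ∑ i, (n i : ℝ) * α i - y : ℝ) : T1)‖ ≤ |δ / q + E| := by
    refine T1_norm_le (-s) ?_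
    rw [hsplit, hδ]; push_cast at hs' ⊢; field_simp
    linear_combination -hs'
  have h2 : q * l * ‖((x + ∑ i, (n i : ℝ) * α i - y : ℝ) : T1)‖ ≤
      l * |δ| + K * ∑ i, |(n i : ℝ)| := by
    calc _ ≤ q * l * (|δ / q| + |E|) := by
          gcongr; exact h1.trans (abs_add_le _ _)
      _ = l * |δ| + q * l * |E| := by
          rw [abs_div, abs_of_pos hq']; field_simp
      _ ≤ _ := by gcongr
  set B := ∑ i, (li i : ℝ) * |(d i * c i : ℕ) * (x - y) - t i| with hB
  have hB0 : 0 ≤ B := Finset.sum_nonneg fun i _ => by positivity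
  have hδ0 : 0 ≤ l * |δ| := by positivity
  have h3 : (1 + K) * ∑ i, |(n i : ℝ)| ≤ (1 + K) * (B + m * (l * |δ|)) := by gcongr
  have h4 : 0 ≤ m * (1 + K) * B := by positivity
  have h5 : 0 ≤ K * (l * |δ|) := by positivity
  push_cast at *
  linarith

lemma coarse_surjective (hq : 0 < q)
    (hd : ∀ i, q = li i * d i)
    (hP : ∀ (n : Fin m → ℤ) i, (li i : ℤ) ∣ c i * (∑ j, n j * p j) - n i)
    (w : T1 × (Fin m → T1)) :
    ∃ z, l * dist (toProductTorus q c d z).1 w.1 +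
      ∑ i, (li i : ℝ) * dist ((toProductTorus q c d z).2 i) (w.2 i) ≤ m := by
  have hq' : (0 : ℝ) < q := by exact_mod_cast hq
  obtain ⟨a, b⟩ := w
  obtain ⟨x, rfl⟩ := QuotientAddGroup.mk_surjective a
  choose y hy using fun i => QuotientAddGroup.mk_surjective (b i)
  obtain rfl : (fun i => ((y i : ℝ) : T1)) = b := funext hy
  let n : Fin m → ℤ := fun i => round (li i * y i - c i * x)
  -- the points `(x + k) / q`, `k ∈ ℤ`, form the fibre over `x` of the first coordinate
  refine ⟨(((x + (∑ j, n j * p j : ℤ)) / q : ℝ) : T1), ?_⟩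
  change l * dist (q • (((x + (∑ j, n j * p j : ℤ)) / q : ℝ) : T1)) (x : T1) +
    ∑ i, (li i : ℝ) * dist ((d i * c i) • (((x + (∑ j, n j * p j : ℤ)) / q : ℝ) : T1))
      (y i : T1) ≤ m
  have h1 : dist (q • (((x + (∑ j, n j * p j : ℤ)) / q : ℝ) : T1)) (x : T1) = 0 := by
    rw [← AddCircle.coe_nsmul, dist_eq_norm, ← AddCircle.coe_sub]
    refine le_antisymm ((T1_norm_le (y := 0) (∑ j, n j * p j) ?_).trans (by simp)) (norm_nonneg _)
    rw [nsmul_eq_mul]; field_simp; ring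
  have h2 : ∀ i, (li i : ℝ) * dist ((d i * c i) • (((x + (∑ j, n j * p j : ℤ)) / q : ℝ) : T1))
      (y i : T1) ≤ 1 := by
    intro i
    obtain ⟨t, ht⟩ := hP n i
    have ht' : (c i : ℝ) * (∑ j, n j * p j : ℤ) - n i = li i * t := by exact_mod_cast ht
    have hdi : (q : ℝ) = li i * d i := by exact_mod_cast hd i
    have hli : (0 : ℝ) < li i := by
      have : 0 < li i := Nat.pos_of_ne_zero fun h => by
        have := hd i; rw [h] at this; omega
      exact_mod_cast this
    have hdi' : (0 : ℝ) < d i := by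
      rw [hdi] at hq'; exact (pos_iff_pos_of_mul_pos hq').1 hli
    rw [← AddCircle.coe_nsmul, dist_eq_norm, ← AddCircle.coe_sub]
    have h3 : ‖(((d i * c i) • ((x + (∑ j, n j * p j : ℤ)) / q) - y i : ℝ) : T1)‖ ≤
        |-((li i * y i - c i * x) - n i) / li i| := by
      refine T1_norm_le t ?_
      rw [nsmul_eq_mul, hdi]; push_cast at ht' ⊢; field_simp
      linear_combination ht'
    rw [abs_div, abs_neg, abs_of_pos hli, le_div_iff₀ hli] at h3
    have h4 := abs_sub_round (li i * y i - c i * x)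
    change |(li i * y i - c i * x) - n i| ≤ 1 / 2 at h4
    linarith
  rw [h1, mul_zero, zero_add]
  refine (Finset.sum_le_sum fun i _ => h2 i).trans ?_
  simp

end bounds

/-! ### The quasi-isometry -/

theorem warped_cone_level_QI_to_product_of_circles
    (m : ℕ) (hm : 0 < m) (K : ℝ) (hK : 0 < K) :
    -- the quasi-isometry constants depend only on m and K:
    ∃ C A : ℝ, 1 ≤ C ∧ 0 ≤ A ∧
      ∀ (α : Fin m → ℝ), (∀ i, α i ∈ Set.Ioo (0 : ℝ) 1) →
      ∀ (q : ℕ) (l : ℝ) (li : Fin m → ℕ) (p : Fin m → ℕ),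
        0 < q → (q : ℝ) ≤ l →
        (∀ i, 1 ≤ p i ∧ p i ≤ q - 1) →
        -- |qαᵢ − pᵢ| < K/l
        (∀ i, |(q : ℝ) * α i - (p i : ℝ)| < K / l) →
        (∀ i, 0 < li i) →
        -- ℤ/qℤ ≅ ⊕ᵢ ℤ/lᵢℤ with the image of pᵢ generating the i-th factor
        (∃ e : ZMod q ≃+ (∀ i : Fin m, ZMod (li i)),
          ∀ i : Fin m, (∀ j : Fin m, j ≠ i → e ((p i : ZMod q)) j = 0) ∧
            AddSubgroup.zmultiples (e ((p i : ZMod q)) i) = ⊤) →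
        -- then the level t = q·l of the warped cone is (C,A)-quasi-isometric to the
        -- ℓ¹-product torus (T¹, l·d) × ∏ᵢ (T¹, lᵢ·d)
        ∃ f : T1 → T1 × (Fin m → T1),
          IsQIWith (rotWarpDistM m α ((q : ℝ) * l))
            (fun a b => l * dist a.1 b.1 + ∑ i, (li i : ℝ) * dist (a.2 i) (b.2 i))
            C A f := by
  refine ⟨(m + 1) * (1 + K), m, ?_, by positivity, ?_⟩
  · have : 0 ≤ (m : ℝ) * (1 + K) := by positivity
    linarith
  intro α _ q l li p hq hql _ hα hli he
  obtain ⟨c, d, hd, hc, hP, hP'⟩ := exists_coordinates hq hli he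
  have hC : (0 : ℝ) < (m + 1) * (1 + K) := by positivity
  have hl : 0 < l := lt_of_lt_of_le (by exact_mod_cast hq) hql
  have hm0 : (0 : ℝ) ≤ m := by positivity
  refine ⟨toProductTorus q c d, fun z z' => ?_, fun z z' => ?_, fun w => ?_⟩
  · obtain ⟨n, hn⟩ := lower_bound hq hK hql hα hd hc hP' z z'
    have hbdd : BddBelow (Set.range fun n : Fin m → ℤ => ((∑ i, (|n i| : ℝ)) +
        q * l * dist (z + (((∑ i, (n i : ℝ) * α i : ℝ)) : T1)) z')) := by
      refine ⟨0, ?_⟩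
      rintro _ ⟨n, rfl⟩
      positivity
    have h := (ciInf_le hbdd n).trans hn
    have h' := (inv_mul_le_iff₀ hC).2 h
    unfold rotWarpDistM
    linarith
  · have h : ((m + 1) * (1 + K))⁻¹ * (l * dist (toProductTorus q c d z).1 (toProductTorus q c d z').1 +
        ∑ i, (li i : ℝ) * dist ((toProductTorus q c d z).2 i) ((toProductTorus q c d z').2 i)) ≤
        rotWarpDistM m α (q * l) z z' :=
      le_ciInf fun n => (inv_mul_le_iff₀ hC).2 (upper_bound hq hK hql hα hd hc hP n z z')
    have h' := (inv_mul_le_iff₀ hC).1 h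
    linarith
  · exact coarse_surjective hq hd hP w
end

section
/- For every m ∈ ℕ₊ there exist strictly increasing sequences (t_i) and (τ_i) of positive integers and uncountably many tuples α = (α₁,…,α_m) ∈ (0,1)^m such that, for the action ℤ^m ↷ T¹ = ℝ/ℤ given by (n₁,…,n_m)·z = z + Σⱼ nⱼαⱼ mod 1, the family of levels (t_iT¹, d_{ℤ^m})_{i∈ℕ} of the warped cone is quasi-isometric (as a family of metric spaces, with constants independent of i) to the family of scaled flat (m+1)-tori (T^{m+1}, τ_i·d)_{i∈ℕ}, where T^{m+1} = ℝ^{m+1}/ℤ^{m+1} carries a fixed flat metric d. -/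
/-!
Unfolding the circle, the level `t` of the warped cone is, up to bounded error, the quotient of
`ℝ × ℝ^m` by the lattice `Λ_t = {(t (k + n·α), n) : k ∈ ℤ, n ∈ ℤ^m}`. If `Λ_t` has a basis which
is, up to a factor bounded independently of `t`, an orthogonal basis of vectors of length `τ`,
then this quotient is uniformly quasi-isometric to `ℝ^{m+1} / τ ℤ^{m+1}` (`exists_qi`). So it is
enough to find uncountably many `α` for which `Λ_t` has such bases at common scales
`t = τ^{m+1}`.

Such `α` come from a multidimensional continued fraction. A vector `x = (1, x_1, …, x_m)` with
digit `s` is followed by the tail proportional to `(x_m, x_0 - s x_1, …, x_{m-1} - s x_m)`.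
Every digit sequence is realised, by compactness (`exists_expansion`), and `x` determines its
digits (`IsExpansion.digits_unique`). The same linear recursion, applied to vectors of
`ℤ^{m+1}`, produces bases of `ℤ^{m+1}` on which the linear form `(k, n) ↦ k + n·α` takes values
proportional to the `i`-th tail (`lf_cfBasis`). One step replaces the `ℤ^m` parts `w_j` by
`w_{j-1} - s w_j`, which for large `s` is nearly multiplication by `-s`; if the digits grow
geometrically, the errors are summable and the basis stays close to a diagonal one
(`cfBasis_dev`), while the first coordinate is under control because `x_m` is about `s^{-m}`
(`IsExpansion.prod_last_le`, `IsExpansion.le_prod_last`). This gives the uniform distortion bound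
`latMap_bounds`.

The scales depend only on the smaller of two admissible digits at each step, and the two choices
at each step give an injection of `ℕ → Bool` into the set of good `α`.
-/

/-!
STATEMENT 19: For every m ≥ 1 there are strictly increasing sequences (t_i), (τ_i) of
positive integers and uncountably many tuples α ∈ (0,1)^m such that the family of
levels (t_iT¹, d_{ℤ^m}) of the warped cone over the α-rotation action of ℤ^m on T¹ is
quasi-isometric (with constants independent of i) to the family of scaled flat
(m+1)-tori (T^{m+1}, τ_i·d).
-/

open Metric Set

/-- The flat (m+1)-torus with (a fixed flat) sup-metric. -/
noncomputable abbrev Torus (m : ℕ) : Type := Fin (m + 1) → AddCircle (1 : ℝ)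

/-- The linear form `w ↦ ∑ wⱼ xⱼ` on `ℤ^{m+1}`; for `x = (1, α)` it sends `(k, n)` to
`k + ∑ nⱼ αⱼ`. -/
noncomputable def lf {m : ℕ} (x : Fin (m + 1) → ℝ) (w : Fin (m + 1) → ℤ) : ℝ :=
  ∑ j, (w j : ℝ) * x j

/-! ### A multidimensional continued fraction -/

/-- One step of the multidimensional continued fraction with digit `s`, for vectors normalised
by `x 0 = y 0 = 1`: up to the factor `x (Fin.last m)`, the next vector `y` is
`(x_m, x_0 - s x_1, …, x_{m-1} - s x_m)`. -/
def CFStep {m : ℕ} (s : ℕ) (x y : Fin (m + 1) → ℝ) : Prop :=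
  ∀ j : Fin m, x j.castSucc = s * x j.succ + x (Fin.last m) * y j.succ

/-- `x 0` has the infinite continued fraction expansion with digits `s`, and `x i` are its
successive tails. -/
structure IsExpansion {m : ℕ} (s : ℕ → ℕ) (x : ℕ → Fin (m + 1) → ℝ) : Prop where
  one : ∀ i, x i 0 = 1
  nonneg : ∀ i j, 0 ≤ x i j
  le_one : ∀ i j, x i j ≤ 1
  step : ∀ i, CFStep (s i) (x i) (x (i + 1))

/-- The basis of `ℤ^{m+1}` produced by the first `i` steps of the continued fraction with
digits `s`. -/
def cfBasis {m : ℕ} (s : ℕ → ℕ) : ℕ → Fin (m + 1) → Fin (m + 1) → ℤ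
  | 0 => fun j => Pi.single j 1
  | i + 1 => Fin.cons (cfBasis s i (Fin.last m))
      (fun j => cfBasis s i j.castSucc - (s i : ℤ) • cfBasis s i j.succ)

section step
variable {m s : ℕ} {x y : Fin (m + 1) → ℝ}

lemma CFStep.succ_mul_le (h : CFStep s x y) (hx : ∀ j, 0 ≤ x j) (hy : ∀ j, 0 ≤ y j)
    (j : Fin m) : s * x j.succ ≤ x j.castSucc := by
  have := mul_nonneg (hx (Fin.last m)) (hy j.succ)
  rw [h j]; linarith

lemma CFStep.antitone (h : CFStep s x y) (hs : 1 ≤ s) (hx : ∀ j, 0 ≤ x j)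
    (hy : ∀ j, 0 ≤ y j) : Antitone x := by
  rw [Fin.antitone_iff_succ_le]
  intro j
  refine le_trans ?_ (h.succ_mul_le hx hy j)
  have : (1 : ℝ) ≤ s := by exact_mod_cast hs
  nlinarith [hx j.succ]

lemma CFStep.pow_mul_le (h : CFStep s x y) (h0 : x 0 = 1) (hx : ∀ j, 0 ≤ x j)
    (hy : ∀ j, 0 ≤ y j) (j : Fin (m + 1)) : (s : ℝ) ^ (j : ℕ) * x j ≤ 1 := by
  induction j using Fin.induction with
  | zero => simp [h0]
  | succ j ih =>
    refine le_trans ?_ ih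
    have := mul_le_mul_of_nonneg_left (h.succ_mul_le hx hy j)
      (pow_nonneg (Nat.cast_nonneg (α := ℝ) s) (j : ℕ))
    simp only [Fin.val_succ, Fin.val_castSucc, pow_succ]
    linarith

lemma CFStep.one_le_pow_mul (h : CFStep s x y) (hs : 1 ≤ s) (h0 : x 0 = 1)
    (hx : ∀ j, 0 ≤ x j) (hy : ∀ j, 0 ≤ y j) (hy1 : ∀ j, y j ≤ 1) (j : Fin (m + 1)) :
    1 ≤ ((s : ℝ) + 1) ^ (j : ℕ) * x j := by
  induction j using Fin.induction with
  | zero => simp [h0]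
  | succ j ih =>
    refine le_trans ih ?_
    have h1 : x j.castSucc ≤ ((s : ℝ) + 1) * x j.succ := by
      rw [h j]
      have h2 : x (Fin.last m) ≤ x j.succ := h.antitone hs hx hy (Fin.le_last _)
      have h3 : x (Fin.last m) * y j.succ ≤ x (Fin.last m) * 1 :=
        mul_le_mul_of_nonneg_left (hy1 _) (hx _)
      linarith
    have := mul_le_mul_of_nonneg_left h1 (pow_nonneg (by positivity : (0 : ℝ) ≤ s + 1) (j : ℕ))
    simp only [Fin.val_succ, Fin.val_castSucc, pow_succ]
    linarith

/-- Every tail `y` and digit `s` come from some `x`. -/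
lemma CFStep.exists_prev (hs : 1 ≤ s) (hy : ∀ j, 0 ≤ y j) :
    ∃ x : Fin (m + 1) → ℝ, x 0 = 1 ∧ (∀ j, 0 ≤ x j) ∧ (∀ j, x j ≤ 1) ∧ CFStep s x y := by
  let p : Fin (m + 1) → ℝ := fun j =>
    Fin.reverseInduction (motive := fun _ => ℝ) 1 (fun j q => s * q + y j.succ) j
  have hs' : (1 : ℝ) ≤ s := by exact_mod_cast hs
  have plast : p (Fin.last m) = 1 := Fin.reverseInduction_last ..
  have pstep (j : Fin m) : p j.castSucc = s * p j.succ + y j.succ :=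
    Fin.reverseInduction_castSucc ..
  have p1 (j : Fin (m + 1)) : 1 ≤ p j := by
    induction j using Fin.reverseInduction with
    | last => exact plast.ge
    | cast j ih => rw [pstep]; nlinarith [hy j.succ]
  have anti : Antitone p := by
    rw [Fin.antitone_iff_succ_le]
    intro j
    rw [pstep]; nlinarith [hy j.succ, p1 j.succ]
  have p0 : 0 < p 0 := by linarith [p1 0]
  refine ⟨fun j => p j / p 0, div_self p0.ne', fun j => ?_, fun j => ?_, fun j => ?_⟩
  · have := p1 j; positivity
  · rw [div_le_one p0]; exact anti (Fin.zero_le _)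
  · simp only [pstep, plast]; field_simp

end step

/-- Every digit sequence is realised: compactness of the cube turns the solvability of finitely
many steps into that of all of them. -/
lemma exists_expansion (m : ℕ) (s : ℕ → ℕ) (hs : ∀ i, 1 ≤ s i) :
    ∃ x : ℕ → Fin (m + 1) → ℝ, IsExpansion s x := by
  let cube : Set (ℕ → Fin (m + 1) → ℝ) := Set.pi univ fun _ => Set.pi univ fun _ => Icc 0 1
  let K : ℕ → Set (ℕ → Fin (m + 1) → ℝ) := fun N =>
    cube ∩ {x | (∀ i, x i 0 = 1) ∧ ∀ i < N, CFStep (s i) (x i) (x (i + 1))}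
  have hcube : IsCompact cube := isCompact_univ_pi fun _ => isCompact_univ_pi fun _ => isCompact_Icc
  have hclosed (N : ℕ) : IsClosed (K N) := by
    refine hcube.isClosed.inter ?_
    simp only [CFStep, ofPred_and, ofPred_forall]
    refine IsClosed.inter (isClosed_iInter fun i => ?_)
      (isClosed_iInter fun i => isClosed_iInter fun _ => isClosed_iInter fun j => ?_)
    · exact isClosed_eq (by fun_prop) (by fun_prop)
    · exact isClosed_eq (by fun_prop) (by fun_prop)
  -- Start from an arbitrary tail and solve the steps backwards; shifting the digits makes this
  -- an induction.
  have hne (N : ℕ) : ∀ s : ℕ → ℕ, (∀ i, 1 ≤ s i) → ∃ x : ℕ → Fin (m + 1) → ℝ, x ∈ cube ∧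
      (∀ i, x i 0 = 1) ∧ ∀ i < N, CFStep (s i) (x i) (x (i + 1)) := by
    induction N with
    | zero =>
      intro s _
      exact ⟨fun _ _ => 1, fun _ _ _ _ => by simp, by simp, by simp⟩
    | succ N ih =>
      intro s hs
      obtain ⟨x, hx, hx0, hxs⟩ := ih (fun i => s (i + 1)) (fun i => hs _)
      simp only [cube, Set.mem_pi, mem_univ, true_imp_iff, mem_Icc] at hx
      obtain ⟨x', h0, h1, h2, h3⟩ := CFStep.exists_prev (hs 0) (fun j => (hx 0 j).1)
      refine ⟨fun i => Nat.casesOn i x' x, ?_, ?_, ?_⟩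
      · simp only [cube, Set.mem_pi, mem_univ, true_imp_iff, mem_Icc]
        rintro (_ | i) j
        · exact ⟨h1 j, h2 j⟩
        · exact hx i j
      · rintro (_ | i)
        · exact h0
        · exact hx0 i
      · rintro (_ | i) hi
        · exact h3
        · exact hxs i (by omega)
  obtain ⟨x, hx⟩ := IsCompact.nonempty_iInter_of_sequence_nonempty_isCompact_isClosed K
    (fun N x hx => ⟨hx.1, hx.2.1, fun i hi => hx.2.2 i (by omega)⟩)
    (fun N => (hne N s hs).imp fun x hx => ⟨hx.1, hx.2⟩)
    (hcube.of_isClosed_subset (hclosed 0) inter_subset_left) hclosed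
  simp only [K, mem_iInter] at hx
  have hc := (hx 0).1
  simp only [cube, Set.mem_pi, mem_univ, true_imp_iff, mem_Icc] at hc
  exact ⟨x, (hx 0).2.1, fun i j => (hc i j).1, fun i j => (hc i j).2,
    fun i => (hx (i + 1)).2.2 i (by omega)⟩

namespace IsExpansion
variable {m : ℕ} {s : ℕ → ℕ} {x : ℕ → Fin (m + 1) → ℝ}

lemma pos (h : IsExpansion s x) (hs : ∀ i, 1 ≤ s i) (i : ℕ) (j : Fin (m + 1)) : 0 < x i j := by
  have := (h.step i).one_le_pow_mul (hs i) (h.one i) (h.nonneg i) (h.nonneg _) (h.le_one _) j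
  by_contra! hc
  have := mul_nonpos_of_nonneg_of_nonpos
    (pow_nonneg (by positivity : (0 : ℝ) ≤ s i + 1) (j : ℕ)) hc
  linarith

lemma succ_mul_le_one (h : IsExpansion s x) (i : ℕ) (j : Fin m) : s i * x i j.succ ≤ 1 :=
  ((h.step i).succ_mul_le (h.nonneg i) (h.nonneg _) j).trans (h.le_one _ _)

lemma succ_lt_one (h : IsExpansion s x) (hs : ∀ i, 2 ≤ s i) (i : ℕ) (j : Fin m) :
    x i j.succ < 1 := by
  have h1 := h.succ_mul_le_one i j
  have h2 : (2 : ℝ) ≤ s i := by exact_mod_cast hs i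
  nlinarith [h.nonneg i j.succ]

/-- `x 0` determines all the digits: the first one is the integer part of
`x_{m-1} / x_m`, and the digit determines the tail. -/
lemma digits_unique (hm : 0 < m) {s' : ℕ → ℕ} {x' : ℕ → Fin (m + 1) → ℝ}
    (h : IsExpansion s x) (h' : IsExpansion s' x') (hs : ∀ i, 2 ≤ s i) (hs' : ∀ i, 2 ≤ s' i)
    (h0 : x 0 = x' 0) : s = s' := by
  obtain ⟨k, rfl⟩ : ∃ k, m = k + 1 := ⟨m - 1, by omega⟩
  have hs1 : ∀ i, 1 ≤ s i := fun i => (by decide : 1 ≤ 2).trans (hs i)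
  have hs1' : ∀ i, 1 ≤ s' i := fun i => (by decide : 1 ≤ 2).trans (hs' i)
  have digit (i : ℕ) (hx : x i = x' i) : s i = s' i := by
    have e := h.step i (Fin.last k)
    have e' := h'.step i (Fin.last k)
    rw [← hx, e, Fin.succ_last] at e'
    have hp := h.pos hs1 i (Fin.last (k + 1))
    have e2 : (s i : ℝ) + x (i + 1) (Fin.last (k + 1))
        = s' i + x' (i + 1) (Fin.last (k + 1)) := by
      have : x i (Fin.last (k + 1)) * ((s i : ℝ) + x (i + 1) (Fin.last (k + 1)))
        = x i (Fin.last (k + 1)) * (s' i + x' (i + 1) (Fin.last (k + 1))) := by linarith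
      exact mul_left_cancel₀ hp.ne' this
    have a1 := h.succ_lt_one hs (i + 1) (Fin.last k)
    have a2 := h'.succ_lt_one hs' (i + 1) (Fin.last k)
    have a3 := h.nonneg (i + 1) (Fin.last (k + 1))
    have a4 := h'.nonneg (i + 1) (Fin.last (k + 1))
    rw [Fin.succ_last] at a1 a2
    have b1 : (s i : ℝ) < s' i + 1 := by linarith
    have b2 : (s' i : ℝ) < s i + 1 := by linarith
    have b1' : s i < s' i + 1 := by exact_mod_cast b1
    have b2' : s' i < s i + 1 := by exact_mod_cast b2
    omega
  have tail (i : ℕ) : x i = x' i := by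
    induction i with
    | zero => exact h0
    | succ i ih =>
      have hd := digit i ih
      ext j
      refine Fin.cases ?_ (fun j => ?_) j
      · rw [h.one, h'.one]
      · have e := h.step i j
        have e' := h'.step i j
        rw [← ih, ← hd, e] at e'
        exact mul_left_cancel₀ (h.pos hs1 i _).ne' (add_left_cancel e')
  exact funext fun i => digit i (tail i)

end IsExpansion

/-! ### The bases of `ℤ^{m+1}` -/

/-- The basis change at each step is unimodular, so the vectors generate `ℤ^{m+1}`. -/
lemma span_cfBasis {m : ℕ} (s : ℕ → ℕ) (i : ℕ) :
    Submodule.span ℤ (range (cfBasis (m := m) s i)) = ⊤ := by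
  induction i with
  | zero =>
    have := (Pi.basisFun ℤ (Fin (m + 1))).span_eq
    rw [← this]
    congr 2
    ext j k
    simp [cfBasis]
  | succ i ih =>
    rw [eq_top_iff, ← ih, Submodule.span_le, range_subset_iff]
    intro j
    have mem (j : Fin (m + 1)) : cfBasis s (i + 1) j
        ∈ Submodule.span ℤ (range (cfBasis (m := m) s (i + 1))) :=
      Submodule.subset_span (mem_range_self j)
    induction j using Fin.reverseInduction with
    | last => simpa [cfBasis] using mem 0
    | cast j ihj =>
      have h1 := mem j.succ
      have h2 := add_mem h1 (Submodule.smul_mem _ (s i : ℤ) ihj)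
      rwa [show cfBasis s (i + 1) j.succ = cfBasis s i j.castSucc - (s i : ℤ) • cfBasis s i j.succ
        from rfl, sub_add_cancel] at h2

lemma exists_coeff_cfBasis {m : ℕ} (s : ℕ → ℕ) (i : ℕ) (w : Fin (m + 1) → ℤ) :
    ∃ g : Fin (m + 1) → ℤ, ∀ l, ∑ j, g j * cfBasis s i j l = w l := by
  have : w ∈ Submodule.span ℤ (range (cfBasis (m := m) s i)) := by
    rw [span_cfBasis]; trivial
  obtain ⟨g, hg⟩ := (Submodule.mem_span_range_iff_exists_fun ℤ).1 this
  exact ⟨g, fun l => by simpa using congrFun hg l⟩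

/-- On the `i`-th basis the linear form of `x 0` is proportional to the `i`-th tail. -/
lemma lf_cfBasis {m : ℕ} {s : ℕ → ℕ} {x : ℕ → Fin (m + 1) → ℝ} (h : IsExpansion s x)
    (i : ℕ) (j : Fin (m + 1)) :
    lf (x 0) (cfBasis s i j) = (∏ k ∈ Finset.range i, x k (Fin.last m)) * x i j := by
  induction i generalizing j with
  | zero => simp [lf, cfBasis, Pi.single_apply]
  | succ i ih =>
    rw [Finset.prod_range_succ]
    refine Fin.cases ?_ (fun j => ?_) j
    · simp only [cfBasis, Fin.cons_zero, ih, h.one, mul_one]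
    · have e : lf (x 0) (cfBasis s (i + 1) j.succ)
          = lf (x 0) (cfBasis s i j.castSucc) - s i * lf (x 0) (cfBasis s i j.succ) := by
        simp only [lf, cfBasis, Fin.cons_succ, Finset.mul_sum, ← Finset.sum_sub_distrib]
        refine Finset.sum_congr rfl fun l _ => ?_
        simp only [Pi.sub_apply, Pi.smul_apply, smul_eq_mul]
        push_cast; ring
      rw [e, ih, ih, h.step i j]; ring

/-! ### Levels of the warped cone as quotients by a lattice -/

/-- The linear map sending the `j`-th coordinate vector to the image of `v j` under
`(k, n) ↦ (t · lf x (k, n), n)`. -/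
noncomputable def latMap {m : ℕ} (t : ℝ) (x : Fin (m + 1) → ℝ)
    (v : Fin (m + 1) → Fin (m + 1) → ℤ) :
    (Fin (m + 1) → ℝ) →ₗ[ℝ] ℝ × (Fin m → ℝ) where
  toFun u := (t * ∑ j, u j * lf x (v j), fun l => ∑ j, u j * (v j l.succ : ℝ))
  map_add' u w := by
    ext <;> simp [add_mul, Finset.sum_add_distrib, mul_add]
  map_smul' c u := by
    ext
    · simp [Finset.mul_sum]; refine Finset.sum_congr rfl fun _ _ => by ring
    · simp [Finset.mul_sum, mul_assoc]

/-- The `ℓ¹` norm on `ℝ × ℝ^m`. -/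
noncomputable def coneNorm {m : ℕ} (p : ℝ × (Fin m → ℝ)) : ℝ := |p.1| + ∑ l, |p.2 l|

lemma latMap_int {m : ℕ} (t : ℝ) (x : Fin (m + 1) → ℝ)
    (v : Fin (m + 1) → Fin (m + 1) → ℤ) (g w : Fin (m + 1) → ℤ)
    (h : ∀ l, ∑ j, g j * v j l = w l) :
    latMap t x v (fun j => (g j : ℝ)) = (t * lf x w, fun l => (w l.succ : ℝ)) := by
  refine Prod.ext ?_ ?_
  · simp only [latMap, LinearMap.coe_mk, AddHom.coe_mk, lf]
    congr 1
    simp only [← h, Finset.mul_sum]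
    rw [Finset.sum_comm]
    refine Finset.sum_congr rfl fun l _ => ?_
    push_cast
    rw [Finset.sum_mul]
    exact Finset.sum_congr rfl fun j _ => by ring
  · ext l
    simp only [latMap, LinearMap.coe_mk, AddHom.coe_mk, ← h]
    push_cast; rfl

lemma norm_coe_le (a : ℝ) (k : ℤ) : ‖(a : AddCircle (1 : ℝ))‖ ≤ |a + k| := by
  rw [UnitAddCircle.norm_eq]
  simpa using round_le a (-k)

lemma exists_norm_coe (a : ℝ) : ∃ k : ℤ, ‖(a : AddCircle (1 : ℝ))‖ = |a + k| :=
  ⟨-round a, by rw [UnitAddCircle.norm_eq]; push_cast; rfl⟩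

lemma lf_cons {m : ℕ} (α : Fin m → ℝ) (w : Fin (m + 1) → ℤ) :
    lf (Fin.cons 1 α) w = w 0 + ∑ l : Fin m, (w l.succ : ℝ) * α l := by
  simp [lf, Fin.sum_univ_succ]

lemma rotWarpDistM_le {m : ℕ} (α : Fin m → ℝ) {t : ℝ} (ht : 0 ≤ t) (a b : ℝ)
    (w : Fin (m + 1) → ℤ) :
    rotWarpDistM m α t (a : T1) (b : T1) ≤
      coneNorm ((t * (a - b), 0) + (t * lf (Fin.cons 1 α) w, fun l : Fin m => (w l.succ : ℝ))) := by
  refine (ciInf_le ⟨0, ?_⟩ (fun l => w l.succ)).trans ?_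
  · rintro _ ⟨n, rfl⟩
    positivity
  · simp only [coneNorm, Prod.mk_add_mk, zero_add]
    rw [add_comm, dist_eq_norm, ← AddCircle.coe_add, ← AddCircle.coe_sub]
    gcongr
    rw [← mul_add, abs_mul, abs_of_nonneg ht]
    gcongr
    refine (norm_coe_le _ (w 0)).trans_eq ?_
    rw [lf_cons]
    congr 1; ring

lemma le_rotWarpDistM {m : ℕ} (α : Fin m → ℝ) {t : ℝ} (ht : 0 ≤ t) (a b D : ℝ)
    (h : ∀ w : Fin (m + 1) → ℤ, D ≤ coneNorm ((t * (a - b), 0) +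
      (t * lf (Fin.cons 1 α) w, fun l : Fin m => (w l.succ : ℝ)))) :
    D ≤ rotWarpDistM m α t (a : T1) (b : T1) := by
  refine le_ciInf fun n => ?_
  rw [dist_eq_norm, ← AddCircle.coe_add, ← AddCircle.coe_sub]
  obtain ⟨k, hk⟩ := exists_norm_coe (a + ∑ i, (n i : ℝ) * α i - b)
  refine (h (Fin.cons k n)).trans_eq ?_
  rw [hk, lf_cons]
  simp only [coneNorm, Prod.mk_add_mk, zero_add, Fin.cons_zero,
    Fin.cons_succ]
  rw [add_comm, ← mul_add, abs_mul, abs_of_nonneg ht]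
  congr 3; ring

/-- If `ℤ^{m+1}` has generators for which `latMap` distorts norms by about `τ`, then the level
`t` of the warped cone is quasi-isometric to the torus scaled by `τ`. Indeed the level is a
coarse form of `(ℝ × ℝ^m) / Λ`, for `Λ = {(t (k + n·α), n)}`, and `latMap` identifies this
quotient with `ℝ^{m+1} / ℤ^{m+1}`. -/
lemma exists_qi {m : ℕ} (α : Fin m → ℝ) {t τ K : ℝ} (ht : 0 < t) (hτ : 0 < τ) (hK : 0 < K)
    (v : Fin (m + 1) → Fin (m + 1) → ℤ)
    (hv : ∀ w : Fin (m + 1) → ℤ, ∃ g : Fin (m + 1) → ℤ, ∀ l, ∑ j, g j * v j l = w l)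
    (hlow : ∀ u, τ * ‖u‖ ≤ K * coneNorm (latMap t (Fin.cons 1 α) v u))
    (hup : ∀ u, coneNorm (latMap t (Fin.cons 1 α) v u) ≤ K * (τ * ‖u‖)) :
    ∃ f : T1 → Torus m, IsQIWith (rotWarpDistM m α t) (fun a b => τ * dist a b) K (K * m) f := by
  set B := latMap t (Fin.cons 1 α) v with hB
  have hinj : Function.Injective B := by
    rw [injective_iff_map_eq_zero]
    intro u hu
    have h1 := hlow u
    rw [hu] at h1
    simp only [coneNorm, Prod.fst_zero, Prod.snd_zero, Pi.zero_apply, abs_zero,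
      Finset.sum_const_zero, add_zero, mul_zero] at h1
    have h2 : ‖u‖ ≤ 0 := by
      by_contra! h
      have := mul_pos hτ h
      linarith
    exact norm_le_zero_iff.1 h2
  have hsurj : Function.Surjective B :=
    (LinearMap.injective_iff_surjective_of_finrank_eq_finrank (by simp [add_comm])).1 hinj
  choose U hU using fun a : ℝ => hsurj (t * a, 0)
  choose σ hσ using fun z : T1 => QuotientAddGroup.mk_surjective z
  have hσ' (z : T1) : ((σ z : ℝ) : T1) = z := hσ z
  have key (a b : ℝ) (g w : Fin (m + 1) → ℤ) (h : ∀ l, ∑ j, g j * v j l = w l) :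
      B (U a - U b + fun j => (g j : ℝ)) = (t * (a - b), 0) +
        (t * lf (Fin.cons 1 α) w, fun l : Fin m => (w l.succ : ℝ)) := by
    rw [map_add, map_sub, hU, hU, latMap_int t _ v g w h, Prod.mk_sub_mk, sub_zero, mul_sub]
  have hm0 : 0 ≤ K * m := by positivity
  refine ⟨fun z j => (U (σ z) j : ℝ), fun z z' => ?_, fun z z' => ?_, fun y => ?_⟩
  · choose g hg using fun j => exists_norm_coe (U (σ z) j - U (σ z') j)
    have h1 := rotWarpDistM_le α ht.le (σ z) (σ z') (fun l => ∑ j, g j * v j l)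
    rw [← key (σ z) (σ z') g _ (fun _ => rfl), hσ', hσ'] at h1
    have h2 : ‖U (σ z) - U (σ z') + fun j => (g j : ℝ)‖ ≤
        dist (fun j => ((U (σ z) j : ℝ) : AddCircle (1 : ℝ)))
          (fun j => ((U (σ z') j : ℝ) : AddCircle (1 : ℝ))) := by
      refine (pi_norm_le_iff_of_nonneg dist_nonneg).2 fun j => ?_
      refine le_trans (le_of_eq ?_) (dist_le_pi_dist _ _ j)
      rw [dist_eq_norm, ← AddCircle.coe_sub, hg, Real.norm_eq_abs]
      rfl
    have h3 := h1.trans (hup _)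
    have h4 : K⁻¹ * rotWarpDistM m α t z z' ≤ τ * ‖U (σ z) - U (σ z') + fun j => (g j : ℝ)‖ := by
      rw [inv_mul_le_iff₀ hK]; exact h3
    have h5 := mul_le_mul_of_nonneg_left h2 hτ.le
    show K⁻¹ * rotWarpDistM m α t z z' - K * m ≤ τ * _
    linarith
  · have h1 := le_rotWarpDistM α ht.le (σ z) (σ z')
      (K⁻¹ * (τ * dist (fun j => ((U (σ z) j : ℝ) : AddCircle (1 : ℝ)))
          (fun j => ((U (σ z') j : ℝ) : AddCircle (1 : ℝ))))) fun w => by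
        obtain ⟨g, hg⟩ := hv w
        rw [← key _ _ g w hg, inv_mul_le_iff₀ hK]
        refine le_trans ?_ (hlow _)
        refine mul_le_mul_of_nonneg_left ?_ hτ.le
        refine (dist_pi_le_iff (norm_nonneg _)).2 fun j => ?_
        refine le_trans ?_ (norm_le_pi_norm _ j)
        rw [dist_eq_norm, ← AddCircle.coe_sub]
        exact norm_coe_le _ (g j)
    rw [hσ', hσ', inv_mul_le_iff₀ hK] at h1
    show τ * _ ≤ _
    linarith
  · choose y' hy' using fun j => QuotientAddGroup.mk_surjective (y j)
    have hy'' (j : Fin (m + 1)) : ((y' j : ℝ) : AddCircle (1 : ℝ)) = y j := hy' j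
    obtain ⟨a, r, hr⟩ : ∃ a r, B y' = (a, r) := ⟨_, _, rfl⟩
    -- Round the `ℝ^m` part of `B y'` to an integer vector, then move it to `0` by `Λ`.
    set b : ℝ := a / t - ∑ l, (round (r l) : ℝ) * α l with hb
    obtain ⟨k, hk⟩ : ∃ k : ℤ, σ (b : T1) = b + k := by
      have h1 : ((σ (b : T1) - b : ℝ) : T1) = 0 := by
        rw [AddCircle.coe_sub, hσ', sub_self]
      obtain ⟨k, hk⟩ := (AddCircle.coe_eq_zero_iff (1 : ℝ)).1 h1
      refine ⟨k, ?_⟩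
      simp only [zsmul_eq_mul, mul_one] at hk
      linarith
    obtain ⟨g, hg⟩ := hv (Fin.cons (-k) fun l => round (r l))
    refine ⟨(b : T1), ?_⟩
    have e : B (U (σ (b : T1)) - y' + fun j => (g j : ℝ)) = (0, fun l => round (r l) - r l) := by
      rw [map_add, map_sub, hU, hr, latMap_int t _ v g _ hg, Prod.mk_sub_mk, Prod.mk_add_mk,
        lf_cons, hk, hb]
      refine Prod.ext ?_ ?_
      · simp only [Fin.cons_zero, Fin.cons_succ, Int.cast_neg]
        field_simp
        ring
      · ext l
        simp only [Pi.add_apply, Pi.sub_apply, Pi.zero_apply, Fin.cons_succ]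
        ring
    have h1 := hlow (U (σ (b : T1)) - y' + fun j => (g j : ℝ))
    have h2 : coneNorm ((0 : ℝ), fun l : Fin m => (round (r l) : ℝ) - r l) ≤ m := by
      simp only [coneNorm, abs_zero, zero_add]
      refine (Finset.sum_le_card_nsmul _ _ 1 fun l _ => ?_).trans (by simp)
      rw [abs_sub_comm]
      exact (abs_sub_round _).trans (by norm_num)
    rw [e] at h1
    have h3 : dist (fun j => ((U (σ (b : T1)) j : ℝ) : AddCircle (1 : ℝ))) y ≤
        ‖U (σ (b : T1)) - y' + fun j => (g j : ℝ)‖ := by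
      refine (dist_pi_le_iff (norm_nonneg _)).2 fun j => ?_
      refine le_trans ?_ (norm_le_pi_norm _ j)
      rw [← hy'' j, dist_eq_norm, ← AddCircle.coe_sub]
      exact norm_coe_le _ (g j)
    exact (mul_le_mul_of_nonneg_left h3 hτ.le).trans
      (h1.trans (mul_le_mul_of_nonneg_left h2 hK.le))

/-! ### Quantitative estimates -/

/-- The smaller of the two digits allowed at step `i`. -/
def minDigit (m i : ℕ) : ℕ := 16 * (m + 1) * 2 ^ i

lemma minDigit_ge (m i : ℕ) : 16 ≤ minDigit m i := by
  have := Nat.one_le_two_pow (n := i)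
  unfold minDigit; nlinarith

/-- The scale `τ i` of the torus, the product of the first `i` minimal digits; the level of the
warped cone is `t i = scale m i ^ (m + 1)`. -/
def scale (m i : ℕ) : ℕ := ∏ k ∈ Finset.range i, minDigit m k

lemma scale_pos (m i : ℕ) : 0 < scale m i :=
  Finset.prod_pos fun k _ => by have := minDigit_ge m k; omega

lemma scale_strictMono (m : ℕ) : StrictMono (scale m) := by
  refine strictMono_nat_of_lt_succ fun i => ?_
  have h1 := minDigit_ge m i
  have h2 := scale_pos m i
  have h3 : scale m (i + 1) = scale m i * minDigit m i := Finset.prod_range_succ _ _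
  rw [h3]
  nlinarith

/-- The digits grow fast enough that `∏ (1 + 2 / minDigit)` stays bounded. -/
lemma prod_add_two_le (m i : ℕ) :
    ∏ k ∈ Finset.range i, ((minDigit m k : ℝ) + 2) ≤ 2 * scale m i := by
  have key : (1 / 2 + (1 / 2) ^ i / 2) * ∏ k ∈ Finset.range i, ((minDigit m k : ℝ) + 2)
      ≤ scale m i := by
    induction i with
    | zero => simp [scale]; norm_num
    | succ i ih =>
      rw [scale, Finset.prod_range_succ, Finset.prod_range_succ, ← scale]
      push_cast
      set P := ∏ k ∈ Finset.range i, ((minDigit m k : ℝ) + 2) with hP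
      have hP0 : 0 ≤ P := Finset.prod_nonneg fun k _ => by positivity
      set h : ℝ := (1 / 2) ^ i with hh
      have h1 : h ≤ 1 := pow_le_one₀ (by norm_num) (by norm_num)
      have h0 : 0 < h := by positivity
      have hS : (16 : ℝ) ≤ minDigit m i * h := by
        have : (minDigit m i : ℝ) * h = 16 * (m + 1) := by
          simp only [minDigit, hh, one_div, inv_pow]; push_cast; field_simp
        rw [this]; have : (0 : ℝ) ≤ m := by positivity
        linarith
      rw [pow_succ]
      calc (1 / 2 + h * (1 / 2) / 2) * (P * (minDigit m i + 2))
          = P * ((1 / 2 + h / 4) * (minDigit m i + 2)) := by ring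
        _ ≤ P * ((1 / 2 + h / 2) * minDigit m i) := by
            refine mul_le_mul_of_nonneg_left ?_ hP0
            nlinarith
        _ = ((1 / 2 + h / 2) * P) * minDigit m i := by ring
        _ ≤ _ := by gcongr
  have hP0 : 0 ≤ ∏ k ∈ Finset.range i, ((minDigit m k : ℝ) + 2) :=
    Finset.prod_nonneg fun k _ => by positivity
  have : 0 ≤ ((1 / 2 : ℝ) ^ i / 2) * ∏ k ∈ Finset.range i, ((minDigit m k : ℝ) + 2) := by
    positivity
  linarith

section estimates
variable {m : ℕ} {s : ℕ → ℕ}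

/-- Up to sign and the factor `∏ sₖ`, the `ℤ^m` parts of the last `m` basis vectors are close to
the standard basis, and that of the first one is small. -/
lemma cfBasis_dev (hs : ∀ i, minDigit m i ≤ s i) (i : ℕ) (j : Fin (m + 1)) (l : Fin m) :
    |(cfBasis s i j l.succ : ℝ) -
        (-1) ^ i * (∏ k ∈ Finset.range i, (s k : ℝ)) * (if j = l.succ then 1 else 0)| ≤
      (∏ k ∈ Finset.range i, (s k : ℝ)) * ((1 - (1 / 2) ^ i) / (4 * (m + 1))) := by
  induction i generalizing j with
  | zero => simp [cfBasis, Pi.single_apply, eq_comm]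
  | succ i ih =>
    rw [Finset.prod_range_succ]
    set q := ∏ k ∈ Finset.range i, (s k : ℝ) with hq
    have hq0 : 0 ≤ q := Finset.prod_nonneg fun k _ => by positivity
    set h : ℝ := (1 / 2) ^ i with hh
    have h0 : 0 < h := by positivity
    have hm : (0 : ℝ) ≤ m := by positivity
    set e : ℝ := (1 - h) / (4 * (m + 1)) with he
    have he1 : e ≤ 1 := by
      rw [he, div_le_one (by positivity)]; linarith
    have hs0 : (0 : ℝ) ≤ s i := by positivity
    have hh1 : h ≤ 1 := pow_le_one₀ (by norm_num) (by norm_num)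
    have he0 : 0 ≤ e := div_nonneg (by linarith) (by positivity)
    -- The increment of the error bound pays for the new term `2 / sᵢ`.
    have hse : 2 + s i * e ≤ s i * ((1 - (1 / 2) ^ (i + 1)) / (4 * (m + 1))) := by
      have h1 : (1 - (1 / 2 : ℝ) ^ (i + 1)) / (4 * (m + 1)) = e + h / (8 * (m + 1)) := by
        rw [he, pow_succ, ← hh]; field_simp; ring
      have h2 : 2 ≤ (s i : ℝ) * (h / (8 * (m + 1))) := by
        have h3 : (minDigit m i : ℝ) * (h / (8 * (m + 1))) = 2 := by
          simp only [minDigit, hh, one_div, inv_pow]; push_cast; field_simp; norm_num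
        rw [← h3]
        gcongr
        exact_mod_cast hs i
      rw [h1]; linarith
    have bound (j : Fin (m + 1)) : |(cfBasis s i j l.succ : ℝ)| ≤ q * 2 := by
      have h1 := ih j
      have h2 : |(-1) ^ i * q * (if j = l.succ then (1 : ℝ) else 0)| ≤ q := by
        split_ifs <;> simp [abs_mul, abs_of_nonneg hq0, hq0]
      have h3 := abs_sub_abs_le_abs_sub (cfBasis s i j l.succ : ℝ)
        ((-1) ^ i * q * (if j = l.succ then (1 : ℝ) else 0))
      have h4 : q * e ≤ q * 1 := by gcongr
      linarith
    have hqse := mul_le_mul_of_nonneg_left hse hq0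
    refine Fin.cases ?_ (fun j => ?_) j
    · have h1 := bound (Fin.last m)
      have h2 : 0 ≤ q * (s i * e) := by positivity
      simp only [cfBasis, Fin.cons_zero, (Fin.succ_ne_zero l).symm, if_false, mul_zero, sub_zero]
      linarith
    · have e1 : (cfBasis s (i + 1) j.succ l.succ : ℝ) -
          (-1) ^ (i + 1) * (q * s i) * (if j.succ = l.succ then 1 else 0)
          = cfBasis s i j.castSucc l.succ - s i * (cfBasis s i j.succ l.succ -
            (-1) ^ i * q * (if j.succ = l.succ then 1 else 0)) := by
        simp only [cfBasis, Fin.cons_succ, Pi.sub_apply, Pi.smul_apply, smul_eq_mul]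
        push_cast; ring
      rw [e1]
      refine (abs_sub _ _).trans ?_
      rw [abs_mul, abs_of_nonneg hs0]
      have h1 := bound j.castSucc
      have h2 := mul_le_mul_of_nonneg_left (ih j.succ) hs0
      linarith

variable {x : ℕ → Fin (m + 1) → ℝ}

lemma IsExpansion.prod_last_le (h : IsExpansion s x) (hs : ∀ i, minDigit m i ≤ s i) (i : ℕ) :
    (scale m i : ℝ) ^ m * ∏ k ∈ Finset.range i, x k (Fin.last m) ≤ 1 := by
  rw [scale]; push_cast
  rw [← Finset.prod_pow, ← Finset.prod_mul_distrib]
  refine Finset.prod_le_one (fun k _ => mul_nonneg (by positivity) (h.nonneg _ _)) fun k _ => ?_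
  have h1 := (h.step k).pow_mul_le (h.one k) (h.nonneg k) (h.nonneg _) (Fin.last m)
  refine le_trans (mul_le_mul_of_nonneg_right ?_ (h.nonneg _ _)) h1
  rw [Fin.val_last]
  gcongr
  exact_mod_cast hs k

lemma IsExpansion.le_prod_last (h : IsExpansion s x) (hs : ∀ i, minDigit m i ≤ s i)
    (hs' : ∀ i, s i ≤ minDigit m i + 1) (i : ℕ) :
    1 ≤ (2 * (scale m i : ℝ)) ^ m * ∏ k ∈ Finset.range i, x k (Fin.last m) := by
  have h0 : 0 ≤ ∏ k ∈ Finset.range i, x k (Fin.last m) :=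
    Finset.prod_nonneg fun k _ => h.nonneg _ _
  refine le_trans ?_ (mul_le_mul_of_nonneg_right
    (pow_le_pow_left₀ (Finset.prod_nonneg fun k _ => by positivity) (prod_add_two_le m i) m) h0)
  rw [← Finset.prod_pow, ← Finset.prod_mul_distrib]
  refine Finset.prod_const_one.symm.le.trans
    (Finset.prod_le_prod (fun _ _ => zero_le_one) fun k _ => ?_)
  have h1 := (h.step k).one_le_pow_mul (by have := minDigit_ge m k; have := hs k; omega)
    (h.one k) (h.nonneg k) (h.nonneg _) (h.le_one _) (Fin.last m)
  refine h1.trans (mul_le_mul_of_nonneg_right ?_ (h.nonneg _ _))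
  rw [Fin.val_last]
  have : (s k : ℝ) ≤ minDigit m k + 1 := by exact_mod_cast hs' k
  exact pow_le_pow_left₀ (by positivity) (by linarith) m

/-- A row close to `σ` times the `l`-th coordinate row takes values close to `σ * u l`. -/
lemma abs_sum_sub_le {n : ℕ} (u r : Fin (n + 1) → ℝ) (l : Fin (n + 1)) (p σ : ℝ)
    (h : ∀ j, |r j - σ * (if j = l then 1 else 0)| ≤ p * (1 / (4 * (n + 1)))) :
    |(∑ j, u j * r j) - σ * u l| ≤ p * ‖u‖ / 4 := by
  have e : (∑ j, u j * r j) - σ * u l = ∑ j, u j * (r j - σ * (if j = l then 1 else 0)) := by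
    simp only [mul_sub, Finset.sum_sub_distrib]
    congr 1
    simp [mul_comm]
  rw [e]
  refine (Finset.abs_sum_le_sum_abs _ _).trans ?_
  refine (Finset.sum_le_card_nsmul _ _ (‖u‖ * (p * (1 / (4 * (n + 1))))) fun j _ => ?_).trans ?_
  · rw [abs_mul]
    exact mul_le_mul (norm_le_pi_norm u j) (h j) (abs_nonneg _) (norm_nonneg _)
  · rw [Finset.card_univ, Fintype.card_fin, nsmul_eq_mul]
    apply le_of_eq
    push_cast; field_simp

/-- After multiplying by `diag (c, ±q, …, ±q)⁻¹`, the matrix of `latMap` at step `i` differs from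
the identity by entries of size at most `1 / (4 (m + 1))`, and both `c` and `q` are comparable to
`scale m i`. -/
lemma latMap_bounds (h : IsExpansion s x) (hs : ∀ i, minDigit m i ≤ s i)
    (hs' : ∀ i, s i ≤ minDigit m i + 1) (i : ℕ) (u : Fin (m + 1) → ℝ) :
    (scale m i : ℝ) * ‖u‖ ≤ (2 ^ (m + 1) * (2 * m + 2)) *
        coneNorm (latMap ((scale m i : ℝ) ^ (m + 1)) (x 0) (cfBasis s i) u) ∧
      coneNorm (latMap ((scale m i : ℝ) ^ (m + 1)) (x 0) (cfBasis s i) u) ≤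
        (2 ^ (m + 1) * (2 * m + 2)) * ((scale m i : ℝ) * ‖u‖) := by
  set Q : ℝ := (scale m i : ℝ) with hQ
  have hQ0 : 0 < Q := Nat.cast_pos.2 (scale_pos m i)
  set d := ∏ k ∈ Finset.range i, x k (Fin.last m) with hd
  have hd0 : 0 ≤ d := Finset.prod_nonneg fun k _ => h.nonneg _ _
  set q := ∏ k ∈ Finset.range i, (s k : ℝ) with hq
  have hqQ : Q ≤ q := by
    rw [hQ, hq, scale]; push_cast
    exact Finset.prod_le_prod (fun k _ => by positivity) fun k _ => by exact_mod_cast hs k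
  have hq2Q : q ≤ 2 * Q := by
    refine le_trans ?_ (prod_add_two_le m i)
    refine Finset.prod_le_prod (fun k _ => by positivity) fun k _ => ?_
    have : (s k : ℝ) ≤ minDigit m k + 1 := by exact_mod_cast hs' k
    linarith
  set c : ℝ := Q ^ (m + 1) * d with hc
  have hc0 : 0 ≤ c := by positivity
  have hcQ : c ≤ Q := by
    have := mul_le_mul_of_nonneg_left (h.prod_last_le hs i) hQ0.le
    rw [hc, pow_succ]; linarith
  have hQc : Q ≤ 2 ^ m * c := by
    have := mul_le_mul_of_nonneg_left (h.le_prod_last hs hs' i) hQ0.le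
    rw [mul_pow] at this
    rw [hc, pow_succ]; linarith
  obtain ⟨a, r, har⟩ : ∃ a r, latMap (Q ^ (m + 1)) (x 0) (cfBasis s i) u = (a, r) := ⟨_, _, rfl⟩
  have ha : a = Q ^ (m + 1) * ∑ j, u j * lf (x 0) (cfBasis s i j) :=
    (congrArg Prod.fst har).symm
  have hr (l : Fin m) : r l = ∑ j, u j * (cfBasis s i j l.succ : ℝ) :=
    (congrFun (congrArg Prod.snd har) l).symm
  have hA : |a - c * u 0| ≤ c * ‖u‖ / 4 := by
    have e : a = ∑ j, u j * (c * x i j) := by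
      rw [ha, Finset.mul_sum]
      refine Finset.sum_congr rfl fun j _ => ?_
      rw [lf_cfBasis h]; ring
    rw [e]
    refine abs_sum_sub_le u _ 0 c c fun j => ?_
    rw [← mul_sub, abs_mul, abs_of_nonneg hc0]
    refine mul_le_mul_of_nonneg_left ?_ hc0
    refine Fin.cases ?_ (fun j => ?_) j
    · simp [h.one]; positivity
    · simp only [Fin.succ_ne_zero, if_false, sub_zero]
      rw [abs_of_nonneg (h.nonneg _ _), le_div_iff₀ (by positivity)]
      refine le_trans ?_ (h.succ_mul_le_one i j)
      rw [mul_comm]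
      refine mul_le_mul_of_nonneg_right ?_ (h.nonneg _ _)
      have h1 : 4 * (m + 1) ≤ s i := by
        refine le_trans ?_ (hs i)
        have := Nat.one_le_two_pow (n := i)
        unfold minDigit; nlinarith
      exact_mod_cast h1
  have hq0 : 0 ≤ q := by linarith
  have hR (l : Fin m) : |r l - (-1) ^ i * q * u l.succ| ≤ q * ‖u‖ / 4 := by
    rw [hr]
    refine abs_sum_sub_le u _ l.succ q _ fun j => ?_
    refine (cfBasis_dev hs i j l).trans (mul_le_mul_of_nonneg_left ?_ hq0)
    gcongr
    have : (0 : ℝ) ≤ (1 / 2) ^ i := by positivity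
    linarith
  have hsign (y : ℝ) : |(-1) ^ i * q * y| = q * |y| := by
    simp [abs_mul, abs_of_nonneg hq0]
  have hu (j : Fin (m + 1)) : |u j| ≤ ‖u‖ := norm_le_pi_norm u j
  have hN : coneNorm (a, r) = |a| + ∑ l, |r l| := rfl
  have h2m : (1 : ℝ) ≤ 2 ^ m := one_le_pow₀ (by norm_num)
  have hm : (0 : ℝ) ≤ m := by positivity
  have hsum0 : 0 ≤ ∑ l, |r l| := Finset.sum_nonneg fun _ _ => abs_nonneg _
  have hN0 : 0 ≤ coneNorm (a, r) := by rw [hN]; positivity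
  rw [har]
  constructor
  · have hcoord : ‖u‖ ≤ 2 ^ m * coneNorm (a, r) / Q + ‖u‖ / 4 := by
      refine (pi_norm_le_iff_of_nonneg (by positivity)).2 fun j => ?_
      rw [Real.norm_eq_abs, ← sub_le_iff_le_add, le_div_iff₀ hQ0]
      refine Fin.cases ?_ (fun l => ?_) j
      · have h1 := abs_sub_abs_le_abs_sub (c * u 0) a
        rw [abs_mul, abs_of_nonneg hc0, abs_sub_comm] at h1
        have h2 : c * (|u 0| - ‖u‖ / 4) ≤ coneNorm (a, r) := by rw [hN]; linarith
        rcases le_or_gt 0 (|u 0| - ‖u‖ / 4) with h3 | h3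
        · have := mul_le_mul_of_nonneg_left hQc h3
          have := mul_le_mul_of_nonneg_left h2 (by positivity : (0 : ℝ) ≤ 2 ^ m)
          linarith
        · have := mul_neg_of_neg_of_pos h3 hQ0
          have : 0 ≤ 2 ^ m * coneNorm (a, r) := by positivity
          linarith
      · have h1 := abs_sub_abs_le_abs_sub ((-1) ^ i * q * u l.succ) (r l)
        rw [hsign, abs_sub_comm] at h1
        have h4 : |r l| ≤ ∑ l, |r l| :=
          Finset.single_le_sum (f := fun l => |r l|) (fun _ _ => abs_nonneg _) (Finset.mem_univ l)
        have h2 : q * (|u l.succ| - ‖u‖ / 4) ≤ coneNorm (a, r) := by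
          have := hR l
          rw [hN]; linarith [abs_nonneg a]
        have h5 : coneNorm (a, r) ≤ 2 ^ m * coneNorm (a, r) := le_mul_of_one_le_left hN0 h2m
        rcases le_or_gt 0 (|u l.succ| - ‖u‖ / 4) with h3 | h3
        · have := mul_le_mul_of_nonneg_left hqQ h3
          linarith
        · have := mul_neg_of_neg_of_pos h3 hQ0
          linarith
    have h1 : ‖u‖ * (3 / 4) ≤ 2 ^ m * coneNorm (a, r) / Q := by linarith
    rw [le_div_iff₀ hQ0] at h1
    have h2 : 0 ≤ 2 ^ m * coneNorm (a, r) := by positivity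
    have h3 : 0 ≤ m * (2 ^ m * coneNorm (a, r)) := by positivity
    rw [pow_succ]
    nlinarith
  · have h1 : |a| ≤ 5 / 4 * (Q * ‖u‖) := by
      have h1 := abs_sub_abs_le_abs_sub a (c * u 0)
      rw [abs_mul, abs_of_nonneg hc0] at h1
      have h2 := mul_le_mul hcQ (hu 0) (abs_nonneg _) hQ0.le
      have h3 := mul_le_mul_of_nonneg_right hcQ (norm_nonneg u)
      linarith
    have h2 (l : Fin m) : |r l| ≤ 5 / 2 * (Q * ‖u‖) := by
      have h1 := abs_sub_abs_le_abs_sub (r l) ((-1) ^ i * q * u l.succ)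
      rw [hsign] at h1
      have h2 := mul_le_mul_of_nonneg_left (hu l.succ) hq0
      have h3 := mul_le_mul_of_nonneg_right hq2Q (norm_nonneg u)
      have := hR l
      linarith
    have h3 : ∑ l, |r l| ≤ m * (5 / 2 * (Q * ‖u‖)) :=
      (Finset.sum_le_card_nsmul _ _ _ fun l _ => h2 l).trans (by simp)
    rw [hN]
    have h4 : 0 ≤ Q * ‖u‖ := by positivity
    have h5 : (2 : ℝ) * (2 * m + 2) * (Q * ‖u‖) ≤ 2 ^ (m + 1) * (2 * m + 2) * (Q * ‖u‖) := by
      gcongr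
      rw [pow_succ]; linarith
    have h6 : 0 ≤ m * (Q * ‖u‖) := by positivity
    linarith

end estimates

/-! ### The uncountable family -/

theorem uncountably_many_actions_of_Zm_with_warped_cone_levels_QI_to_tori
    (m : ℕ) (hm : 0 < m) :
    ∃ t τ : ℕ → ℕ, StrictMono t ∧ StrictMono τ ∧
      (∀ i, 0 < t i) ∧ (∀ i, 0 < τ i) ∧
      ∃ A : Set (Fin m → ℝ), ¬ A.Countable ∧
        ∀ α ∈ A, (∀ i, α i ∈ Set.Ioo (0 : ℝ) 1) ∧
          ∃ (f : ℕ → T1 → Torus m) (C B : ℝ), 1 ≤ C ∧ 0 ≤ B ∧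
            ∀ i : ℕ, IsQIWith (rotWarpDistM m α (t i))
              (fun a b => (τ i : ℝ) * dist a b) C B (f i) := by
  let s : (ℕ → Bool) → ℕ → ℕ := fun b i => minDigit m i + (b i).toNat
  have hs (b) (i) : minDigit m i ≤ s b i := Nat.le_add_right _ _
  have hs' (b) (i) : s b i ≤ minDigit m i + 1 := Nat.add_le_add_left (Bool.toNat_le _) _
  have hs2 (b) (i) : 2 ≤ s b i := by have := hs b i; have := minDigit_ge m i; omega
  have hs1 (b) (i) : 1 ≤ s b i := (by decide : 1 ≤ 2).trans (hs2 b i)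
  have s_inj : Function.Injective s := by
    intro b b' h
    ext1 i
    have := congrFun h i
    simp only [s] at this
    cases hb : b i <;> cases hb' : b' i <;> simp_all
  choose x hx using fun b => exists_expansion m (s b) (hs1 b)
  let φ : (ℕ → Bool) → Fin m → ℝ := fun b j => x b 0 j.succ
  have hφ (b) : Fin.cons 1 (φ b) = x b 0 := by
    ext j
    refine Fin.cases ?_ (fun j => ?_) j
    · rw [Fin.cons_zero, (hx b).one]
    · rw [Fin.cons_succ]
  have φ_inj : Function.Injective φ := fun b b' h =>
    s_inj ((hx b).digits_unique hm (hx b') (hs2 b) (hs2 b') (by rw [← hφ, ← hφ, h]))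
  refine ⟨fun i => scale m i ^ (m + 1), scale m,
    (Nat.pow_left_strictMono m.succ_ne_zero).comp (scale_strictMono m), scale_strictMono m,
    fun i => pow_pos (scale_pos m i) _, scale_pos m, range φ, fun hc => ?_, ?_⟩
  · have := hc.to_subtype
    have : Countable (ℕ → Bool) := (Set.rangeFactorization_injective.2 φ_inj).countable
    obtain ⟨e, he⟩ := exists_surjective_nat (ℕ → Bool)
    obtain ⟨n, hn⟩ := he fun k => !(e k k)
    simpa using congrFun hn n
  · rintro _ ⟨b, rfl⟩
    refine ⟨fun j => ⟨(hx b).pos (hs1 b) 0 _, (hx b).succ_lt_one (hs2 b) 0 j⟩, ?_⟩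
    have hK : (0 : ℝ) < 2 ^ (m + 1) * (2 * m + 2) := by positivity
    have hlev (i : ℕ) := exists_qi (φ b) (t := (scale m i : ℝ) ^ (m + 1)) (τ := scale m i)
      (by have := scale_pos m i; positivity) (by exact_mod_cast scale_pos m i) hK
      (cfBasis (s b) i) (exists_coeff_cfBasis (s b) i)
      (fun u => by rw [hφ]; exact (latMap_bounds (hx b) (hs b) (hs' b) i u).1)
      (fun u => by rw [hφ]; exact (latMap_bounds (hx b) (hs b) (hs' b) i u).2)
    choose f hf using hlev
    refine ⟨f, 2 ^ (m + 1) * (2 * m + 2), 2 ^ (m + 1) * (2 * m + 2) * m, ?_, by positivity,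
      fun i => by push_cast; exact hf i⟩
    have h2 : (1 : ℝ) ≤ 2 ^ (m + 1) := one_le_pow₀ (by norm_num)
    have : (0 : ℝ) ≤ m := by positivity
    nlinarith
end
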